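/- Quantitative free sub-semigroup theorem with specification (Theorem 1.1(i)): For all real P0, r0, δ > 0 there exists a positive integer N, depending only on P0, r0 and δ, with the following property. Let (X,σ) be any δ-hyperbolic GCB-space which is P0-packed at scale r0, and let a, b be σ-isometries of X such that a is non-elliptic and the subgroup ⟨a,b⟩ of the isometry group generated by a and b is discrete and non-elementary. Then there exists an element w of ⟨a,b⟩ expressible as a product of at most N elements of {a, a⁻¹, b, b⁻¹}, and a sign τ ∈ {+1, −1}, such that the monoid homomorphism from the free monoid on two generators to the isometry group of X sending the two generators to a^{τN} and w respectively is injective (i.e. the sub-semigroup generated by a^{τN} and w is free). -/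

import Mathlib

open Metric Filter

/-- Four-points condition for `δ`-hyperbolicity. -/
def IsDeltaHyperbolic (X : Type*) [MetricSpace X] (δ : ℝ) : Prop :=
  ∀ x y z w : X,
    dist x y + dist z w ≤ max (dist x z + dist y w) (dist x w + dist y z) + 2 * δ

/-- `X` is `P₀`-packed at scale `r₀`: any subset of a closed ball of radius `3r₀` whose
points are pairwise at distance `> 2r₀` has cardinality at most `P₀`. -/
def IsPacked (X : Type*) [MetricSpace X] (P₀ r₀ : ℝ) : Prop :=
  ∀ x : X, ∀ S : Finset X, (↑S ⊆ closedBall x (3 * r₀)) →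
    (∀ a ∈ S, ∀ b ∈ S, a ≠ b → 2 * r₀ < dist a b) → (S.card : ℝ) ≤ P₀

/-- A geodesically complete, convex, consistent, reversible geodesic bicombing on `X`.
Together with completeness of `X` this is the notion of GCB-space. -/
structure IsGCB {X : Type*} [MetricSpace X] (σ : X → X → ℝ → X) : Prop where
  source : ∀ x y : X, σ x y 0 = x
  target : ∀ x y : X, σ x y 1 = y
  geodesic : ∀ x y : X, ∀ t ∈ Set.Icc (0:ℝ) 1, ∀ t' ∈ Set.Icc (0:ℝ) 1,
    dist (σ x y t) (σ x y t') = |t - t'| * dist x y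
  convex : ∀ x y x' y' : X,
    ConvexOn ℝ (Set.Icc (0:ℝ) 1) fun t => dist (σ x y t) (σ x' y' t)
  consistent : ∀ x y : X, ∀ s t l : ℝ, 0 ≤ s → s ≤ t → t ≤ 1 → l ∈ Set.Icc (0:ℝ) 1 →
    σ (σ x y s) (σ x y t) l = σ x y ((1 - l) * s + l * t)
  reversible : ∀ x y : X, ∀ t ∈ Set.Icc (0:ℝ) 1, σ x y t = σ y x (1 - t)
  geodComplete : ∀ x y : X, ∃ γ : ℝ → X, Isometry γ ∧
    (∀ s t : ℝ, s ≤ t → ∀ l ∈ Set.Icc (0:ℝ) 1, σ (γ s) (γ t) l = γ (s + l * (t - s))) ∧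
    (∀ t ∈ Set.Icc (0:ℝ) 1, σ x y t = γ (t * dist x y))

/-- `g` is a `σ`-isometry: a surjective isometry preserving the bicombing `σ`. -/
def IsSigmaIsometry {X : Type*} [MetricSpace X] (σ : X → X → ℝ → X) (g : X ≃ᵢ X) : Prop :=
  ∀ x y : X, ∀ t ∈ Set.Icc (0:ℝ) 1, g (σ x y t) = σ (g x) (g y) t

/-- A group of isometries is discrete if for every `x` and `R` only finitely many of its
elements displace `x` at most `R`. -/
def IsDiscreteSubgroup {X : Type*} [MetricSpace X] (Γ : Subgroup (X ≃ᵢ X)) : Prop :=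
  ∀ x : X, ∀ R : ℝ, {g : X ≃ᵢ X | g ∈ Γ ∧ dist x (g x) ≤ R}.Finite

/-- A group is virtually nilpotent if it has a nilpotent subgroup of finite index. -/
def IsVirtuallyNilpotent (G : Type*) [Group G] : Prop :=
  ∃ H : Subgroup G, H.FiniteIndex ∧ Group.IsNilpotent H

/-- `Γ` is non-elementary: it contains two elements generating a subgroup that is not
virtually nilpotent. -/
def IsNonElementary {X : Type*} [MetricSpace X] (Γ : Subgroup (X ≃ᵢ X)) : Prop :=
  ∃ a b : X ≃ᵢ X, a ∈ Γ ∧ b ∈ Γ ∧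
    ¬ IsVirtuallyNilpotent ↥(Subgroup.closure ({a, b} : Set (X ≃ᵢ X)))

/-- An isometry is non-elliptic if its orbits are unbounded. -/
def IsNonElliptic {X : Type*} [MetricSpace X] (g : X ≃ᵢ X) : Prop :=
  ∀ x : X, ¬ Bornology.IsBounded (Set.range fun n : ℤ => (g ^ n) x)

/-- The `r`-almost stabilizer `Γ_r(x)`, generated by the elements of `Γ` displacing `x`
at most `r`. -/
def almostStabilizer {X : Type*} [MetricSpace X] (Γ : Subgroup (X ≃ᵢ X)) (r : ℝ) (x : X) :
    Subgroup (X ≃ᵢ X) :=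
  Subgroup.closure {g : X ≃ᵢ X | g ∈ Γ ∧ dist x (g x) ≤ r}

/-- The nilpotence radius of `Γ` at `x`. -/
noncomputable def nilrad {X : Type*} [MetricSpace X] (Γ : Subgroup (X ≃ᵢ X)) (x : X) : ℝ :=
  sSup {r : ℝ | 0 ≤ r ∧ IsVirtuallyNilpotent ↥(almostStabilizer Γ r x)}

/-- The Margulis domain `M_ε(g)`. -/
def margulisDomain {X : Type*} [MetricSpace X] (g : X ≃ᵢ X) (ε : ℝ) : Set X :=
  {x : X | dist x (g x) ≤ ε}

/-- The generalized Margulis domain `ℳ_ε(g) = ⋃_{i ≠ 0} M_ε(gⁱ)`. -/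
def genMargulisDomain {X : Type*} [MetricSpace X] (g : X ≃ᵢ X) (ε : ℝ) : Set X :=
  ⋃ i ∈ {i : ℤ | i ≠ 0}, margulisDomain (g ^ i) ε

/-- `f` parameterizes a geodesic segment from `x` to `y` on `[0, dist x y]`. -/
def IsGeodesicFrom {X : Type*} [MetricSpace X] (f : ℝ → X) (x y : X) : Prop :=
  f 0 = x ∧ f (dist x y) = y ∧
    ∀ s ∈ Set.Icc 0 (dist x y), ∀ t ∈ Set.Icc 0 (dist x y), dist (f s) (f t) = |s - t|

/-- `X` is a geodesic space. -/
def IsGeodesicSpace (X : Type*) [MetricSpace X] : Prop :=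
  ∀ x y : X, ∃ f : ℝ → X, IsGeodesicFrom f x y

/-- `C` is `lam`-quasiconvex: any two of its points are joined by a geodesic contained in
the closed `lam`-neighbourhood of `C`. -/
def IsQuasiconvex {X : Type*} [MetricSpace X] (lam : ℝ) (C : Set X) : Prop :=
  ∀ x ∈ C, ∀ y ∈ C, ∃ f : ℝ → X, IsGeodesicFrom f x y ∧
    ∀ t ∈ Set.Icc 0 (dist x y), infDist (f t) C ≤ lam

/-- `C` is a convex subset: any two of its points are joined by a geodesic inside `C`. -/
def IsConvexSubset {X : Type*} [MetricSpace X] (C : Set X) : Prop :=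
  ∀ x ∈ C, ∀ y ∈ C, ∃ f : ℝ → X, IsGeodesicFrom f x y ∧
    ∀ t ∈ Set.Icc 0 (dist x y), f t ∈ C

/-- Arc-length concatenation of three paths, of respective lengths `d₁`, `d₂` and the rest. -/
noncomputable def concatPath {X : Type*} (d₁ d₂ : ℝ) (f₁ f₂ f₃ : ℝ → X) : ℝ → X :=
  fun t => if t ≤ d₁ then f₁ t else if t ≤ d₁ + d₂ then f₂ (t - d₁) else f₃ (t - d₁ - d₂)

/-!
Freeness comes from ping-pong in hyperbolic geometry, and uniformity from the packing condition.

If the translation length of `a` is at least some `ε`, then a power of `a` of bounded exponent has a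
coarse axis. If `b` coarsely preserved this axis, then so would `⟨a, b⟩`, which would be virtually
nilpotent. So the axes of `a` and of its conjugate by `b` or `b⁻¹` diverge, and bounded powers of
the two elements play ping-pong.

If the translation length is less than `ε`, consider the thin set of points moved little by some
nontrivial power of `a`. Packing yields a Margulis lemma: in a discrete group, the displacement on a
suitable ball is an almost homogeneous norm for which commutators are much smaller than their
entries, so that isometries moving a common point very little generate a virtually nilpotent group.
As `⟨a, b⟩` is not virtually nilpotent, there are many words of bounded length in different cosets
of the stabilizer of the ends of `a`. If the translates of the thin set by these words were pairwise
close, a coarse Helly property would give a point close to all of them. Near this point there would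
be, for each word, a point moved very little by a power of a conjugate of `a`; by packing two of
these points are close, so by the Margulis lemma two of the words lie in the same coset. Hence two
of the translates are far apart, and then `a` and a conjugate of `a` play ping-pong.
-/

/-! ### Almost homogeneous norms -/

/-- A symmetric subadditive function on a group which, on the set where it is at most `κ`, is
almost invariant under conjugation and almost doubled by squaring. In the application `N g` is a
normalized displacement of the isometry `g`. -/
structure IsAlmostHomogeneous {G : Type*} [Group G] (κ : ℝ) (N : G → ℝ) : Prop where
  nonneg : ∀ g, 0 ≤ N g
  one : N 1 = 0
  inv : ∀ g, N g⁻¹ = N g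
  mul_le : ∀ g h, N (g * h) ≤ N g + N h
  conj_le : ∀ g h, N g ≤ κ → N h ≤ κ → N (h * g * h⁻¹) ≤ (1 + N h) * N g
  sq_le : ∀ g, N g ≤ κ → 2 * N g - N g ^ 2 ≤ N (g * g)

/-- The well-founded order behind the walk `(m, k + 1) ↦ (m - 1, k + 1)` or `(m + 1, k)` stopped
at `k = 0` or at `|m| = M`. -/
theorem drift_walk_induction {P : ℤ → ℕ → Prop} {M K : ℕ} (hzero : ∀ m, P m 0)
    (hfar : ∀ m k, (M : ℤ) ≤ |m| → k ≤ K → P m k)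
    (hstep : ∀ (m : ℤ) k, |m| ≤ M → k < K → P (m - 1) (k + 1) → P (m + 1) k → P m (k + 1))
    {k : ℕ} (hk : k ≤ K) (m : ℤ) : P m k := by
  induction k generalizing m with
  | zero => exact hzero m
  | succ k ihk =>
    rcases lt_or_ge m (-(M : ℤ)) with hm | hm
    · exact hfar m _ (by rw [abs_of_nonpos (by omega)]; omega) hk
    · induction m, hm using Int.leInduction with
      | base => exact hfar _ _ (by simp) hk
      | succ m _ ihm =>
        rcases le_or_gt (M : ℤ) |m + 1| with hM | hM
        · exact hfar _ _ hM hk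
        · exact hstep _ _ hM.le (by omega) (by simpa using ihm) (ihk (by omega) _)

/-- A discrete comparison principle: `a * ((m ^ 2 + 2 * k) / 16 + 4 + k / 16)` is a supersolution,
as `m ^ 2 + 2 * k` is harmonic for the walk and `k / 16` decreases by `1 / 32` on average. -/
theorem le_of_drift_walk {F : ℤ → ℕ → ℝ} {a : ℝ} (ha : 0 ≤ a)
    (hF : ∀ m k, F m k ≤ (|(m : ℝ)| + 3 * k) * a)
    (hstep : ∀ m : ℤ, ∀ k : ℕ, |m| ≤ 256 → k < 64 →
      F m (k + 1) ≤ (F (m - 1) (k + 1) + F (m + 1) k) / 2 + a / 32) :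
    F 0 64 ≤ 16 * a := by
  have hsuper : F 0 64 ≤ a * ((((0 : ℤ) : ℝ) ^ 2 + 2 * (64 : ℕ)) / 16 + 4 + (64 : ℕ) / 16) := by
    refine drift_walk_induction (M := 256)
      (P := fun m k => F m k ≤ a * (((m : ℝ) ^ 2 + 2 * k) / 16 + 4 + k / 16))
      (fun m => ?_) (fun m k hm hk => ?_) (fun m k hm hk h₁ h₂ => ?_) le_rfl 0
    · refine (hF m 0).trans ?_
      rw [mul_comm, ← sq_abs (m : ℝ)]
      refine mul_le_mul_of_nonneg_left ?_ ha
      push_cast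
      nlinarith [sq_nonneg (|(m : ℝ)| - 8)]
    · refine (hF m k).trans ?_
      have hm' : (256 : ℝ) ≤ |(m : ℝ)| := by exact_mod_cast hm
      have hk' : (k : ℝ) ≤ 64 := by exact_mod_cast hk
      rw [mul_comm, ← sq_abs (m : ℝ)]
      refine mul_le_mul_of_nonneg_left ?_ ha
      nlinarith [(k.cast_nonneg : (0 : ℝ) ≤ k)]
    · have := hstep m k (mod_cast hm) hk
      push_cast at h₁ h₂ ⊢
      linarith
  norm_num at hsuper
  linarith

theorem one_add_pow_le_one_add_two_mul {a : ℝ} (ha : 0 ≤ a) {n : ℕ} (hn : 2 * (n * a) ≤ 1) :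
    (1 + a) ^ n ≤ 1 + 2 * (n * a) := by
  have hna : 0 ≤ n * a := by positivity
  calc (1 + a) ^ n ≤ Real.exp a ^ n := by gcongr; linarith [Real.add_one_le_exp a]
    _ = Real.exp (n * a) := (Real.exp_nat_mul a n).symm
    _ ≤ 1 / (1 - n * a) := Real.exp_bound_div_one_sub_of_interval hna (by linarith)
    _ ≤ 1 + 2 * (n * a) := by
      rw [div_le_iff₀ (by linarith)]
      nlinarith

theorem exists_two_pow_mul_mem_Ioc {a c : ℝ} (ha : 0 < a) (hac : a ≤ c) :
    ∃ j : ℕ, 2 ^ j * a ∈ Set.Ioc (c / 2) c := by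
  obtain ⟨j, hj, hj'⟩ := exists_nat_pow_near ((one_le_div ha).2 hac) (one_lt_two : (1 : ℝ) < 2)
  rw [le_div_iff₀ ha] at hj
  rw [div_lt_iff₀ ha, pow_succ] at hj'
  exact ⟨j, by linarith, hj⟩

namespace IsAlmostHomogeneous

open scoped commutatorElement

variable {G : Type*} [Group G] {κ : ℝ} {N : G → ℝ}

theorem pow_le (hN : IsAlmostHomogeneous κ N) (g : G) (n : ℕ) : N (g ^ n) ≤ n * N g := by
  induction n with
  | zero => simp [hN.one]
  | succ n ih =>
    rw [pow_succ]
    push_cast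
    linarith [hN.mul_le (g ^ n) g]

theorem zpow_le (hN : IsAlmostHomogeneous κ N) (g : G) (m : ℤ) : N (g ^ m) ≤ |(m : ℝ)| * N g := by
  obtain ⟨n, rfl | rfl⟩ := m.eq_nat_or_neg
  · simpa using hN.pow_le g n
  · simpa [hN.inv] using hN.pow_le g n

theorem inv_conj_le (hN : IsAlmostHomogeneous κ N) (g h : G) (hg : N g ≤ κ) (hh : N h ≤ κ) :
    N (h⁻¹ * g * h) ≤ (1 + N h) * N g := by
  simpa [hN.inv] using hN.conj_le g h⁻¹ hg (by simpa [hN.inv] using hh)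

theorem le_pow_two_pow (hN : IsAlmostHomogeneous κ N) (hκ : κ ≤ 1) (x : G) (j : ℕ)
    (hj : 2 ^ j * N x ≤ κ) :
    2 ^ j * N x - (2 ^ j * N x) ^ 2 ≤ N (x ^ 2 ^ j) := by
  have hx := hN.nonneg x
  induction j with
  | zero => simp only [pow_zero, one_mul, pow_one]; linarith [sq_nonneg (N x)]
  | succ j ih =>
    have hpos : 0 ≤ 2 ^ j * N x := by positivity
    have hdouble : (2 : ℝ) ^ (j + 1) * N x = 2 * (2 ^ j * N x) := by ring
    rw [hdouble] at hj ⊢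
    have hup := hN.pow_le x (2 ^ j)
    push_cast at hup
    have hsq := hN.sq_le (x ^ 2 ^ j) (by linarith)
    rw [pow_succ 2 j, mul_two, pow_add]
    nlinarith [ih (by linarith), hN.nonneg (x ^ 2 ^ j)]

theorem mul_pow_mul_mul_pow_le (hN : IsAlmostHomogeneous κ N) {g h y z : G} (hg : N g ≤ κ) {n : ℕ}
    (hn : (1 + N g) ^ n * (n * (N y + N z) + N h) ≤ κ) :
    N ((g * y) ^ n * h * (z * g⁻¹) ^ n) ≤ (1 + N g) ^ n * (n * (N y + N z) + N h) := by
  have hg0 := hN.nonneg g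
  have hh0 := hN.nonneg h
  have hS0 : 0 ≤ N y + N z := add_nonneg (hN.nonneg y) (hN.nonneg z)
  induction n with
  | zero => simp
  | succ n ih =>
    set q := (g * y) ^ n * h * (z * g⁻¹) ^ n with hq
    set S := N y + N z
    set B := (1 + N g) ^ n * ((n + 1) * S + N h) with hB
    have hB0 : 0 ≤ B := by positivity
    have hsucc : (1 + N g) ^ (n + 1) * ((n + 1 : ℕ) * S + N h) = (1 + N g) * B := by
      push_cast; ring
    rw [hsucc] at hn ⊢
    have hSpow : S ≤ (1 + N g) ^ n * S :=
      le_mul_of_one_le_left hS0 (one_le_pow₀ (by linarith))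
    have hq' : N q ≤ (1 + N g) ^ n * (n * S + N h) := ih (by nlinarith)
    have hyqz : N (y * q * z) ≤ B := by
      calc N (y * q * z) ≤ S + N q := by linarith [hN.mul_le (y * q) z, hN.mul_le y q]
        _ ≤ (1 + N g) ^ n * S + (1 + N g) ^ n * (n * S + N h) := by gcongr
        _ = B := by ring
    have hconj : (g * y) ^ (n + 1) * h * (z * g⁻¹) ^ (n + 1) = g * (y * q * z) * g⁻¹ := by
      rw [pow_succ', pow_succ, hq]; group
    rw [hconj]
    calc N (g * (y * q * z) * g⁻¹) ≤ (1 + N g) * N (y * q * z) :=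
          hN.conj_le _ _ (by nlinarith) hg
      _ ≤ (1 + N g) * B := by gcongr

/-- The two factorizations of `x` give `x ^ (2 * n) = (g * y) ^ n * h * (z * g⁻¹) ^ n * h⁻¹`, in
which the letters `g` and `g⁻¹` can be absorbed by conjugation. -/
theorem pow_two_mul_le (hN : IsAlmostHomogeneous κ N) {g h x y z : G} (hg : N g ≤ κ)
    (hxy : x = g * y) (hxz : x = h * (z * g⁻¹) * h⁻¹) {n : ℕ}
    (hn : (1 + N g) ^ n * (n * (N y + N z) + N h) ≤ κ) :
    N (x ^ (2 * n)) ≤ (1 + N g) ^ n * (n * (N y + N z) + N h) + N h := by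
  have hfactor : x ^ (2 * n) = (g * y) ^ n * h * (z * g⁻¹) ^ n * h⁻¹ := by
    rw [two_mul, pow_add]
    conv_lhs => enter [2]; rw [hxz, conj_pow]
    rw [hxy]; group
  rw [hfactor]
  have := hN.mul_le ((g * y) ^ n * h * (z * g⁻¹) ^ n) h⁻¹
  rw [hN.inv] at this
  exact this.trans (by gcongr; exact hN.mul_pow_mul_mul_pow_le hg hn)

theorem le_mean (hN : IsAlmostHomogeneous (1 / 100) N) {g h x y z : G}
    (hg : N g ≤ 1 / 10 ^ 12) (hg0 : 0 < N g) (hh : N h ≤ 1 / 10 ^ 12)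
    (hxy : x = g * y) (hxz : x = h * (z * g⁻¹) * h⁻¹)
    (hx : N x ≤ 500 * N g) (hy : N y ≤ 500 * N g) (hz : N z ≤ 501 * N g) :
    N x ≤ (N y + N z) / 2 + N g / 64 := by
  obtain ⟨j, hlarge, hsmall⟩ := exists_two_pow_mul_mem_Ioc hg0 (c := 1 / 10 ^ 9) (by linarith)
  set n : ℕ := 2 ^ j with hn
  have hcast : (2 : ℝ) ^ j = n := by rw [hn]; push_cast; rfl
  rw [hcast] at hlarge hsmall
  have hnpos : (0 : ℝ) < n := by rw [hn]; positivity
  have : 0 < n * N g := by positivity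
  have hS0 : 0 ≤ n * (N y + N z) := mul_nonneg hnpos.le (add_nonneg (hN.nonneg y) (hN.nonneg z))
  have hh0 := hN.nonneg h
  have hx0 : 0 ≤ n * N x := mul_nonneg hnpos.le (hN.nonneg x)
  have hS : n * (N y + N z) ≤ 1001 * (n * N g) := by nlinarith
  have hnx : n * N x ≤ 500 * (n * N g) := by nlinarith
  have hup : (1 + N g) ^ n * (n * (N y + N z) + N h) ≤
      n * (N y + N z) + N h + n * N g / 1000 :=
    calc _ ≤ (1 + 2 * (n * N g)) * (n * (N y + N z) + N h) := by
          gcongr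
          exact one_add_pow_le_one_add_two_mul hg0.le (by linarith)
      _ ≤ _ := by nlinarith
  have hlow := hN.le_pow_two_pow (by norm_num) x (j + 1) (by rw [pow_succ, hcast]; linarith)
  rw [show (2 : ℝ) ^ (j + 1) = 2 * n by rw [pow_succ, hcast]; ring, pow_succ' 2 j, ← hn] at hlow
  have hpow := hN.pow_two_mul_le (by linarith) hxy hxz (hup.trans (by linarith))
  have hquad : (2 * n * N x) ^ 2 ≤ n * N g / 1000 := by nlinarith
  have hscaled : n * (2 * N x) ≤ n * (N y + N z + N g / 32) := by nlinarith
  linarith [le_of_mul_le_mul_left hscaled hnpos]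

theorem commutator_le_three_mul (hN : IsAlmostHomogeneous κ N) {g h : G}
    (hg : N g ≤ κ) (hh : N h ≤ κ) (hh' : N h ≤ 1) : N ⁅g, h⁆ ≤ 3 * N g := by
  have hmul := hN.mul_le g (h * g⁻¹ * h⁻¹)
  have hconj := hN.conj_le g⁻¹ h (by rwa [hN.inv]) hh
  rw [hN.inv] at hconj
  rw [commutatorElement_def, mul_assoc, mul_assoc, ← mul_assoc h]
  nlinarith [hN.nonneg g]

theorem inv_conj_inv_conj_le (hN : IsAlmostHomogeneous (1 / 100) N) {g h x : G} {a : ℝ}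
    (hg : N g ≤ a) (hh : N h ≤ 1 / 10 ^ 12) (ha : a ≤ 1 / 10 ^ 12) (hx : N x ≤ 500 * a) :
    N (h⁻¹ * (g⁻¹ * x * g) * h) ≤ N x + a / 500 := by
  have hx0 := hN.nonneg x
  have := hN.nonneg g
  have hg' : N (g⁻¹ * x * g) ≤ N x + a / 1000 :=
    (hN.inv_conj_le x g (by linarith) (by linarith)).trans (by nlinarith)
  have hh' := hN.inv_conj_le (g⁻¹ * x * g) h (by linarith) (by linarith)
  nlinarith [hN.nonneg (g⁻¹ * x * g)]

theorem zpow_mul_commutator_pow_le (hN : IsAlmostHomogeneous κ N) {g h : G}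
    (hg : N g ≤ κ) (hh : N h ≤ κ) (hh' : N h ≤ 1) (m : ℤ) (k : ℕ) :
    N (g ^ m * ⁅g, h⁆ ^ k) ≤ (|(m : ℝ)| + 3 * k) * N g := by
  have hk : (k : ℝ) * N ⁅g, h⁆ ≤ k * (3 * N g) := by
    gcongr
    exact hN.commutator_le_three_mul hg hh hh'
  linarith [hN.mul_le (g ^ m) (⁅g, h⁆ ^ k), hN.zpow_le g m, hN.pow_le ⁅g, h⁆ k]

theorem zpow_mul_commutator_pow_succ_le (hN : IsAlmostHomogeneous (1 / 100) N) {g h : G}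
    (hg : N g ≤ 1 / 10 ^ 12) (hg0 : 0 < N g) (hh : N h ≤ 1 / 10 ^ 12) {m : ℤ} {k : ℕ}
    (hm : |m| ≤ 256) (hk : k < 64) :
    N (g ^ m * ⁅g, h⁆ ^ (k + 1)) ≤
      (N (g ^ (m - 1) * ⁅g, h⁆ ^ (k + 1)) + N (g ^ (m + 1) * ⁅g, h⁆ ^ k)) / 2 + N g / 32 := by
  have hsize : ∀ (i : ℤ) (l : ℕ), |i| ≤ 257 → l ≤ 64 → N (g ^ i * ⁅g, h⁆ ^ l) ≤ 500 * N g := by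
    intro i l hi hl
    have hi' : |(i : ℝ)| ≤ 257 := by exact_mod_cast hi
    have hl' : (l : ℝ) ≤ 64 := by exact_mod_cast hl
    refine (hN.zpow_mul_commutator_pow_le (by linarith) (by linarith) (by linarith) i l).trans ?_
    gcongr
    linarith
  have hy := hsize (m - 1) (k + 1) (by rw [abs_le] at *; omega) hk
  have hx := hsize m (k + 1) (by omega) hk
  have hw := hsize (m + 1) k (by rw [abs_le] at *; omega) hk.le
  have hz := hN.inv_conj_inv_conj_le le_rfl hh hg hw
  have := hN.le_mean (h := h) (x := g ^ m * ⁅g, h⁆ ^ (k + 1)) hg hg0 hh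
    (by rw [← mul_assoc, ← zpow_one_add, add_sub_cancel])
    (by rw [pow_succ, zpow_add, commutatorElement_def]; group)
    hx hy (hz.trans (by linarith))
  linarith

/-- Moving one letter `g` at a time across a power of the commutator compares `⁅g, h⁆ ^ 64` with a
random walk, which shows that it is much smaller than `64 * N g`. -/
theorem commutator_le (hN : IsAlmostHomogeneous (1 / 100) N) {g h : G}
    (hg : N g ≤ 1 / 10 ^ 12) (hh : N h ≤ 1 / 10 ^ 12) : N ⁅g, h⁆ ≤ N g / 2 := by
  have hc := hN.commutator_le_three_mul (g := g) (h := h) (by linarith) (by linarith)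
    (by linarith)
  rcases (hN.nonneg g).eq_or_lt with hg0 | hg0
  · linarith
  have hwalk := le_of_drift_walk (F := fun m k => N (g ^ m * ⁅g, h⁆ ^ k)) hg0.le
    (hN.zpow_mul_commutator_pow_le (by linarith) (by linarith) (by linarith))
    fun m k hm hk => hN.zpow_mul_commutator_pow_succ_le hg hg0 hh hm hk
  simp only [zpow_zero, one_mul] at hwalk
  have hlow := hN.le_pow_two_pow (by norm_num) ⁅g, h⁆ 6 (by linarith)
  norm_num at hlow
  nlinarith [hN.nonneg ⁅g, h⁆]

end IsAlmostHomogeneous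

section VirtuallyNilpotent

open scoped commutatorElement

variable {G : Type*} [Group G]

theorem isVirtuallyNilpotent_subgroup_iff {Γ : Subgroup G} :
    IsVirtuallyNilpotent ↥Γ ↔ ∃ H ≤ Γ, H.relIndex Γ ≠ 0 ∧ Group.IsNilpotent H := by
  constructor
  · rintro ⟨K, hK, hn⟩
    refine ⟨K.map Γ.subtype, Subgroup.map_subtype_le K, ?_, ?_⟩
    · rw [Subgroup.relIndex, Subgroup.subgroupOf, Subgroup.comap_map_eq_self_of_injective
        Γ.subtype_injective]
      exact hK.index_ne_zero
    · exact (Group.isNilpotent_congr (K.equivMapOfInjective _ Γ.subtype_injective)).1 hn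
  · rintro ⟨H, hH, hi, hn⟩
    exact ⟨H.subgroupOf Γ, ⟨hi⟩,
      (Group.isNilpotent_congr (Subgroup.subgroupOfEquivOfLe hH)).2 hn⟩

theorem IsVirtuallyNilpotent.mono {Γ Γ' : Subgroup G} (h : Γ' ≤ Γ)
    (hΓ : IsVirtuallyNilpotent ↥Γ) : IsVirtuallyNilpotent ↥Γ' := by
  rw [isVirtuallyNilpotent_subgroup_iff] at *
  obtain ⟨H, -, hi, hn⟩ := hΓ
  refine ⟨H ⊓ Γ', inf_le_right, ?_, ?_⟩
  · rw [Subgroup.inf_relIndex_right]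
    exact fun h0 => hi (Subgroup.relIndex_eq_zero_of_le_right h h0)
  · rw [Subgroup.isNilpotent_iff_lowerCentralSeries] at *
    obtain ⟨n, hn⟩ := hn
    exact ⟨n, le_bot_iff.1 (hn ▸ Subgroup.lowerCentralSeries_mono n inf_le_left)⟩

theorem IsVirtuallyNilpotent.of_relIndex_ne_zero {Γ Λ : Subgroup G} (h : Λ ≤ Γ)
    (hi : Λ.relIndex Γ ≠ 0) (hΛ : IsVirtuallyNilpotent ↥Λ) : IsVirtuallyNilpotent ↥Γ := by
  rw [isVirtuallyNilpotent_subgroup_iff] at *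
  obtain ⟨H, hH, hi', hn⟩ := hΛ
  exact ⟨H, hH.trans h, Subgroup.relIndex_ne_zero_trans hi' hi, hn⟩

theorem mem_center_ker_conjNormal {K : Subgroup G} [K.Normal]
    (x : (MulAut.conjNormal : G →* MulAut K).ker) (hx : (x : G) ∈ K) :
    x ∈ Subgroup.center (MulAut.conjNormal : G →* MulAut K).ker := by
  rw [Subgroup.mem_center_iff]
  rintro ⟨c, hc⟩
  rw [MonoidHom.mem_ker] at hc
  have hfix := congrArg Subtype.val (DFunLike.congr_fun hc ⟨x, hx⟩)
  rw [MulAut.conjNormal_apply, MulAut.one_apply] at hfix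
  exact Subtype.ext (mul_inv_eq_iff_eq_mul.1 hfix)

/-- The kernel of the conjugation action on the finite term `H k` has finite index, and it is a
central extension of a subgroup of the nilpotent group `G ⧸ H k`. -/
theorem isVirtuallyNilpotent_of_descending {H : ℕ → Subgroup G}
    (hH : Subgroup.IsDescendingCentralSeries H) (k : ℕ) [Finite (H k)] [(H k).Normal] :
    IsVirtuallyNilpotent G := by
  have : Finite (MulAut (H k)) := Finite.of_injective (fun e => (e : H k → H k))
    (fun e f h => MulEquiv.ext (congrFun h))
  refine ⟨(MulAut.conjNormal : G →* MulAut (H k)).ker, Subgroup.finiteIndex_ker _, ?_⟩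
  have hquot : Group.IsNilpotent (G ⧸ H k) := by
    rw [Subgroup.nilpotent_iff_lowerCentralSeries]
    refine ⟨k, ?_⟩
    rw [← Subgroup.map_top_of_surjective _ (QuotientGroup.mk'_surjective (H k)),
      ← Subgroup.map_lowerCentralSeries, Subgroup.map_eq_bot_iff, QuotientGroup.ker_mk']
    exact Subgroup.descending_central_series_ge_lower H hH k
  refine Subgroup.isNilpotent_of_ker_le_center
    ((QuotientGroup.mk' (H k)).comp (Subgroup.subtype _)) fun x hx => ?_
  rw [MonoidHom.mem_ker] at hx
  exact mem_center_ker_conjNormal x (by simpa using hx)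

theorem closure_commutator_closure_le {S T : Set G} {K : Subgroup G} [K.Normal]
    (h : ∀ s ∈ S, ∀ t ∈ T, ⁅s, t⁆ ∈ K) :
    ⁅Subgroup.closure S, Subgroup.closure T⁆ ≤ K := by
  rw [← QuotientGroup.ker_mk' K, ← Subgroup.map_eq_bot_iff, Subgroup.map_commutator,
    MonoidHom.map_closure, MonoidHom.map_closure, Subgroup.commutator_eq_bot_iff_le_centralizer,
    Subgroup.centralizer_closure, Subgroup.closure_le]
  rintro _ ⟨s, hs, rfl⟩
  rw [SetLike.mem_coe, Subgroup.mem_centralizer_iff_commutator_eq_one']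
  rintro _ ⟨t, ht, rfl⟩
  rw [← map_commutatorElement, ← MonoidHom.mem_ker, QuotientGroup.ker_mk']
  exact h s hs t ht

theorem normal_closure_of_conj_mem {S T : Set G} (hS : Subgroup.closure S = ⊤)
    (hinv : ∀ s ∈ S, s⁻¹ ∈ S) (h : ∀ s ∈ S, ∀ t ∈ T, s * t * s⁻¹ ∈ Subgroup.closure T) :
    (Subgroup.closure T).Normal := by
  have hconj : ∀ s ∈ S, ∀ t ∈ Subgroup.closure T, s * t * s⁻¹ ∈ Subgroup.closure T := by
    intro s hs t ht
    have hle : Subgroup.closure T ≤ (Subgroup.closure T).comap (MulAut.conj s).toMonoidHom :=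
      (Subgroup.closure_le _).2 fun t ht => h s hs t ht
    exact hle ht
  rw [← Subgroup.normalizer_eq_top_iff, ← top_le_iff, ← hS, Subgroup.closure_le]
  intro s hs
  rw [SetLike.mem_coe, Subgroup.mem_normalizer_iff]
  refine fun t => ⟨hconj s hs t, fun ht => ?_⟩
  simpa [mul_assoc] using hconj _ (hinv s hs) _ ht

/-- The subgroup generated by the elements of norm at most `r`; for an almost homogeneous norm and
`r = ε / 2 ^ k` these subgroups form a descending central series. -/
def levelSubgroup (N : G → ℝ) (r : ℝ) : Subgroup G := Subgroup.closure {g | N g ≤ r}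

namespace IsAlmostHomogeneous

variable {κ ε r : ℝ} {N : G → ℝ}

theorem normal_levelSubgroup (hN : IsAlmostHomogeneous (1 / 100) N) (hε : ε ≤ 1 / 10 ^ 12)
    (hgen : levelSubgroup N ε = ⊤) (hr : r ≤ ε) : (levelSubgroup N r).Normal := by
  refine normal_closure_of_conj_mem hgen (fun s hs => ?_) fun s hs t ht => ?_
  · rwa [Set.mem_ofPred_eq, hN.inv]
  · rw [Set.mem_ofPred_eq] at hs ht
    have hcomm : ⁅t, s⁆ ∈ levelSubgroup N r := by
      refine Subgroup.subset_closure ((hN.commutator_le ?_ ?_).trans ?_) <;>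
        linarith [hN.nonneg t]
    rw [show s * t * s⁻¹ = ⁅t, s⁆⁻¹ * t by rw [commutatorElement_def]; group]
    exact mul_mem (inv_mem hcomm) (Subgroup.subset_closure ht)

theorem isDescendingCentralSeries_levelSubgroup (hN : IsAlmostHomogeneous (1 / 100) N)
    (hε0 : 0 ≤ ε) (hε : ε ≤ 1 / 10 ^ 12) (hgen : levelSubgroup N ε = ⊤) :
    Subgroup.IsDescendingCentralSeries fun k => levelSubgroup N (ε / 2 ^ k) := by
  have hle : ∀ k : ℕ, ε / 2 ^ k ≤ ε := fun k =>
    div_le_self hε0 (one_le_pow₀ (by norm_num : (1 : ℝ) ≤ 2))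
  refine ⟨by simpa using hgen, fun x k hx g => ?_⟩
  have := hN.normal_levelSubgroup hε hgen (hle (k + 1))
  have hg : g ∈ levelSubgroup N ε := hgen ▸ Subgroup.mem_top g
  refine closure_commutator_closure_le (fun s hs t ht => ?_)
    (Subgroup.commutator_mem_commutator hx hg)
  rw [Set.mem_ofPred_eq] at hs ht
  refine Subgroup.subset_closure ((hN.commutator_le (by linarith [hle k]) (by linarith)).trans ?_)
  rw [pow_succ, ← div_div]
  gcongr

theorem eq_zero_of_mem_levelSubgroup_zero (hN : IsAlmostHomogeneous κ N) {g : G}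
    (hg : g ∈ levelSubgroup N 0) : N g = 0 := by
  induction hg using Subgroup.closure_induction with
  | mem s hs => exact le_antisymm hs (hN.nonneg s)
  | one => exact hN.one
  | mul x y _ _ hx hy => exact le_antisymm (by linarith [hN.mul_le x y]) (hN.nonneg _)
  | inv x _ hx => rwa [hN.inv]

theorem exists_levelSubgroup_le_zero (hε0 : 0 ≤ ε) (hfin : {g | N g ≤ ε}.Finite) :
    ∃ k : ℕ, levelSubgroup N (ε / 2 ^ k) ≤ levelSubgroup N 0 := by
  have hev : ∀ᶠ k : ℕ in atTop, ∀ g ∈ {g | N g ≤ ε}, N g ≤ ε / 2 ^ k → N g ≤ 0 := by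
    rw [eventually_all_finite hfin]
    intro g _
    rcases le_or_gt (N g) 0 with h | h
    · exact Eventually.of_forall fun _ _ => h
    · have htends : Tendsto (fun k : ℕ => ε / 2 ^ k) atTop (nhds 0) :=
        tendsto_const_nhds.div_atTop (tendsto_pow_atTop_atTop_of_one_lt (by norm_num))
      filter_upwards [htends.eventually_lt_const h] with k hk hle using absurd hle hk.not_ge
  obtain ⟨k, hk⟩ := hev.exists
  exact ⟨k, Subgroup.closure_mono fun g hg =>
    hk g (hg.trans (div_le_self hε0 (one_le_pow₀ (by norm_num)))) hg⟩

theorem isVirtuallyNilpotent (hN : IsAlmostHomogeneous (1 / 100) N) (hε0 : 0 ≤ ε)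
    (hε : ε ≤ 1 / 10 ^ 12) (hfin : {g | N g ≤ ε}.Finite) (hgen : levelSubgroup N ε = ⊤) :
    IsVirtuallyNilpotent G := by
  obtain ⟨k, hk⟩ := exists_levelSubgroup_le_zero hε0 hfin
  have := hN.normal_levelSubgroup hε hgen
    (div_le_self hε0 (one_le_pow₀ (by norm_num : (1 : ℝ) ≤ 2) (n := k)))
  have : Finite (levelSubgroup N (ε / 2 ^ k)) := Set.Finite.to_subtype <|
    hfin.subset fun g hg => (hN.eq_zero_of_mem_levelSubgroup_zero (hk hg)).trans_le hε0
  exact isVirtuallyNilpotent_of_descending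
    (hN.isDescendingCentralSeries_levelSubgroup hε0 hε hgen) k

end IsAlmostHomogeneous

end VirtuallyNilpotent

section WordBall

variable {G : Type*} [Group G]

/-- The ball of radius `n` for the word metric of `S`: the products of at most `n` elements of
`S ∪ S⁻¹`. It measures the length of the words produced in the theorem. -/
def wordBall (S : Set G) (n : ℕ) : Set G :=
  {g | ∃ L : List G, L.length ≤ n ∧ (∀ u ∈ L, u ∈ S ∨ u⁻¹ ∈ S) ∧ g = L.prod}

variable {S : Set G}

theorem one_mem_wordBall (n : ℕ) : (1 : G) ∈ wordBall S n := ⟨[], by simp⟩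

theorem mem_wordBall_one {s : G} (hs : s ∈ S ∨ s⁻¹ ∈ S) : s ∈ wordBall S 1 :=
  ⟨[s], by simpa using hs⟩

theorem wordBall_mono {m n : ℕ} (h : m ≤ n) : wordBall S m ⊆ wordBall S n :=
  fun _ ⟨L, hL, hLS⟩ => ⟨L, hL.trans h, hLS⟩

theorem mul_mem_wordBall {m n : ℕ} {g h : G} (hg : g ∈ wordBall S m) (hh : h ∈ wordBall S n) :
    g * h ∈ wordBall S (m + n) := by
  obtain ⟨L, hL, hLS, rfl⟩ := hg
  obtain ⟨L', hL', hLS', rfl⟩ := hh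
  refine ⟨L ++ L', by simpa using add_le_add hL hL', ?_, by simp⟩
  intro u hu
  exact (List.mem_append.1 hu).elim (hLS u) (hLS' u)

theorem inv_mem_wordBall {n : ℕ} {g : G} (hg : g ∈ wordBall S n) : g⁻¹ ∈ wordBall S n := by
  obtain ⟨L, hL, hLS, rfl⟩ := hg
  refine ⟨(L.map fun x => x⁻¹).reverse, by simpa using hL, ?_, List.prod_inv_reverse L⟩
  intro u hu
  rw [List.mem_reverse, List.mem_map] at hu
  obtain ⟨v, hv, rfl⟩ := hu
  simpa [or_comm] using hLS v hv

theorem pow_mem_wordBall {n : ℕ} {g : G} (hg : g ∈ wordBall S n) (k : ℕ) :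
    g ^ k ∈ wordBall S (k * n) := by
  induction k with
  | zero => simpa using one_mem_wordBall 0
  | succ k ih => rw [pow_succ, Nat.succ_mul]; exact mul_mem_wordBall ih hg

theorem zpow_mem_wordBall {g : G} (hg : g ∈ wordBall S 1) {k : ℤ} {n : ℕ} (hk : |k| ≤ n) :
    g ^ k ∈ wordBall S n := by
  have hpow : g ^ k.natAbs ∈ wordBall S n :=
    wordBall_mono (by rw [Int.abs_eq_natAbs] at hk; omega) (pow_mem_wordBall hg k.natAbs)
  rcases k.natAbs_eq with h | h <;> rw [h]
  · rwa [zpow_natCast]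
  · rw [zpow_neg, zpow_natCast]
    exact inv_mem_wordBall hpow

theorem wordBall_subset_closure (n : ℕ) : wordBall S n ⊆ Subgroup.closure S := by
  rintro _ ⟨L, _, hLS, rfl⟩
  refine list_prod_mem fun u hu => ?_
  rcases hLS u hu with h | h
  · exact Subgroup.subset_closure h
  · simpa using inv_mem (Subgroup.subset_closure h)

theorem finite_wordBall (hS : S.Finite) (n : ℕ) : (wordBall S n).Finite := by
  have : Finite ↥(S ∪ S⁻¹) := hS.union hS.inv
  refine ((List.finite_length_le ↥(S ∪ S⁻¹) n).image fun L => (L.map Subtype.val).prod).subset ?_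
  rintro _ ⟨L, hL, hLS, rfl⟩
  lift L to List ↥(S ∪ S⁻¹) using hLS
  exact ⟨L, by simpa using hL, rfl⟩

theorem relIndex_ne_zero_of_finite {Λ Γ : Subgroup G} {F : Set G} (hF : F.Finite)
    (hcover : ∀ g ∈ Γ, ∃ u ∈ F, u⁻¹ * g ∈ Λ) : Λ.relIndex Γ ≠ 0 := by
  have : Finite F := hF
  have hout : ∀ q : Γ ⧸ Λ.subgroupOf Γ, ∃ u : F, (u : G)⁻¹ * (q.out : G) ∈ Λ := fun q =>
    let ⟨u, hu, huq⟩ := hcover q.out q.out.2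
    ⟨⟨u, hu⟩, huq⟩
  choose f hf using hout
  have hinj : Function.Injective f := by
    intro p q hpq
    rw [← Quotient.out_eq p, ← Quotient.out_eq q]
    refine QuotientGroup.eq.2 (Subgroup.mem_subgroupOf.2 ?_)
    have := mul_mem (inv_mem (hf p)) (hpq ▸ hf q)
    simpa [mul_assoc] using this
  have : Finite (Γ ⧸ Λ.subgroupOf Γ) := Finite.of_injective f hinj
  rw [Subgroup.relIndex, ← Subgroup.finiteIndex_iff]
  exact Subgroup.finiteIndex_of_finite_quotient

theorem exists_inv_mul_mem_of_mem_closure {Λ : Subgroup G} {F : Set G} (hF1 : (1 : G) ∈ F)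
    (hstep : ∀ s, s ∈ S ∨ s⁻¹ ∈ S → ∀ u ∈ F, ∃ v ∈ F, v⁻¹ * (s * u) ∈ Λ) {g : G}
    (hg : g ∈ Subgroup.closure S) : ∃ u ∈ F, u⁻¹ * g ∈ Λ := by
  have hmul : ∀ s, s ∈ S ∨ s⁻¹ ∈ S → ∀ h : G, (∃ u ∈ F, u⁻¹ * h ∈ Λ) →
      ∃ v ∈ F, v⁻¹ * (s * h) ∈ Λ := by
    rintro s hs h ⟨u, hu, huh⟩
    obtain ⟨v, hv, hvu⟩ := hstep s hs u hu
    exact ⟨v, hv, by simpa [mul_assoc] using mul_mem hvu huh⟩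
  suffices ∀ h : G, (∃ u ∈ F, u⁻¹ * h ∈ Λ) → ∃ v ∈ F, v⁻¹ * (g * h) ∈ Λ by
    simpa using this 1 ⟨1, hF1, by simp⟩
  induction hg using Subgroup.closure_induction'' with
  | one => simp
  | mem s hs => exact hmul s (Or.inl hs)
  | inv_mem s hs => exact hmul s⁻¹ (Or.inr (by simpa using hs))
  | mul x y _ _ hx hy =>
    intro h hh
    rw [mul_assoc]
    exact hx _ (hy h hh)

theorem exists_coset_separated_insert {Λ : Subgroup G} (hΛ : Λ.relIndex (Subgroup.closure S) = 0)
    {F : Finset G} (hF1 : (1 : G) ∈ F) (hsep : ∀ u ∈ F, ∀ v ∈ F, u⁻¹ * v ∈ Λ → u = v) :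
    ∃ s, (s ∈ S ∨ s⁻¹ ∈ S) ∧ ∃ u ∈ F, s * u ∉ F ∧
      ∀ v ∈ insert (s * u) (F : Set G), ∀ w ∈ insert (s * u) (F : Set G), v⁻¹ * w ∈ Λ → v = w := by
  obtain ⟨s, hs, u, hu, hv⟩ : ∃ s, (s ∈ S ∨ s⁻¹ ∈ S) ∧ ∃ u ∈ F, ∀ v ∈ F, v⁻¹ * (s * u) ∉ Λ := by
    by_contra! hstep
    exact relIndex_ne_zero_of_finite F.finite_toSet
      (fun g hg => exists_inv_mul_mem_of_mem_closure hF1 hstep hg) hΛ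
  refine ⟨s, hs, u, hu, fun h => hv _ h (by simp), ?_⟩
  rintro v (rfl | hvF) w (rfl | hwF) hvw
  · rfl
  · exact absurd (by simpa [mul_assoc] using inv_mem hvw) (hv w hwF)
  · exact absurd hvw (hv v hvF)
  · exact hsep v hvF w hwF hvw

theorem exists_coset_separated_subset_wordBall {Λ : Subgroup G}
    (hΛ : Λ.relIndex (Subgroup.closure S) = 0) (n : ℕ) :
    ∃ F : Finset G, F.card = n + 1 ∧ (1 : G) ∈ F ∧ (∀ u ∈ F, u ∈ wordBall S n) ∧
      ∀ u ∈ F, ∀ v ∈ F, u⁻¹ * v ∈ Λ → u = v := by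
  classical
  induction n with
  | zero => exact ⟨{1}, by simp, by simp, by simp [one_mem_wordBall], by simp⟩
  | succ n ih =>
    obtain ⟨F, hcard, hF1, hball, hsep⟩ := ih
    obtain ⟨s, hs, u, hu, hsu, hsep'⟩ := exists_coset_separated_insert hΛ hF1 hsep
    refine ⟨insert (s * u) F, by rw [Finset.card_insert_of_notMem hsu, hcard],
      Finset.mem_insert_of_mem hF1, ?_, by simpa using hsep'⟩
    intro w hw
    rcases Finset.mem_insert.1 hw with rfl | hw
    · rw [add_comm]
      exact mul_mem_wordBall (mem_wordBall_one hs) (hball u hu)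
    · exact wordBall_mono n.le_succ (hball w hw)

end WordBall

/-! ### Displacement in spaces with a bicombing -/

section Displacement

variable {X : Type*} [MetricSpace X]

theorem dist_mul_apply_le (g h : X ≃ᵢ X) (x : X) :
    dist x ((g * h) x) ≤ dist x (g x) + dist x (h x) := by
  rw [IsometryEquiv.mul_apply]
  have := dist_triangle x (g x) (g (h x))
  rwa [g.isometry.dist_eq] at this

theorem dist_inv_apply (g : X ≃ᵢ X) (x : X) : dist x (g⁻¹ x) = dist x (g x) := by
  rw [← g.isometry.dist_eq, IsometryEquiv.apply_inv_self, dist_comm]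

theorem dist_inv_left (g : X ≃ᵢ X) (x y : X) : dist (g⁻¹ x) y = dist x (g y) := by
  rw [← g.isometry.dist_eq, IsometryEquiv.apply_inv_self]

theorem dist_inv_right (g : X ≃ᵢ X) (x y : X) : dist x (g⁻¹ y) = dist (g x) y := by
  rw [← g.isometry.dist_eq, IsometryEquiv.apply_inv_self]

theorem dist_pow_apply_le (g : X ≃ᵢ X) (x : X) (n : ℕ) :
    dist x ((g ^ n) x) ≤ n * dist x (g x) := by
  induction n with
  | zero => simp
  | succ n ih =>
    rw [pow_succ]
    push_cast
    linarith [dist_mul_apply_le (g ^ n) g x]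

theorem dist_zpow_natAbs (g : X ≃ᵢ X) (x : X) (n : ℤ) :
    dist x ((g ^ n) x) = dist x ((g ^ n.natAbs) x) := by
  obtain ⟨m, rfl | rfl⟩ := n.eq_nat_or_neg
  · simp
  · rw [zpow_neg, dist_inv_apply]; simp

theorem dist_zpow_apply_le (g : X ≃ᵢ X) (x : X) (n : ℤ) :
    dist x ((g ^ n) x) ≤ |(n : ℝ)| * dist x (g x) := by
  rw [dist_zpow_natAbs]
  simpa [Nat.cast_natAbs] using dist_pow_apply_le g x n.natAbs

theorem dist_conj_apply (g h : X ≃ᵢ X) (x : X) :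
    dist (h x) ((h * g * h⁻¹) (h x)) = dist x (g x) := by
  simp [IsometryEquiv.mul_apply, IsometryEquiv.inv_apply_self, h.isometry.dist_eq]

theorem dist_conj_apply' (g h : X ≃ᵢ X) (x : X) :
    dist x ((h * g * h⁻¹) x) = dist (h⁻¹ x) (g (h⁻¹ x)) := by
  conv_lhs => rw [← IsometryEquiv.apply_inv_self h x]
  rw [dist_conj_apply]

theorem dist_apply_le_of_dist_le (g : X ≃ᵢ X) (x y : X) :
    dist x (g x) ≤ dist y (g y) + 2 * dist x y := by
  have hxy := dist_triangle x y (g x)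
  have hygx := dist_triangle y (g y) (g x)
  rw [g.isometry.dist_eq, dist_comm y x] at hygx
  linarith

theorem dist_le_of_mem_wordBall {S : Set (X ≃ᵢ X)} {x : X} {r : ℝ} (hr : 0 ≤ r)
    (hS : ∀ s ∈ S, dist x (s x) ≤ r) {n : ℕ} {g : X ≃ᵢ X} (hg : g ∈ wordBall S n) :
    dist x (g x) ≤ n * r := by
  obtain ⟨L, hlen, hmem, rfl⟩ := hg
  have : dist x (L.prod x) ≤ L.length * r := by
    clear hlen
    induction L with
    | nil => simp
    | cons u L ih =>
      rw [List.prod_cons, List.length_cons]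
      push_cast
      have hu : dist x (u x) ≤ r := by
        rcases hmem u (by simp) with h | h
        · exact hS u h
        · rw [← dist_inv_apply]; exact hS _ h
      linarith [dist_mul_apply_le u L.prod x, ih fun v hv => hmem v (by simp [hv])]
  refine this.trans ?_
  gcongr

end Displacement

/-- The group of all `σ`-isometries. Only the parameters in `[0, 1]` matter, as in
`IsSigmaIsometry`. -/
def sigmaIsometries {X : Type*} [MetricSpace X] (σ : X → X → ℝ → X) : Subgroup (X ≃ᵢ X) where
  carrier := {g | IsSigmaIsometry σ g}
  one_mem' := fun _ _ _ _ => rfl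
  mul_mem' := by
    intro g h hg hh x y t ht
    rw [IsometryEquiv.mul_apply, hh x y t ht, hg _ _ t ht]
    rfl
  inv_mem' := by
    intro g hg x y t ht
    apply g.injective
    rw [hg _ _ t ht]
    simp

namespace IsGCB

variable {X : Type*} [MetricSpace X] {σ : X → X → ℝ → X}

theorem dist_source (hσ : IsGCB σ) (x y : X) {t : ℝ} (ht : t ∈ Set.Icc (0 : ℝ) 1) :
    dist x (σ x y t) = t * dist x y := by
  have := hσ.geodesic x y 0 (by simp) t ht
  rwa [hσ.source, zero_sub, abs_neg, abs_of_nonneg ht.1] at this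

theorem dist_target (hσ : IsGCB σ) (x y : X) {t : ℝ} (ht : t ∈ Set.Icc (0 : ℝ) 1) :
    dist (σ x y t) y = (1 - t) * dist x y := by
  have := hσ.geodesic x y t ht 1 (by simp)
  rwa [hσ.target, abs_sub_comm, abs_of_nonneg (by linarith [ht.2])] at this

theorem dist_sigma_le (hσ : IsGCB σ) (x y x' y' : X) {t : ℝ} (ht : t ∈ Set.Icc (0 : ℝ) 1) :
    dist (σ x y t) (σ x' y' t) ≤ (1 - t) * dist x x' + t * dist y y' := by
  have := (hσ.convex x y x' y').2 (show (0 : ℝ) ∈ Set.Icc (0 : ℝ) 1 by simp)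
    (show (1 : ℝ) ∈ Set.Icc (0 : ℝ) 1 by simp) (show (0 : ℝ) ≤ 1 - t by linarith [ht.2]) ht.1
    (by ring)
  simpa [hσ.source, hσ.target] using this

theorem dist_apply_sigma_le (hσ : IsGCB σ) {g h : X ≃ᵢ X} (hg : IsSigmaIsometry σ g)
    (hh : IsSigmaIsometry σ h) (x y : X) {t : ℝ} (ht : t ∈ Set.Icc (0 : ℝ) 1) :
    dist (g (σ x y t)) (h (σ x y t)) ≤ (1 - t) * dist (g x) (h x) + t * dist (g y) (h y) := by
  rw [hg x y t ht, hh x y t ht]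
  exact hσ.dist_sigma_le _ _ _ _ ht

theorem disp_sigma_le (hσ : IsGCB σ) {g : X ≃ᵢ X} (hg : IsSigmaIsometry σ g)
    (x y : X) {t : ℝ} (ht : t ∈ Set.Icc (0 : ℝ) 1) :
    dist (σ x y t) (g (σ x y t)) ≤ (1 - t) * dist x (g x) + t * dist y (g y) :=
  hσ.dist_apply_sigma_le (one_mem (sigmaIsometries σ)) hg x y ht

theorem exists_extension (hσ : IsGCB σ) (z y : X) {T : ℝ} (hT : 0 < T) (hd : dist z y ≤ T) :
    ∃ p, dist z p = T ∧ dist y p = T - dist z y ∧ y = σ z p (dist z y / T) := by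
  obtain ⟨γ, hγ, hγσ, hγy⟩ := hσ.geodComplete z y
  have hγ₀ : γ 0 = z := by
    have := hγy 0 (by simp)
    rw [hσ.source, zero_mul] at this
    exact this.symm
  have hγ₁ : γ (dist z y) = y := by
    have := hγy 1 (by simp)
    rw [hσ.target, one_mul] at this
    exact this.symm
  refine ⟨γ T, ?_, ?_, ?_⟩
  · rw [← hγ₀, hγ.dist_eq, Real.dist_eq, zero_sub, abs_neg, abs_of_pos hT]
  · nth_rewrite 1 [← hγ₁]
    rw [hγ.dist_eq, Real.dist_eq, abs_sub_comm, abs_of_nonneg (by linarith)]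
  · have := hγσ 0 T hT.le (dist z y / T) ⟨by positivity, (div_le_one hT).2 hd⟩
    rw [hγ₀] at this
    rw [this, zero_add, sub_zero, div_mul_cancel₀ _ hT.ne', hγ₁]

theorem exists_extension_disp (hσ : IsGCB σ) (z y : X) {T : ℝ} (hT : 0 < T) (hd : dist z y ≤ T) :
    ∃ p, dist z p = T ∧ dist y p = T - dist z y ∧
      ∀ g h : X ≃ᵢ X, IsSigmaIsometry σ g → IsSigmaIsometry σ h →
        T * dist (g y) (h y) ≤ (T - dist z y) * dist (g z) (h z) + dist z y * dist (g p) (h p) := by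
  obtain ⟨p, hzp, hyp, hy⟩ := hσ.exists_extension z y hT hd
  refine ⟨p, hzp, hyp, fun g h hg hh => ?_⟩
  have := hσ.dist_apply_sigma_le hg hh z p (t := dist z y / T)
    ⟨by positivity, (div_le_one hT).2 hd⟩
  rw [← hy] at this
  have hscaled := mul_le_mul_of_nonneg_left this hT.le
  refine hscaled.trans (le_of_eq ?_)
  field_simp

theorem midpoint_disp_le (hσ : IsGCB σ) {g : X ≃ᵢ X} (hg : IsSigmaIsometry σ g) (y : X) :
    ∃ m, dist y m = dist y (g y) / 2 ∧ dist m (g m) ≤ dist y (g (g y)) / 2 := by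
  have hh : (1 / 2 : ℝ) ∈ Set.Icc (0 : ℝ) 1 := by norm_num
  refine ⟨σ y (g y) (1 / 2), by rw [hσ.dist_source _ _ hh]; ring, ?_⟩
  rw [hg _ _ _ hh, hσ.reversible y (g y) _ hh, show (1 - 1 / 2 : ℝ) = 1 / 2 by norm_num]
  have := hσ.dist_sigma_le (g y) y (g y) (g (g y)) hh
  rw [dist_self] at this
  linarith

theorem two_mul_disp_le (hσ : IsGCB σ) {g : X ≃ᵢ X} (hg : IsSigmaIsometry σ g) {x y : X}
    {ρ l b : ℝ} (hl : 0 < l) (hb : b ≤ 2 * l)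
    (hB : ∀ p, dist p x ≤ ρ + l → dist p (g p) ≤ b) (hy : dist y x ≤ ρ) :
    2 * dist y (g y) ≤ dist y (g (g y)) + dist y (g y) * b / l := by
  obtain ⟨m, hym, hgm⟩ := hσ.midpoint_disp_le hg y
  have hyb := hB y (by linarith)
  obtain ⟨p, -, hyp, hconv⟩ := hσ.exists_extension_disp m y hl
    (by rw [dist_comm, hym]; linarith)
  have hpb := hB p (by
    have := dist_triangle p y x
    rw [dist_comm p y] at this
    have := dist_nonneg (x := m) (y := y)
    linarith)
  have h := hconv 1 g (one_mem (sigmaIsometries σ)) hg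
  change l * dist y (g y) ≤ (l - dist m y) * dist m (g m) + dist m y * dist p (g p) at h
  rw [dist_comm m y, hym] at h
  have hy₀ : 0 ≤ dist y (g y) := dist_nonneg
  have hm₀ : 0 ≤ dist m (g m) := dist_nonneg
  have hmid : (l - dist y (g y) / 2) * dist m (g m) ≤ l * (dist y (g (g y)) / 2) := by nlinarith
  have hend : dist y (g y) / 2 * dist p (g p) ≤ dist y (g y) / 2 * b := by gcongr
  have hscaled : l * (2 * dist y (g y)) ≤ l * (dist y (g (g y)) + dist y (g y) * b / l) := by
    rw [mul_add, mul_div_cancel₀ _ hl.ne']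
    linarith
  exact le_of_mul_le_mul_left hscaled hl

end IsGCB

section TranslationLength

variable {X : Type*} [MetricSpace X] {σ : X → X → ℝ → X}

/-- The translation length of `g`: the infimum of its displacement. Its size decides whether a
bounded power of `g` has a coarse axis. -/
noncomputable def transLength (g : X ≃ᵢ X) : ℝ := ⨅ y, dist y (g y)

theorem transLength_le (g : X ≃ᵢ X) (y : X) : transLength g ≤ dist y (g y) :=
  ciInf_le ⟨0, by rintro _ ⟨y, rfl⟩; exact dist_nonneg⟩ y

theorem transLength_nonneg (g : X ≃ᵢ X) : 0 ≤ transLength g := Real.iInf_nonneg fun _ => dist_nonneg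

theorem exists_disp_lt [Nonempty X] (g : X ≃ᵢ X) {η : ℝ} (hη : 0 < η) :
    ∃ y, dist y (g y) < transLength g + η :=
  exists_lt_of_ciInf_lt (lt_add_of_pos_right _ hη)

theorem le_transLength [Nonempty X] {g : X ≃ᵢ X} {r : ℝ} (h : ∀ y, r ≤ dist y (g y)) :
    r ≤ transLength g := le_ciInf h

namespace IsGCB

theorem two_pow_mul_transLength_le [Nonempty X] (hσ : IsGCB σ) {g : X ≃ᵢ X}
    (hg : IsSigmaIsometry σ g) (k : ℕ) : 2 ^ k * transLength g ≤ transLength (g ^ 2 ^ k) := by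
  induction k with
  | zero => simp
  | succ k ih =>
    refine le_transLength fun y => ?_
    obtain ⟨m, -, hm⟩ := hσ.midpoint_disp_le (pow_mem (S := sigmaIsometries σ) hg (2 ^ k)) y
    rw [← IsometryEquiv.mul_apply, ← pow_add, ← two_mul, ← pow_succ'] at hm
    rw [pow_succ]
    linarith [transLength_le (g ^ 2 ^ k) m]

theorem div_mul_sub_le (hσ : IsGCB σ) {g : X ≃ᵢ X} (hg : IsSigmaIsometry σ g) {n : ℕ}
    (hn : 0 < n) (k : ℕ) (z : X) :
    (2 ^ k / n : ℕ) * (n * transLength g - dist z ((g ^ n) z)) ≤ n * dist z (g z) := by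
  have : Nonempty X := ⟨z⟩
  set q := 2 ^ k / n
  set r := 2 ^ k % n
  have hqr : n * q + r = 2 ^ k := Nat.div_add_mod _ _
  have hlower : (n * q + r : ℝ) * transLength g ≤ dist z ((g ^ 2 ^ k) z) := by
    have h2k : (n * q + r : ℝ) = 2 ^ k := by exact_mod_cast hqr
    rw [h2k]
    exact (hσ.two_pow_mul_transLength_le hg k).trans (transLength_le _ z)
  have hupper : dist z ((g ^ 2 ^ k) z) ≤ q * dist z ((g ^ n) z) + r * dist z (g z) := by
    rw [← hqr, pow_add, pow_mul]
    exact (dist_mul_apply_le _ _ z).trans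
      (add_le_add (dist_pow_apply_le (g ^ n) z q) (dist_pow_apply_le g z r))
  have hr : (r : ℝ) * dist z (g z) ≤ n * dist z (g z) := by
    have : (r : ℝ) ≤ n := by exact_mod_cast (Nat.mod_lt _ hn).le
    gcongr
  have : 0 ≤ (r : ℝ) * transLength g := mul_nonneg r.cast_nonneg (transLength_nonneg g)
  linarith

theorem mul_transLength_le_disp (hσ : IsGCB σ) {g : X ≃ᵢ X}
    (hg : IsSigmaIsometry σ g) (n : ℕ) (z : X) : n * transLength g ≤ dist z ((g ^ n) z) := by
  obtain rfl | hn := Nat.eq_zero_or_pos n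
  · simp
  by_contra! hlt
  obtain ⟨M, hM⟩ := exists_nat_gt (n * dist z (g z) / (n * transLength g - dist z ((g ^ n) z)))
  rw [div_lt_iff₀ (by linarith)] at hM
  have hq : M ≤ 2 ^ (n * M) / n :=
    (Nat.le_div_iff_mul_le hn).2 (by rw [mul_comm]; exact Nat.lt_two_pow_self.le)
  have hMq : (M : ℝ) * (n * transLength g - dist z ((g ^ n) z)) ≤
      (2 ^ (n * M) / n : ℕ) * (n * transLength g - dist z ((g ^ n) z)) :=
    mul_le_mul_of_nonneg_right (by exact_mod_cast hq) (by linarith)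
  linarith [hσ.div_mul_sub_le hg hn (n * M) z]

theorem abs_mul_transLength_le_disp (hσ : IsGCB σ) {g : X ≃ᵢ X}
    (hg : IsSigmaIsometry σ g) (n : ℤ) (z : X) :
    |(n : ℝ)| * transLength g ≤ dist z ((g ^ n) z) := by
  rw [dist_zpow_natAbs]
  simpa [Nat.cast_natAbs] using hσ.mul_transLength_le_disp hg n.natAbs z

end IsGCB

end TranslationLength

/-! ### Packing and the Margulis lemma -/

section Packing

universe u

variable {X : Type u} [MetricSpace X] {σ : X → X → ℝ → X}

theorem IsGCB.exists_expanding (hσ : IsGCB σ) (x : X) {l : ℝ} (hl : 1 ≤ l) :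
    ∃ f : X → X, (∀ s, dist x (f s) = l * dist x s) ∧
      ∀ s s', l * dist s s' ≤ dist (f s) (f s') := by
  have hl0 : 0 < l := one_pos.trans_le hl
  have ht : 1 / l ∈ Set.Icc (0 : ℝ) 1 := ⟨by positivity, (div_le_one hl0).2 hl⟩
  have hext : ∀ s : X, ∃ p, dist x p = l * dist x s ∧ s = σ x p (1 / l) := by
    intro s
    rcases eq_or_ne x s with rfl | hne
    · refine ⟨x, by simp, eq_of_dist_eq_zero ?_⟩
      rw [hσ.dist_source x x ht, dist_self, mul_zero]
    · have hd : 0 < dist x s := dist_pos.2 hne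
      obtain ⟨p, hxp, -, hs⟩ := hσ.exists_extension x s (T := l * dist x s) (by positivity)
        (le_mul_of_one_le_left hd.le hl)
      exact ⟨p, hxp, by rwa [div_mul_cancel_right₀ hd.ne', ← one_div] at hs⟩
  choose f hfx hfσ using hext
  refine ⟨f, hfx, fun s s' => ?_⟩
  have h := hσ.dist_sigma_le x (f s) x (f s') ht
  rw [← hfσ, ← hfσ, dist_self, mul_zero, zero_add] at h
  calc l * dist s s' ≤ l * (1 / l * dist (f s) (f s')) := by gcongr
    _ = dist (f s) (f s') := by field_simp

theorem IsPacked.rescale (hσ : IsGCB σ) {P r₀ r : ℝ} (hP : IsPacked X P r₀) (hr : 0 < r)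
    (hrr : r ≤ r₀) : IsPacked X P r := by
  classical
  intro x S hS hsep
  obtain ⟨f, hfx, hf⟩ := hσ.exists_expanding x ((one_le_div hr).2 hrr)
  have hr₀ : 0 < r₀ := hr.trans_le hrr
  have hinj : Function.Injective f := fun s s' h => by
    have hle := hf s s'
    rw [h, dist_self] at hle
    exact dist_le_zero.1 (nonpos_of_mul_nonpos_right hle (by positivity))
  rw [← Finset.card_image_of_injective S hinj]
  refine hP x _ ?_ ?_
  · rw [Finset.coe_image]
    rintro _ ⟨s, hs, rfl⟩
    have hxs := hS hs
    rw [mem_closedBall, dist_comm] at hxs ⊢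
    calc dist x (f s) = r₀ / r * dist x s := hfx s
      _ ≤ r₀ / r * (3 * r) := by gcongr
      _ = 3 * r₀ := by field_simp
  · simp only [Finset.forall_mem_image]
    intro s hs s' hs' hne
    calc 2 * r₀ = r₀ / r * (2 * r) := by field_simp
      _ < r₀ / r * dist s s' := by
        have := hsep s hs s' hs' (ne_of_apply_ne f hne)
        gcongr
      _ ≤ dist (f s) (f s') := hf s s'

theorem IsPacked.exists_cover {P r : ℝ} (hP : IsPacked X P r)
    (x : X) : ∃ S : Finset X, S.card ≤ ⌊P⌋₊ ∧
      ∀ y, dist y x ≤ 3 * r → ∃ s ∈ S, dist y s ≤ 2 * r := by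
  classical
  set A : Set ℕ := {n | ∃ S : Finset X, S.card = n ∧ (↑S ⊆ closedBall x (3 * r)) ∧
    ∀ a ∈ S, ∀ b ∈ S, a ≠ b → 2 * r < dist a b}
  have hbd : ∀ n ∈ A, n ≤ ⌊P⌋₊ := by
    rintro _ ⟨S, rfl, hSball, hSsep⟩
    exact Nat.le_floor (hP x S hSball hSsep)
  obtain ⟨S, hcard, hSball, hSsep⟩ : sSup A ∈ A := Nat.sSup_mem ⟨0, ∅, by simp⟩ ⟨_, hbd⟩
  refine ⟨S, hbd _ ⟨S, rfl, hSball, hSsep⟩, fun y hy => ?_⟩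
  by_contra! hfar
  have hyS : y ∉ S := fun hyS => by
    have h := hfar y hyS
    have : (0 : ℝ) ≤ 3 * r := dist_nonneg.trans hy
    rw [dist_self] at h
    linarith
  have hbig : S.card + 1 ∈ A := by
    refine ⟨insert y S, Finset.card_insert_of_notMem hyS, ?_, ?_⟩
    · rw [Finset.coe_insert]
      exact Set.insert_subset hy hSball
    · intro a ha b hb hab
      rcases Finset.mem_insert.1 ha with rfl | haS <;>
        rcases Finset.mem_insert.1 hb with rfl | hbS
      · exact absurd rfl hab
      · exact hfar _ hbS
      · rw [dist_comm]; exact hfar _ haS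
      · exact hSsep a haS b hbS hab
  have := le_csSup ⟨_, hbd⟩ hbig
  omega

theorem IsGCB.exists_dist_le_of_dist_le_add (hσ : IsGCB σ) {x y : X} {r s : ℝ} (hr : 0 < r)
    (hs : 0 ≤ s) (h : dist y x ≤ s + r) : ∃ z, dist z x ≤ s ∧ dist y z ≤ r := by
  rcases le_or_gt (dist y x) r with hyx | hyx
  · exact ⟨x, by rwa [dist_self], hyx⟩
  have hpos : 0 < dist y x := hr.trans hyx
  have ht : r / dist y x ∈ Set.Icc (0 : ℝ) 1 := ⟨by positivity, (div_le_one hpos).2 hyx.le⟩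
  refine ⟨σ y x (r / dist y x), ?_, ?_⟩
  · rw [hσ.dist_target _ _ ht, sub_mul, div_mul_cancel₀ _ hpos.ne']
    linarith
  · rw [hσ.dist_source _ _ ht, div_mul_cancel₀ _ hpos.ne']

theorem IsPacked.exists_cover_iterate (hσ : IsGCB σ) {P r : ℝ} (hr : 0 < r) (hP : IsPacked X P r)
    (x : X) (k : ℕ) : ∃ S : Finset X, S.card ≤ ⌊P⌋₊ ^ k ∧
      ∀ y, dist y x ≤ (2 + k) * r → ∃ s ∈ S, dist y s ≤ 2 * r := by
  classical
  induction k with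
  | zero => exact ⟨{x}, by simp, by simp⟩
  | succ k ih =>
    obtain ⟨S, hcard, hS⟩ := ih
    choose C hCcard hC using fun s => hP.exists_cover s
    refine ⟨S.biUnion C, ?_, fun y hy => ?_⟩
    · calc (S.biUnion C).card ≤ ∑ s ∈ S, (C s).card := Finset.card_biUnion_le
        _ ≤ S.card * ⌊P⌋₊ := by simpa using Finset.sum_le_card_nsmul S _ _ fun s _ => hCcard s
        _ ≤ ⌊P⌋₊ ^ (k + 1) := by rw [pow_succ]; gcongr
    · obtain ⟨y', hy'x, hyy'⟩ := hσ.exists_dist_le_of_dist_le_add (s := (2 + k) * r) hr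
        (by positivity) (hy.trans_eq (by push_cast; ring))
      obtain ⟨s, hs, hy's⟩ := hS y' hy'x
      obtain ⟨s', hs', hys'⟩ := hC s y (by linarith [dist_triangle y y' s])
      exact ⟨s', Finset.mem_biUnion.2 ⟨s, hs, hs'⟩, hys'⟩

theorem exists_uniform_net (P r₀ : ℝ) (hr₀ : 0 < r₀) (R η : ℝ) (hη : 0 < η) :
    ∃ n : ℕ, ∀ (X : Type u) [MetricSpace X] (σ : X → X → ℝ → X), IsGCB σ → IsPacked X P r₀ →
      ∀ x : X, ∃ S : Finset X, S.card ≤ n ∧ ∀ y, dist y x ≤ R → ∃ s ∈ S, dist y s ≤ η := by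
  set r := min r₀ (η / 2)
  have hr : 0 < r := lt_min hr₀ (by positivity)
  obtain ⟨k, hk⟩ := exists_nat_ge (R / r)
  rw [div_le_iff₀ hr] at hk
  refine ⟨⌊P⌋₊ ^ k, fun X _ σ hσ hP x => ?_⟩
  obtain ⟨S, hcard, hS⟩ := (hP.rescale hσ hr (min_le_left _ _)).exists_cover_iterate hσ hr x k
  refine ⟨S, hcard, fun y hy => ?_⟩
  obtain ⟨s, hs, hys⟩ := hS y (by linarith)
  exact ⟨s, hs, by linarith [min_le_right r₀ (η / 2)]⟩

theorem exists_ne_forall_dist_le {ι X Y : Type*} [Fintype ι] [PseudoMetricSpace X] {f : ι → Y → X}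
    {S : Finset Y} {S' : Finset X} {η : ℝ} (hnet : ∀ i, ∀ s ∈ S, ∃ s' ∈ S', dist (f i s) s' ≤ η)
    (hcard : S'.card ^ S.card < Fintype.card ι) :
    ∃ i j, i ≠ j ∧ ∀ s ∈ S, dist (f i s) (f j s) ≤ 2 * η := by
  classical
  choose c hcS' hc using hnet
  obtain ⟨i, j, hij, h⟩ := Fintype.exists_ne_map_eq_of_card_lt
    (fun i (s : S) => (⟨c i s s.2, hcS' i s s.2⟩ : S')) (by simpa using hcard)
  refine ⟨i, j, hij, fun s hs => ?_⟩
  have hcij : c i s hs = c j s hs := congrArg Subtype.val (congrFun h ⟨s, hs⟩)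
  linarith [dist_triangle_right (f i s) (f j s) (c j s hs), hcij ▸ hc i s hs, hc j s hs]

theorem exists_uniform_pigeonhole (P r₀ : ℝ) (hr₀ : 0 < r₀) (R η : ℝ) (hη : 0 < η) :
    ∃ n : ℕ, ∀ (X : Type u) [MetricSpace X] (σ : X → X → ℝ → X), IsGCB σ → IsPacked X P r₀ →
      ∀ (x : X) (f : Fin (n + 1) → X), (∀ i, dist (f i) x ≤ R) →
        ∃ i j, i ≠ j ∧ dist (f i) (f j) ≤ η := by
  obtain ⟨n, hn⟩ := exists_uniform_net P r₀ hr₀ R (η / 2) (by positivity)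
  refine ⟨n, fun X _ σ hσ hP x f hf => ?_⟩
  obtain ⟨S, hcard, hnet⟩ := hn X σ hσ hP x
  obtain ⟨i, j, hij, h⟩ := exists_ne_forall_dist_le (f := fun i (_ : Unit) => f i) (S := {()})
    (fun i _ _ => hnet (f i) (hf i)) (by simpa using Nat.lt_succ_of_le hcard)
  exact ⟨i, j, hij, by linarith [h () (by simp)]⟩

theorem exists_uniform_pigeonhole_isometry (P r₀ : ℝ) (hr₀ : 0 < r₀) (R r η : ℝ)
    (hη : 0 < η) :
    ∃ n : ℕ, ∀ (X : Type u) [MetricSpace X] (σ : X → X → ℝ → X), IsGCB σ → IsPacked X P r₀ →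
      ∀ (x : X) (g : Fin (n + 1) → X ≃ᵢ X), (∀ i, dist x (g i x) ≤ r) →
        ∃ i j, i ≠ j ∧ ∀ y, dist y x ≤ R → dist (g i y) (g j y) ≤ η := by
  classical
  obtain ⟨n, hn⟩ := exists_uniform_net.{u} P r₀ hr₀ R (η / 4) (by positivity)
  obtain ⟨m, hm⟩ := exists_uniform_net.{u} P r₀ hr₀ (R + η / 4 + r) (η / 4) (by positivity)
  refine ⟨(m + 1) ^ n, fun X _ σ hσ hP x g hg => ?_⟩
  obtain ⟨S, hScard, hS⟩ := hn X σ hσ hP x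
  obtain ⟨S', hS'card, hS'⟩ := hm X σ hσ hP x
  obtain ⟨i, j, hij, h⟩ := exists_ne_forall_dist_le (f := fun i => g i)
    (S := S.filter fun s => dist s x ≤ R + η / 4) (S' := S') (η := η / 4)
    (fun i s hs => hS' _ <| by
      linarith [dist_triangle (g i s) (g i x) x, (g i).isometry.dist_eq s x,
        dist_comm (g i x) x, hg i, (Finset.mem_filter.1 hs).2]) (by
      rw [Fintype.card_fin, Nat.lt_succ_iff]
      exact (Nat.pow_le_pow_left (hS'card.trans m.le_succ) _).trans
        (Nat.pow_le_pow_right m.succ_pos ((Finset.card_filter_le _ _).trans hScard)))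
  refine ⟨i, j, hij, fun y hy => ?_⟩
  obtain ⟨s, hs, hys⟩ := hS y hy
  have hsx : dist s x ≤ R + η / 4 := by linarith [dist_triangle_left s x y]
  linarith [h s (Finset.mem_filter.2 ⟨hs, hsx⟩), dist_triangle4 (g i y) (g i s) (g j s) (g j y),
    (g i).isometry.dist_eq y s, (g j).isometry.dist_eq s y, dist_comm s y]

end Packing

section LocalNilpotency

universe u

/-- `GoodRadius Γ x ρ τ` says that elements of `Γ` which are very small on the ball of radius `ρ`
are still controlled on the ball of radius `ρ + τ`. -/
def GoodRadius {X : Type u} [MetricSpace X] (Γ : Subgroup (X ≃ᵢ X)) (x : X) (ρ τ : ℝ) : Prop :=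
  ∀ k ∈ Γ, (∀ y, dist y x ≤ ρ → dist y (k y) ≤ τ / 800) →
    ∀ y, dist y x ≤ ρ + τ → dist y (k y) ≤ τ / 100

section

variable {X : Type u} [MetricSpace X] {σ : X → X → ℝ → X} {Γ : Subgroup (X ≃ᵢ X)} {x : X}
  {ρ τ : ℝ}

theorem IsGCB.exists_radial_extension (hσ : IsGCB σ) {y : X} {T : ℝ} (hρ : 0 ≤ ρ)
    (hy : ρ < dist x y) (hT : 0 < T) (hyT : dist x y ≤ ρ + T) :
    ∃ z p, dist x z = ρ ∧ dist z p = T ∧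
      ∀ g h : X ≃ᵢ X, IsSigmaIsometry σ g → IsSigmaIsometry σ h → T * dist (g y) (h y) ≤
        (T - (dist x y - ρ)) * dist (g z) (h z) + (dist x y - ρ) * dist (g p) (h p) := by
  have hpos : 0 < dist x y := hρ.trans_lt hy
  have ht : ρ / dist x y ∈ Set.Icc (0 : ℝ) 1 := ⟨by positivity, (div_le_one hpos).2 hy.le⟩
  have hzy : dist (σ x y (ρ / dist x y)) y = dist x y - ρ := by
    rw [hσ.dist_target _ _ ht, sub_mul, div_mul_cancel₀ _ hpos.ne', one_mul]
  obtain ⟨p, hzp, -, hp⟩ := hσ.exists_extension_disp (σ x y (ρ / dist x y)) y hT (by linarith)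
  rw [hzy] at hp
  refine ⟨_, p, ?_, hzp, hp⟩
  rw [hσ.dist_source _ _ ht, div_mul_cancel₀ _ hpos.ne']

theorem exists_dist_gt_of_not_goodRadius (hσ : IsGCB σ) (hΓ : Γ ≤ sigmaIsometries σ) (hρ : 0 ≤ ρ)
    (hτ0 : 0 < τ) (hτ1 : τ ≤ 1) (hbad : ¬ GoodRadius Γ x ρ τ) :
    ∃ k ∈ Γ, (∀ y, dist y x ≤ ρ → dist y (k y) ≤ τ / 800) ∧ ∃ p, dist p x ≤ ρ + 1 ∧
      ∀ h, IsSigmaIsometry σ h → (∀ y, dist y x ≤ ρ + τ → dist y (h y) ≤ τ / 800) →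
        1 / 200 < dist (k p) (h p) := by
  obtain ⟨k, hkΓ, hk, y, hyx, hy⟩ : ∃ k ∈ Γ, (∀ y, dist y x ≤ ρ → dist y (k y) ≤ τ / 800) ∧
      ∃ y, dist y x ≤ ρ + τ ∧ τ / 100 < dist y (k y) := by
    simpa only [GoodRadius, not_forall, not_le, exists_prop] using hbad
  have hρy : ρ < dist x y := by
    by_contra! h
    linarith [hk y (by rwa [dist_comm])]
  rw [dist_comm] at hyx
  obtain ⟨z, p, hxz, hzp, hp⟩ := hσ.exists_radial_extension hρ hρy one_pos (by linarith)
  refine ⟨k, hkΓ, hk, p, ?_, fun h hh hhsmall => ?_⟩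
  · linarith [dist_triangle_left p x z, dist_comm z x]
  have hzx : dist z x ≤ ρ := by rw [dist_comm, hxz]
  have hy_far : τ / 100 - τ / 800 < dist (k y) (h y) := by
    linarith [dist_triangle_right y (k y) (h y), hhsmall y (by rwa [dist_comm]),
      dist_comm (k y) (h y)]
  have hz_near : dist (k z) (h z) ≤ τ / 400 := by
    linarith [dist_triangle_left (k z) (h z) z, hk z hzx, hhsmall z (by linarith)]
  have hconv := hp k h (hΓ hkΓ) hh
  by_contra! hp_near
  have hz_term : (1 - (dist x y - ρ)) * dist (k z) (h z) ≤ 1 * (τ / 400) :=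
    mul_le_mul (by linarith) hz_near dist_nonneg zero_le_one
  have hp_term : (dist x y - ρ) * dist (k p) (h p) ≤ τ * (1 / 200) :=
    mul_le_mul (by linarith) hp_near dist_nonneg hτ0.le
  linarith

end

theorem exists_goodRadius (P r₀ : ℝ) (hr₀ : 0 < r₀) :
    ∃ τ : ℝ, 0 < τ ∧ ∀ (X : Type u) [MetricSpace X] (σ : X → X → ℝ → X), IsGCB σ →
      IsPacked X P r₀ → ∀ Γ ≤ sigmaIsometries σ, ∀ x : X,
        ∃ ρ : ℝ, 0 ≤ ρ ∧ ρ ≤ 2 ∧ GoodRadius Γ x ρ τ := by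
  obtain ⟨n, hn⟩ := exists_uniform_pigeonhole_isometry.{u} P r₀ hr₀ 3 1 (1 / 200) (by norm_num)
  set τ : ℝ := 1 / (n + 1) with hτ
  have hτ0 : 0 < τ := by positivity
  have hτ1 : τ ≤ 1 := (div_le_one (by positivity)).2 (by linarith [n.cast_nonneg (α := ℝ)])
  refine ⟨τ, hτ0, fun X _ σ hσ hP Γ hΓ x => ?_⟩
  by_contra! hbad
  have hradius : ∀ i : Fin (n + 1), 0 ≤ 1 + i * τ ∧ 1 + i * τ ≤ 2 := fun i => by
    have hi : (i : ℝ) ≤ n + 1 := by exact_mod_cast i.2.le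
    have hiτ : i * τ ≤ 1 := by rwa [hτ, mul_one_div, div_le_one (by positivity)]
    exact ⟨by positivity, by linarith⟩
  choose k hkΓ hk p hpx hp using fun i : Fin (n + 1) =>
    exists_dist_gt_of_not_goodRadius hσ hΓ (hradius i).1 hτ0 hτ1
      (hbad _ (hradius i).1 (hradius i).2)
  have hp3 : ∀ i, dist (p i) x ≤ 3 := fun i => by linarith [hpx i, (hradius i).2]
  have hsep : ∀ i j, i < j → 1 / 200 < dist (k i (p i)) (k j (p i)) := fun i j hij => by
    refine hp i (k j) (hΓ (hkΓ j)) fun y hy => hk j y (hy.trans ?_)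
    have : ((i : ℝ) + 1) * τ ≤ j * τ :=
      mul_le_mul_of_nonneg_right (by exact_mod_cast hij) hτ0.le
    linarith
  obtain ⟨i, j, hij, hclose⟩ := hn X σ hσ hP x k fun i => by
    linarith [hk i x (by rw [dist_self]; exact (hradius i).1)]
  rcases lt_or_gt_of_ne hij with hlt | hlt
  · linarith [hsep i j hlt, hclose (p i) (hp3 i)]
  · linarith [hsep j i hlt, hclose (p j) (hp3 j), dist_comm (k i (p j)) (k j (p j))]

/-- The bound for the displacement of `g` in terms of a bound `τ / 100` for its first `j` iterated
squares. The factor `2 - (2 / 3) ^ j` absorbs the errors made by halving `j` times. -/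
noncomputable def iterateBound (τ : ℝ) (j : ℕ) : ℝ := τ / 100 * (2 - (2 / 3) ^ j) / 2 ^ j

theorem iterateBound_le {τ : ℝ} (hτ : 0 ≤ τ) (j : ℕ) :
    iterateBound τ j ≤ τ / 8 * (3 / 4) ^ j * (4 / 25 * (2 / 3) ^ j) := by
  have hpow : ((2 : ℝ) ^ j)⁻¹ = (3 / 4) ^ j * (2 / 3) ^ j := by
    rw [← mul_pow, ← inv_pow]
    norm_num
  calc iterateBound τ j ≤ τ / 100 * 2 / 2 ^ j := by
        unfold iterateBound
        gcongr
        linarith [pow_pos (by norm_num : (0 : ℝ) < 2 / 3) j]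
    _ = τ / 8 * (3 / 4) ^ j * (4 / 25 * (2 / 3) ^ j) := by
        rw [div_eq_mul_inv _ ((2 : ℝ) ^ j), hpow]
        ring

theorem iterateBound_mul_div_two_le {τ : ℝ} (hτ : 0 ≤ τ) (j : ℕ) :
    iterateBound τ j * (1 + 4 / 25 * (2 / 3) ^ j) / 2 ≤ iterateBound τ (j + 1) := by
  have hr : (0 : ℝ) < (2 / 3) ^ j := by positivity
  have hfactor : (2 - ((2 : ℝ) / 3) ^ j) * (1 + 4 / 25 * (2 / 3) ^ j) ≤ 2 - (2 / 3) ^ (j + 1) := by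
    rw [pow_succ]
    nlinarith [hr]
  calc iterateBound τ j * (1 + 4 / 25 * (2 / 3) ^ j) / 2
      = τ / 100 / 2 ^ (j + 1) * ((2 - (2 / 3) ^ j) * (1 + 4 / 25 * (2 / 3) ^ j)) := by
        rw [iterateBound, pow_succ]
        field_simp
    _ ≤ τ / 100 / 2 ^ (j + 1) * (2 - (2 / 3) ^ (j + 1)) := by gcongr
    _ = iterateBound τ (j + 1) := by rw [iterateBound, div_mul_eq_mul_div]

variable {X : Type u} [MetricSpace X] {σ : X → X → ℝ → X} {Γ : Subgroup (X ≃ᵢ X)} {x : X}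
  {ρ τ : ℝ}

theorem IsGCB.disp_le_of_disp_sq_le (hσ : IsGCB σ) {g : X ≃ᵢ X} (hg : IsSigmaIsometry σ g)
    {b c l : ℝ} (hl : 0 < l) (hc : c ≤ 2) (hb : b ≤ l * c)
    (hball : ∀ p, dist p x ≤ ρ + l → dist p (g p) ≤ b) {y : X} (hy : dist y x ≤ ρ)
    (hsq : dist y (g (g y)) ≤ b) : dist y (g y) ≤ b * (1 + c) / 2 := by
  have hyb : dist y (g y) ≤ b := hball y (by linarith)
  have hb0 : 0 ≤ b := dist_nonneg.trans hyb
  have herr : dist y (g y) * b / l ≤ b * c := by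
    rw [div_le_iff₀ hl, mul_assoc, mul_comm c]
    exact mul_le_mul hyb hb hb0 hb0
  have hlc : l * c ≤ l * 2 := mul_le_mul_of_nonneg_left hc hl.le
  linarith [hσ.two_mul_disp_le hg hl (by linarith) hball hy]

theorem IsGCB.disp_le_of_iterates (hσ : IsGCB σ) (hτ : 0 < τ) (j : ℕ) {g : X ≃ᵢ X}
    (hg : IsSigmaIsometry σ g)
    (hiter : ∀ i ≤ j, ∀ y, dist y x ≤ ρ + τ → dist y ((g ^ 2 ^ i) y) ≤ τ / 100) {y : X}
    (hy : dist y x ≤ ρ + τ - τ / 2 * (1 - (3 / 4) ^ j)) :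
    dist y (g y) ≤ iterateBound τ j := by
  induction j generalizing g y with
  | zero =>
    have := hiter 0 le_rfl y (by simpa using hy)
    norm_num [iterateBound] at this ⊢
    linarith
  | succ j ih =>
    have hball : ∀ {p}, dist p x ≤ ρ + τ - τ / 2 * (1 - (3 / 4) ^ j) →
        dist p (g p) ≤ iterateBound τ j := ih hg fun i hi => hiter i (by omega)
    have hball_sq : ∀ {p}, dist p x ≤ ρ + τ - τ / 2 * (1 - (3 / 4) ^ j) →
        dist p (g (g p)) ≤ iterateBound τ j :=
      ih ((sigmaIsometries σ).mul_mem hg hg) fun i hi p hp => by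
        have := hiter (i + 1) (by omega) p hp
        rwa [pow_succ', pow_mul, pow_two] at this
    rw [pow_succ] at hy
    have hl : 0 < τ / 8 * (3 / 4) ^ j := by positivity
    have hc : 4 / 25 * ((2 : ℝ) / 3) ^ j ≤ 2 := by
      linarith [pow_le_one₀ (n := j) (by norm_num : (0 : ℝ) ≤ 2 / 3) (by norm_num)]
    exact (hσ.disp_le_of_disp_sq_le hg hl hc (iterateBound_le hτ.le j)
      (fun p hp => hball (by linarith)) hy (hball_sq (by linarith))).trans
        (iterateBound_mul_div_two_le hτ.le j)

namespace GoodRadius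

theorem disp_le_of_pos (hσ : IsGCB σ) (hΓ : Γ ≤ sigmaIsometries σ) (hτ : 0 < τ)
    (h : GoodRadius Γ x ρ τ) {g : X ≃ᵢ X} (hg : g ∈ Γ) {β : ℝ} (hβ0 : 0 < β) (hβ : β ≤ τ / 800)
    (hgβ : ∀ y, dist y x ≤ ρ → dist y (g y) ≤ β) {y : X} (hy : dist y x ≤ ρ + τ / 2) :
    dist y (g y) ≤ 32 * β := by
  obtain ⟨j, hj, hj'⟩ := exists_nat_pow_near (x := τ / 800 / β) (y := (2 : ℝ))
    ((one_le_div hβ0).2 hβ) (by norm_num)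
  rw [le_div_iff₀ hβ0] at hj
  rw [div_lt_iff₀ hβ0, pow_succ] at hj'
  have hiter : ∀ i ≤ j, ∀ y, dist y x ≤ ρ + τ → dist y ((g ^ 2 ^ i) y) ≤ τ / 100 := by
    refine fun i hi => h _ (pow_mem hg _) fun y hy => ?_
    calc dist y ((g ^ 2 ^ i) y) ≤ (2 ^ i : ℕ) * dist y (g y) := dist_pow_apply_le g y _
      _ ≤ 2 ^ j * β := by
        push_cast
        exact mul_le_mul (pow_le_pow_right₀ (by norm_num) hi) (hgβ y hy) dist_nonneg (by positivity)
      _ ≤ τ / 800 := hj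
  have hradius : τ / 2 * (1 - (3 / 4) ^ j) ≤ τ / 2 * 1 := by
    gcongr
    linarith [pow_pos (by norm_num : (0 : ℝ) < 3 / 4) j]
  refine (hσ.disp_le_of_iterates hτ j (hΓ hg) hiter (y := y) (by linarith)).trans ?_
  rw [iterateBound, div_le_iff₀ (by positivity)]
  have : τ / 100 * (2 - (2 / 3) ^ j) ≤ τ / 100 * 2 := by
    gcongr
    linarith [pow_pos (by norm_num : (0 : ℝ) < 2 / 3) j]
  linarith

theorem disp_le (hσ : IsGCB σ) (hΓ : Γ ≤ sigmaIsometries σ) (hτ : 0 < τ)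
    (h : GoodRadius Γ x ρ τ) {g : X ≃ᵢ X} (hg : g ∈ Γ) {α : ℝ} (hα0 : 0 ≤ α) (hα : α ≤ τ / 800)
    (hgα : ∀ y, dist y x ≤ ρ → dist y (g y) ≤ α) {y : X} (hy : dist y x ≤ ρ + τ / 2) :
    dist y (g y) ≤ 32 * α := by
  rcases hα0.eq_or_lt with rfl | hα0
  · by_contra! hlt
    rw [mul_zero] at hlt
    have := h.disp_le_of_pos hσ hΓ hτ hg (β := min (τ / 800) (dist y (g y) / 64))
      (by positivity) (min_le_left _ _) (fun z hz => (hgα z hz).trans (by positivity)) hy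
    linarith [min_le_right (τ / 800) (dist y (g y) / 64)]
  · exact h.disp_le_of_pos hσ hΓ hτ hg hα0 hα hgα hy

end GoodRadius

/-- The supremum of the displacement of `g` on the ball of centre `x` and radius `ρ`: a norm on the
isometry group, which is almost homogeneous after normalization. -/
noncomputable def supDisp (x : X) (ρ : ℝ) (g : X ≃ᵢ X) : ℝ :=
  ⨆ y : {y : X // dist y x ≤ ρ}, dist y.1 (g y.1)

theorem le_supDisp (g : X ≃ᵢ X) {y : X} (hy : dist y x ≤ ρ) : dist y (g y) ≤ supDisp x ρ g := by
  refine le_ciSup (f := fun y : {y : X // dist y x ≤ ρ} => dist y.1 (g y.1))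
    ⟨dist x (g x) + 2 * ρ, ?_⟩ ⟨y, hy⟩
  rintro _ ⟨⟨z, hz⟩, rfl⟩
  dsimp only
  linarith [dist_apply_le_of_dist_le g z x]

theorem supDisp_le (hρ : 0 ≤ ρ) {g : X ≃ᵢ X} {b : ℝ} (h : ∀ y, dist y x ≤ ρ → dist y (g y) ≤ b) :
    supDisp x ρ g ≤ b := by
  have : Nonempty {y : X // dist y x ≤ ρ} := ⟨⟨x, by simpa using hρ⟩⟩
  exact ciSup_le fun y => h y.1 y.2

theorem supDisp_nonneg (x : X) (ρ : ℝ) (g : X ≃ᵢ X) : 0 ≤ supDisp x ρ g :=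
  Real.iSup_nonneg fun _ => dist_nonneg

theorem supDisp_one (x : X) (ρ : ℝ) : supDisp x ρ 1 = 0 := by simp [supDisp]

theorem supDisp_inv (x : X) (ρ : ℝ) (g : X ≃ᵢ X) : supDisp x ρ g⁻¹ = supDisp x ρ g := by
  simp only [supDisp, dist_inv_apply]

theorem supDisp_mul_le (hρ : 0 ≤ ρ) (g h : X ≃ᵢ X) :
    supDisp x ρ (g * h) ≤ supDisp x ρ g + supDisp x ρ h :=
  supDisp_le hρ fun y hy =>
    (dist_mul_apply_le g h y).trans (add_le_add (le_supDisp g hy) (le_supDisp h hy))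

namespace GoodRadius

theorem supDisp_conj_le (hσ : IsGCB σ) (hΓ : Γ ≤ sigmaIsometries σ) (hτ : 0 < τ)
    (hρ : 0 ≤ ρ) (h : GoodRadius Γ x ρ τ) {g k : X ≃ᵢ X} (hg : g ∈ Γ)
    (hgτ : supDisp x ρ g ≤ τ / 800) (hkτ : supDisp x ρ k ≤ τ / 800) :
    supDisp x ρ (k * g * k⁻¹) ≤ (1 + 64 / τ * supDisp x ρ k) * supDisp x ρ g := by
  refine supDisp_le hρ fun y hy => ?_
  rw [dist_conj_apply']
  have hyk : dist y (k⁻¹ y) ≤ supDisp x ρ k := by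
    rw [dist_inv_apply]
    exact le_supDisp k hy
  obtain ⟨p, hyp, -, hp⟩ := hσ.exists_extension_disp y (k⁻¹ y) (T := τ / 2) (by positivity)
    (by linarith)
  have hpg : dist p (g p) ≤ 32 * supDisp x ρ g :=
    h.disp_le hσ hΓ hτ hg (supDisp_nonneg x ρ g) hgτ (fun y hy => le_supDisp g hy)
      (by linarith [dist_triangle_left p x y])
  have hconv : τ / 2 * dist (k⁻¹ y) (g (k⁻¹ y)) ≤ (τ / 2 - dist y (k⁻¹ y)) * dist y (g y) +
      dist y (k⁻¹ y) * dist p (g p) := hp 1 g (one_mem (sigmaIsometries σ)) (hΓ hg)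
  have hy_term : (τ / 2 - dist y (k⁻¹ y)) * dist y (g y) ≤ τ / 2 * supDisp x ρ g :=
    mul_le_mul (sub_le_self _ dist_nonneg) (le_supDisp g hy) dist_nonneg (by positivity)
  have hp_term : dist y (k⁻¹ y) * dist p (g p) ≤ supDisp x ρ k * (32 * supDisp x ρ g) :=
    mul_le_mul hyk hpg dist_nonneg (supDisp_nonneg x ρ k)
  refine le_of_mul_le_mul_left (a := τ / 2) ?_ (by positivity)
  calc τ / 2 * dist (k⁻¹ y) (g (k⁻¹ y))
      ≤ τ / 2 * supDisp x ρ g + supDisp x ρ k * (32 * supDisp x ρ g) := by linarith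
    _ = τ / 2 * ((1 + 64 / τ * supDisp x ρ k) * supDisp x ρ g) := by
      field_simp
      ring

theorem two_mul_supDisp_le (hσ : IsGCB σ) (hΓ : Γ ≤ sigmaIsometries σ) (hτ : 0 < τ)
    (hρ : 0 ≤ ρ) (h : GoodRadius Γ x ρ τ) {g : X ≃ᵢ X} (hg : g ∈ Γ)
    (hgτ : supDisp x ρ g ≤ τ / 800) :
    2 * supDisp x ρ g ≤ supDisp x ρ (g * g) + 64 / τ * supDisp x ρ g ^ 2 := by
  rw [← le_div_iff₀' two_pos]
  refine supDisp_le hρ fun y hy => ?_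
  have hdouble := hσ.two_mul_disp_le (hΓ hg) (x := x) (y := y) (ρ := ρ) (l := τ / 2)
    (b := 32 * supDisp x ρ g) (by positivity) (by linarith)
    (fun p hp => h.disp_le hσ hΓ hτ hg (supDisp_nonneg x ρ g) hgτ (fun y hy => le_supDisp g hy) hp)
    hy
  have herr : dist y (g y) * (32 * supDisp x ρ g) / (τ / 2) ≤ 64 / τ * supDisp x ρ g ^ 2 := by
    have hs := supDisp_nonneg x ρ g
    calc dist y (g y) * (32 * supDisp x ρ g) / (τ / 2)
        ≤ supDisp x ρ g * (32 * supDisp x ρ g) / (τ / 2) := by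
          gcongr
          exact le_supDisp g hy
      _ = 64 / τ * supDisp x ρ g ^ 2 := by
          field_simp
          ring
  have hsq : dist y (g (g y)) ≤ supDisp x ρ (g * g) := le_supDisp (g * g) hy
  linarith

theorem isAlmostHomogeneous (hσ : IsGCB σ) (hΓ : Γ ≤ sigmaIsometries σ) (hτ : 0 < τ)
    (hρ : 0 ≤ ρ) (h : GoodRadius Γ x ρ τ) :
    IsAlmostHomogeneous (1 / 100) fun g : Γ => 64 / τ * supDisp x ρ (g : X ≃ᵢ X) := by
  have hscale : 0 ≤ 64 / τ := by positivity
  have hsmall : ∀ g : X ≃ᵢ X, 64 / τ * supDisp x ρ g ≤ 1 / 100 → supDisp x ρ g ≤ τ / 800 := by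
    intro g hg
    rw [div_mul_eq_mul_div, div_le_iff₀ hτ] at hg
    linarith
  refine ⟨fun g => mul_nonneg hscale (supDisp_nonneg _ _ _), by simp [supDisp_one],
    fun g => by simp [supDisp_inv], fun g k => ?_, fun g k hg hk => ?_, fun g hg => ?_⟩
  · rw [← mul_add]
    exact mul_le_mul_of_nonneg_left (supDisp_mul_le hρ _ _) hscale
  · rw [mul_left_comm]
    exact mul_le_mul_of_nonneg_left
      (h.supDisp_conj_le hσ hΓ hτ hρ g.2 (hsmall g hg) (hsmall k hk)) hscale
  · have := mul_le_mul_of_nonneg_left (h.two_mul_supDisp_le hσ hΓ hτ hρ g.2 (hsmall g hg)) hscale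
    rw [Subgroup.coe_mul]
    linarith

end GoodRadius

theorem exists_isVirtuallyNilpotent_of_small (P r₀ : ℝ) (hr₀ : 0 < r₀) :
    ∃ ε : ℝ, 0 < ε ∧ ∀ (X : Type u) [MetricSpace X] (σ : X → X → ℝ → X), IsGCB σ →
      IsPacked X P r₀ → ∀ Γ ≤ sigmaIsometries σ, IsDiscreteSubgroup Γ → ∀ x : X,
        IsVirtuallyNilpotent ↥(Subgroup.closure
          {g : X ≃ᵢ X | g ∈ Γ ∧ ∀ y, dist y x ≤ 2 → dist y (g y) ≤ ε}) := by
  obtain ⟨τ, hτ, hgood⟩ := exists_goodRadius.{u} P r₀ hr₀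
  refine ⟨τ / 64 * (1 / 10 ^ 12), by positivity, fun X _ σ hσ hP Γ hΓ hd x => ?_⟩
  set S := {g : X ≃ᵢ X | g ∈ Γ ∧ ∀ y, dist y x ≤ 2 → dist y (g y) ≤ τ / 64 * (1 / 10 ^ 12)}
  set Λ := Subgroup.closure S
  have hΛΓ : Λ ≤ Γ := (Subgroup.closure_le _).2 fun g hg => hg.1
  obtain ⟨ρ, hρ0, hρ2, hρ⟩ := hgood X σ hσ hP Λ (hΛΓ.trans hΓ) x
  have hscale : ∀ g : X ≃ᵢ X, 64 / τ * supDisp x ρ g ≤ 1 / 10 ^ 12 ↔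
      supDisp x ρ g ≤ τ / 64 * (1 / 10 ^ 12) := fun g => by
    rw [← inv_div, inv_mul_le_iff₀ (by positivity)]
  refine (hρ.isAlmostHomogeneous hσ (hΛΓ.trans hΓ) hτ hρ0).isVirtuallyNilpotent
    (ε := 1 / 10 ^ 12) (by norm_num) le_rfl ?_ ?_
  · refine Set.Finite.of_finite_image (f := Subtype.val)
      ((hd x (τ / 64 * (1 / 10 ^ 12))).subset ?_) Subtype.val_injective.injOn
    rintro _ ⟨g, hg, rfl⟩
    exact ⟨hΛΓ g.2, (le_supDisp g.1 (y := x) (by simpa using hρ0)).trans ((hscale g).1 hg)⟩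
  · rw [levelSubgroup, eq_top_iff, ← Subgroup.closure_closure_coe_preimage (k := S)]
    exact Subgroup.closure_mono fun g hg =>
      (hscale g).2 (supDisp_le hρ0 fun y hy => hg.2 y (hy.trans hρ2))

theorem exists_isVirtuallyNilpotent_of_wordBall (P r₀ : ℝ) (hr₀ : 0 < r₀) (r : ℝ) :
    ∃ n : ℕ, ∀ (X : Type u) [MetricSpace X] (σ : X → X → ℝ → X), IsGCB σ →
      IsPacked X P r₀ → ∀ S : Set (X ≃ᵢ X), S ⊆ sigmaIsometries σ →
        IsDiscreteSubgroup (Subgroup.closure S) → ∀ x : X,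
          (∀ g ∈ wordBall S n, dist x (g x) ≤ r) → IsVirtuallyNilpotent ↥(Subgroup.closure S) := by
  obtain ⟨ε, hε, hsmall⟩ := exists_isVirtuallyNilpotent_of_small.{u} P r₀ hr₀
  obtain ⟨n, hn⟩ := exists_uniform_pigeonhole_isometry.{u} P r₀ hr₀ 2 r ε hε
  refine ⟨n, fun X _ σ hσ hP S hS hd x hx => ?_⟩
  set Λ := Subgroup.closure
    {g : X ≃ᵢ X | g ∈ Subgroup.closure S ∧ ∀ y, dist y x ≤ 2 → dist y (g y) ≤ ε}
  have hΛ : IsVirtuallyNilpotent Λ := hsmall X σ hσ hP _ ((Subgroup.closure_le _).2 hS) hd x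
  suffices hindex : Λ.relIndex (Subgroup.closure S) ≠ 0 from
    hΛ.of_relIndex_ne_zero ((Subgroup.closure_le _).2 fun g hg => hg.1) hindex
  intro hindex
  obtain ⟨F, hcard, -, hball, hsep⟩ := exists_coset_separated_subset_wordBall hindex n
  have e := F.equivFinOfCardEq hcard
  obtain ⟨i, j, hij, hclose⟩ := hn X σ hσ hP x (fun i => (e.symm i : X ≃ᵢ X)) fun i =>
    hx _ (hball _ (e.symm i).2)
  refine hij (e.symm.injective (Subtype.ext (hsep _ (e.symm i).2 _ (e.symm j).2 ?_)))
  refine Subgroup.subset_closure ⟨mul_mem (inv_mem ?_) ?_, fun y hy => ?_⟩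
  · exact wordBall_subset_closure _ (hball _ (e.symm i).2)
  · exact wordBall_subset_closure _ (hball _ (e.symm j).2)
  · rw [IsometryEquiv.mul_apply, dist_inv_right]
    exact hclose y hy

theorem exists_margulis_constant (P r₀ : ℝ) (hr₀ : 0 < r₀) :
    ∃ ε : ℝ, 0 < ε ∧ ∀ (X : Type u) [MetricSpace X] (σ : X → X → ℝ → X), IsGCB σ →
      IsPacked X P r₀ → ∀ g h : X ≃ᵢ X, IsSigmaIsometry σ g → IsSigmaIsometry σ h →
        IsDiscreteSubgroup (Subgroup.closure {g, h}) → ∀ x : X,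
          dist x (g x) ≤ ε → dist x (h x) ≤ ε →
            IsVirtuallyNilpotent ↥(Subgroup.closure ({g, h} : Set (X ≃ᵢ X))) := by
  obtain ⟨n, hn⟩ := exists_isVirtuallyNilpotent_of_wordBall.{u} P r₀ hr₀ 1
  refine ⟨1 / (n + 1), by positivity, fun X _ σ hσ hP g h hg hh hd x hgx hhx => ?_⟩
  refine hn X σ hσ hP {g, h} (Set.pair_subset hg hh) hd x fun w hw => ?_
  calc dist x (w x) ≤ n * (1 / (n + 1)) :=
        dist_le_of_mem_wordBall (by positivity) (by rintro _ (rfl | rfl) <;> assumption) hw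
    _ ≤ 1 := by
        rw [mul_one_div, div_le_one (by positivity)]
        linarith

end LocalNilpotency

/-! ### Gromov products and ping-pong -/

section GromovProduct

variable {X : Type*} [MetricSpace X] {δ : ℝ}

/-- The Gromov product `(p | q)_z` of `p` and `q` seen from `z`, which is roughly the distance from
`z` to a geodesic between `p` and `q`. -/
noncomputable def gromovProd (z p q : X) : ℝ := (dist z p + dist z q - dist p q) / 2

theorem gromovProd_comm (z p q : X) : gromovProd z p q = gromovProd z q p := by
  unfold gromovProd
  rw [dist_comm p q]
  ring

theorem gromovProd_nonneg (z p q : X) : 0 ≤ gromovProd z p q := by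
  unfold gromovProd
  have := dist_triangle_left p q z
  linarith

theorem gromovProd_le_left (z p q : X) : gromovProd z p q ≤ dist z p := by
  unfold gromovProd
  have := dist_triangle z p q
  linarith

theorem gromovProd_le_right (z p q : X) : gromovProd z p q ≤ dist z q := by
  rw [gromovProd_comm]; exact gromovProd_le_left z q p

theorem gromovProd_self (z p : X) : gromovProd z p p = dist z p := by
  unfold gromovProd
  rw [dist_self]; ring

theorem gromovProd_map (g : X ≃ᵢ X) (z p q : X) :
    gromovProd (g z) (g p) (g q) = gromovProd z p q := by
  unfold gromovProd
  simp only [g.isometry.dist_eq]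

theorem gromovProd_map_right (g : X ≃ᵢ X) (z p : X) :
    gromovProd z (g p) (g z) = dist z (g z) - gromovProd z p (g⁻¹ z) := by
  unfold gromovProd
  rw [g.isometry.dist_eq, dist_inv_apply, dist_inv_right, dist_comm z p, dist_comm (g p) z]
  ring

theorem gromovProd_add_gromovProd (p o y : X) :
    gromovProd p o y + gromovProd o p y = dist o p := by
  unfold gromovProd
  rw [dist_comm p o, dist_comm p y]
  ring

theorem abs_gromovProd_sub_le (z p q q' : X) :
    |gromovProd z p q - gromovProd z p q'| ≤ dist q q' := by
  unfold gromovProd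
  have hz := abs_le.1 (abs_dist_sub_le q q' z)
  have hp := abs_le.1 (abs_dist_sub_le q q' p)
  rw [dist_comm z q, dist_comm z q', dist_comm p q, dist_comm p q', abs_le]
  constructor <;> linarith [hz.1, hz.2, hp.1, hp.2]

theorem abs_gromovProd_sub_le_base (z z' p q : X) :
    |gromovProd z p q - gromovProd z' p q| ≤ dist z z' := by
  unfold gromovProd
  have hp := abs_le.1 (abs_dist_sub_le z z' p)
  have hq := abs_le.1 (abs_dist_sub_le z z' q)
  rw [abs_le]
  constructor <;> linarith [hp.1, hp.2, hq.1, hq.2]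

theorem gromovProd_le_add (z p q p' q' : X) :
    gromovProd z p q ≤ gromovProd z p' q' + dist p p' + dist q q' := by
  have hq := abs_le.1 (abs_gromovProd_sub_le z p q q')
  have hp := abs_le.1 (abs_gromovProd_sub_le z q' p p')
  rw [gromovProd_comm z q' p, gromovProd_comm z q' p'] at hp
  linarith [hq.2, hp.2]

theorem IsDeltaHyperbolic.min_gromovProd_le (hX : IsDeltaHyperbolic X δ) (z p q r : X) :
    min (gromovProd z p q) (gromovProd z q r) ≤ gromovProd z p r + δ := by
  have h := hX z q p r
  unfold gromovProd
  rw [min_le_iff]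
  rcases le_max_iff.1 (show dist z q + dist p r - 2 * δ ≤
    max (dist z p + dist q r) (dist z r + dist q p) by linarith) with h | h
  · right; linarith
  · left; rw [dist_comm p q]; linarith

theorem IsDeltaHyperbolic.gromovProd_le (hX : IsDeltaHyperbolic X δ) {z p q r : X} {D : ℝ}
    (h : D + δ < gromovProd z p q) (h' : gromovProd z q r ≤ D) : gromovProd z p r ≤ D + δ := by
  have := hX.min_gromovProd_le z q p r
  rw [gromovProd_comm z q p] at this
  rcases min_le_iff.1 this with hpr | hpr <;> linarith

theorem IsDeltaHyperbolic.sub_le_gromovProd_map (hX : IsDeltaHyperbolic X δ) {z p q : X}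
    {g : X ≃ᵢ X} {D : ℝ} (h : D + δ < gromovProd z p q) (h' : gromovProd z q (g⁻¹ z) ≤ D) :
    dist z (g z) - D - δ ≤ gromovProd z (g p) (g z) := by
  rw [gromovProd_map_right]
  linarith [hX.gromovProd_le h h']

end GromovProduct

section PingPong

theorem injective_of_forall_map_of_mul {α M : Type*} [Nontrivial α] [LeftCancelMonoid M]
    {f : FreeMonoid α →* M}
    (hf : ∀ i j m n, f (FreeMonoid.of i * m) = f (FreeMonoid.of j * n) → i = j) :
    Function.Injective f := by
  have hne : ∀ i m, f (FreeMonoid.of i * m) ≠ 1 := by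
    intro i m him
    obtain ⟨j, hj⟩ := exists_ne i
    exact hj (hf i j (m * FreeMonoid.of j) 1
      (by rw [← mul_assoc, map_mul, him, one_mul, mul_one])).symm
  intro m
  induction m using FreeMonoid.inductionOn' with
  | one =>
    intro n h
    cases n using FreeMonoid.casesOn with
    | one => rfl
    | of_mul j n => exact absurd (h.symm.trans (map_one f)) (hne j n)
  | of_mul i m ih =>
    intro n h
    cases n using FreeMonoid.casesOn with
    | one => exact absurd (h.trans (map_one f)) (hne i m)
    | of_mul j n =>
      obtain rfl := hf i j m n h
      rw [map_mul, map_mul] at h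
      rw [ih (mul_left_cancel h)]

/-- The ping-pong configuration for a pair of isometries: it forces the pair to generate a free
semigroup. Only positive words are played, so no attracting sets of the inverses are needed. -/
def IsPingPong {X : Type*} [PseudoEMetricSpace X] (u w : X ≃ᵢ X) : Prop :=
  ∃ A W : Set X, Disjoint A W ∧ W.Nonempty ∧ Set.MapsTo u (A ∪ W) A ∧ Set.MapsTo w (A ∪ W) W

namespace IsPingPong

variable {X : Type*} [PseudoEMetricSpace X] {u v w : X ≃ᵢ X}

theorem pow_left (h : IsPingPong u w) {n : ℕ} (hn : n ≠ 0) : IsPingPong (u ^ n) w := by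
  obtain ⟨A, W, hd, hne, hu, hw⟩ := h
  refine ⟨A, W, hd, hne, ?_, hw⟩
  induction n, Nat.one_le_iff_ne_zero.2 hn using Nat.le_induction with
  | base => simpa using hu
  | succ n hn' ih =>
    rw [pow_succ']
    exact fun p hp => hu (Or.inl (ih (by omega) hp))

theorem symm (h : IsPingPong u w) : IsPingPong w u := by
  obtain ⟨A, W, hd, ⟨p, hp⟩, hu, hw⟩ := h
  rw [Set.union_comm] at hu hw
  exact ⟨W, A, hd.symm, ⟨u p, hu (Or.inl hp)⟩, hw, hu⟩

theorem pow_right (h : IsPingPong u w) {n : ℕ} (hn : n ≠ 0) : IsPingPong u (w ^ n) :=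
  (h.symm.pow_left hn).symm

theorem mul_mul (h : IsPingPong u w) : IsPingPong (u * w) (w * u) := by
  obtain ⟨A, W, hd, hne, hu, hw⟩ := h
  exact ⟨A, W, hd, hne, fun p hp => hu (Or.inr (hw hp)), fun p hp => hw (Or.inl (hu hp))⟩

theorem conj (h : IsPingPong u w) (g : X ≃ᵢ X) :
    IsPingPong (g * u * g⁻¹) (g * w * g⁻¹) := by
  obtain ⟨A, W, hd, hne, hu, hw⟩ := h
  refine ⟨g '' A, g '' W, (Set.disjoint_image_iff g.injective).2 hd, hne.image _, ?_, ?_⟩ <;>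
    rw [← Set.image_union]
  · rintro _ ⟨p, hp, rfl⟩
    exact ⟨u p, hu hp, by simp [IsometryEquiv.mul_apply]⟩
  · rintro _ ⟨p, hp, rfl⟩
    exact ⟨w p, hw hp, by simp [IsometryEquiv.mul_apply]⟩

theorem ne (h : IsPingPong u w) : u ≠ w := by
  rintro rfl
  obtain ⟨A, W, hd, ⟨p, hp⟩, hu, hw⟩ := h
  exact Set.disjoint_left.1 hd (hu (Or.inr hp)) (hw (Or.inr hp))

theorem injective (h : IsPingPong u w) :
    Function.Injective (FreeMonoid.lift fun i : Bool => if i then u else w) := by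
  obtain ⟨A, W, hd, ⟨p, hp⟩, hu, hw⟩ := h
  set f := FreeMonoid.lift fun i : Bool => if i then u else w
  have hof : ∀ i m, f (FreeMonoid.of i * m) = (if i then u else w) * f m := fun i m => by
    rw [map_mul, FreeMonoid.lift_eval_of]
  have hunion : ∀ m, f m p ∈ A ∪ W := by
    intro m
    induction m using FreeMonoid.inductionOn' with
    | one => exact Or.inr (by rwa [map_one])
    | of_mul i m ih =>
      rw [hof]
      cases i
      exacts [Or.inr (hw ih), Or.inl (hu ih)]
  have hmem : ∀ i m, f (FreeMonoid.of i * m) p ∈ if i then A else W := by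
    intro i m
    rw [hof]
    cases i
    exacts [hw (hunion m), hu (hunion m)]
  refine injective_of_forall_map_of_mul fun i j m n h => ?_
  have hi := hmem i m
  have hj := hmem j n
  rw [h] at hi
  cases i <;> cases j
  exacts [rfl, (Set.disjoint_left.1 hd hj hi).elim, (Set.disjoint_left.1 hd hi hj).elim, rfl]

theorem of_mapsTo_pow {B C : Set X} (hd : Disjoint B C) (hC : C.Nonempty)
    (hu : ∀ m : ℕ, m ≠ 0 → Set.MapsTo (u ^ m) C B) (hv : Set.MapsTo v B C) {n : ℕ} (hn : n ≠ 0) :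
    IsPingPong (u ^ n) (v * u) := by
  refine ⟨⋃ k ∈ {k : ℕ | k ≠ 0}, (u ^ (k * n)) '' C, C, ?_, hC, ?_, ?_⟩
  · simp only [Set.disjoint_iUnion_left]
    exact fun k hk => hd.mono_left (hu _ (mul_ne_zero hk hn)).image_subset
  · simp only [Set.MapsTo, Set.mem_union, Set.mem_iUnion₂]
    rintro _ (⟨k, -, c, hc, rfl⟩ | hp)
    · refine ⟨k + 1, Nat.succ_ne_zero k, c, hc, ?_⟩
      rw [← IsometryEquiv.mul_apply, ← pow_add, add_comm n, Nat.succ_mul]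
    · exact ⟨1, one_ne_zero, _, hp, by rw [one_mul]⟩
  · simp only [Set.MapsTo, Set.mem_union, Set.mem_iUnion₂]
    rintro _ (⟨k, -, c, hc, rfl⟩ | hp)
    · rw [IsometryEquiv.mul_apply, ← IsometryEquiv.mul_apply u, ← pow_succ']
      exact hv (hu _ (Nat.succ_ne_zero _) hc)
    · exact hv (by simpa using hu 1 one_ne_zero hp)

theorem not_isNilpotent (h : IsPingPong u w) {H : Subgroup (X ≃ᵢ X)} (hu : u ∈ H)
    (hw : w ∈ H) : ¬ Group.IsNilpotent H := by
  rw [Subgroup.isNilpotent_iff_lowerCentralSeries]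
  rintro ⟨n, hn⟩
  have hpair : ∀ n, ∃ x ∈ H, ∃ y ∈ H, IsPingPong x y ∧ x * y⁻¹ ∈ H.lowerCentralSeries n := by
    intro n
    induction n with
    | zero => exact ⟨u, hu, w, hw, h, mul_mem hu (inv_mem hw)⟩
    | succ n ih =>
      obtain ⟨x, hx, y, hy, hxy, hl⟩ := ih
      refine ⟨x * y, mul_mem hx hy, y * x, mul_mem hy hx, hxy.mul_mul, ?_⟩
      have := Subgroup.commutator_mem_commutator hl hy
      rw [Subgroup.lowerCentralSeries_succ]
      convert this using 1
      rw [commutatorElement_def]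
      group
  obtain ⟨x, -, y, -, hxy, hl⟩ := hpair n
  rw [hn, Subgroup.mem_bot, mul_inv_eq_one] at hl
  exact hxy.ne hl

theorem not_isVirtuallyNilpotent (h : IsPingPong u w) {K : Subgroup (X ≃ᵢ X)}
    (hu : u ∈ K) (hw : w ∈ K) : ¬ IsVirtuallyNilpotent ↥K := by
  rw [isVirtuallyNilpotent_subgroup_iff]
  rintro ⟨H, -, hi, hH⟩
  obtain ⟨n, hn, -, hun⟩ := Subgroup.exists_pow_mem_of_relIndex_ne_zero hi hu
  obtain ⟨m, hm, -, hwm⟩ := Subgroup.exists_pow_mem_of_relIndex_ne_zero hi hw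
  exact ((h.pow_left hn.ne').pow_right hm.ne').not_isNilpotent hun.1 hwm.1 hH

end IsPingPong

variable {X : Type*} [MetricSpace X] {δ D R : ℝ} {u v w : X ≃ᵢ X} {z : X}

/-- The union of the shadows of the nontrivial orbit points `u ^ k • z`, as seen from `z`: it
contains the points `p` that are at Gromov product larger than `R` with one of them. -/
def orbitShadow (u : X ≃ᵢ X) (z : X) (R : ℝ) : Set X :=
  {p | ∃ k : ℤ, k ≠ 0 ∧ R < gromovProd z p ((u ^ k) z)}

theorem apply_mem_orbitShadow (hu : R < dist z (u z)) : u z ∈ orbitShadow u z R :=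
  ⟨1, one_ne_zero, by rwa [zpow_one, gromovProd_self]⟩

namespace IsDeltaHyperbolic

variable (hX : IsDeltaHyperbolic X δ)
include hX

theorem mapsTo_zpow_orbitShadow (hδ : 0 ≤ δ)
    (huv : ∀ j k : ℤ, j ≠ 0 → k ≠ 0 → gromovProd z ((u ^ j) z) ((v ^ k) z) ≤ D)
    (hu : ∀ j : ℤ, j ≠ 0 → 2 * D + 6 * δ < dist z ((u ^ j) z)) {m : ℤ} (hm : m ≠ 0) :
    Set.MapsTo (u ^ m) (orbitShadow v z (D + 2 * δ)) (orbitShadow u z (D + 2 * δ)) := by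
  rintro p ⟨k, hk, hp⟩
  have huvm := huv (-m) k (neg_ne_zero.2 hm) hk
  rw [zpow_neg, gromovProd_comm] at huvm
  have := hX.sub_le_gromovProd_map (g := u ^ m) (p := p) (by linarith) huvm
  exact ⟨m, hm, by linarith [hu m hm]⟩

theorem disjoint_orbitShadow (hδ : 0 ≤ δ)
    (huv : ∀ j k : ℤ, j ≠ 0 → k ≠ 0 → gromovProd z ((u ^ j) z) ((v ^ k) z) ≤ D) :
    Disjoint (orbitShadow u z (D + 2 * δ)) (orbitShadow v z (D + 2 * δ)) := by
  rw [Set.disjoint_left]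
  rintro p ⟨j, hj, hpj⟩ ⟨k, hk, hpk⟩
  linarith [hX.gromovProd_le (by linarith) (huv j k hj hk)]

theorem isPingPong_pow_mul (hδ : 0 ≤ δ)
    (huv : ∀ j k : ℤ, j ≠ 0 → k ≠ 0 → gromovProd z ((u ^ j) z) ((v ^ k) z) ≤ D)
    (hu : ∀ j : ℤ, j ≠ 0 → 2 * D + 6 * δ < dist z ((u ^ j) z))
    (hv : ∀ j : ℤ, j ≠ 0 → 2 * D + 6 * δ < dist z ((v ^ j) z)) {n : ℕ} (hn : n ≠ 0) :
    IsPingPong (u ^ n) (v * u) := by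
  have hD : 0 ≤ D := (gromovProd_nonneg _ _ _).trans (huv 1 1 one_ne_zero one_ne_zero)
  have hvu : ∀ j k : ℤ, j ≠ 0 → k ≠ 0 → gromovProd z ((v ^ j) z) ((u ^ k) z) ≤ D :=
    fun j k hj hk => by rw [gromovProd_comm]; exact huv k j hk hj
  have hv1 := hv 1 one_ne_zero
  rw [zpow_one] at hv1
  refine .of_mapsTo_pow (hX.disjoint_orbitShadow hδ huv)
    ⟨v z, apply_mem_orbitShadow (by linarith)⟩ (fun m hm => ?_) ?_ hn
  · simpa using hX.mapsTo_zpow_orbitShadow hδ huv hu (Int.natCast_ne_zero.2 hm)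
  · simpa using hX.mapsTo_zpow_orbitShadow hδ hvu hv one_ne_zero

theorem isPingPong (hδ : 0 ≤ δ) (huu : gromovProd z (u z) (u⁻¹ z) ≤ D)
    (hww : gromovProd z (w z) (w⁻¹ z) ≤ D)
    (huw' : gromovProd z (u z) (w⁻¹ z) ≤ D) (hwu' : gromovProd z (w z) (u⁻¹ z) ≤ D)
    (huw : gromovProd z (u z) (w z) ≤ D) (hu : 2 * D + 5 * δ < dist z (u z))
    (hw : 2 * D + 5 * δ < dist z (w z)) : IsPingPong u w := by
  have hD : 0 ≤ D := (gromovProd_nonneg _ _ _).trans huu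
  refine ⟨{p | D + δ < gromovProd z p (u z)}, {p | D + δ < gromovProd z p (w z)},
    Set.disjoint_left.2 fun p hp hp' => ?_, ⟨w z, ?_⟩, ?_, ?_⟩
  · exact (hX.gromovProd_le hp huw).not_gt hp'
  · rw [Set.mem_ofPred_eq, gromovProd_self]
    linarith
  all_goals
    rintro p (hp | hp)
    all_goals
      rw [Set.mem_ofPred_eq] at hp ⊢
  · linarith [hX.sub_le_gromovProd_map hp huu]
  · linarith [hX.sub_le_gromovProd_map hp hwu']
  · linarith [hX.sub_le_gromovProd_map hp huw']
  · linarith [hX.sub_le_gromovProd_map hp hww]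

end IsDeltaHyperbolic

end PingPong

/-! ### Coarse axes -/

section Hyperbolic

variable {X : Type*} [MetricSpace X] {δ : ℝ} {σ : X → X → ℝ → X}

theorem IsDeltaHyperbolic.disp_le (hX : IsDeltaHyperbolic X δ) (hδ : 0 ≤ δ) (g : X ≃ᵢ X)
    {z t q : X} {α β κ : ℝ}
    (hz : dist z (g z) ≤ α) (ht : dist t (g t) ≤ β) (hq : gromovProd q z t ≤ κ)
    (hzq : α + β + 2 * κ ≤ 2 * dist z q) : dist q (g q) ≤ β + 2 * κ + 4 * δ := by
  unfold gromovProd at hq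
  have hfour := hX q (g q) z t
  have hfour' := hX (g q) z (g z) t
  have hgqt := dist_triangle (g q) (g t) t
  have hzgz := dist_triangle z (g z) t
  have hzt := dist_triangle z t (g z)
  have hzgt := dist_triangle z (g t) t
  have hgzt := dist_triangle (g z) t (g t)
  rw [g.isometry.dist_eq] at hgqt hgzt
  rw [dist_comm (g t) t] at hgqt
  rw [g.isometry.dist_eq] at hfour'
  have hqz := dist_comm q z
  have := dist_nonneg (x := q) (y := g q)
  rcases le_max_iff.1 (show dist q (g q) + dist z t - 2 * δ ≤
    max (dist q z + dist (g q) t) (dist q t + dist (g q) z) by linarith) with h | h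
  · linarith
  · rcases le_max_iff.1 (show dist (g q) z + dist (g z) t - 2 * δ ≤
      max (dist q z + dist z t) (dist (g q) t + dist z (g z)) by linarith) with h' | h'
    · linarith
    · linarith

theorem IsDeltaHyperbolic.le_dist_of_chain (hX : IsDeltaHyperbolic X δ) {p u v q : X} {α β : ℝ}
    (hu : gromovProd u p v ≤ α) (hv : gromovProd v u q ≤ β) (huv : α + β + δ < dist u v) :
    dist p u + dist u v + dist v q - 2 * α - 2 * β - 2 * δ ≤ dist p q := by
  have hsum := gromovProd_add_gromovProd v u p
  rw [gromovProd_comm u v p] at hsum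
  have hvp := hX.gromovProd_le (z := v) (p := p) (q := u) (r := q) (D := β)
    (by rw [gromovProd_comm]; linarith) hv
  unfold gromovProd at hvp hu
  linarith [dist_comm u p, dist_comm v p]

theorem IsGCB.exists_dist_eq (hσ : IsGCB σ) (x y : X) {s : ℝ} (hs : 0 ≤ s) (hs' : s ≤ dist x y) :
    ∃ l ∈ Set.Icc (0 : ℝ) 1, dist x (σ x y l) = s ∧ dist (σ x y l) y = dist x y - s := by
  rcases eq_or_lt_of_le (dist_nonneg (x := x) (y := y)) with h | h
  · have : s = 0 := by linarith
    refine ⟨0, by simp, ?_, ?_⟩ <;> simp [hσ.source, this]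
  · have hl : s / dist x y ∈ Set.Icc (0 : ℝ) 1 := ⟨by positivity, (div_le_one h).2 hs'⟩
    refine ⟨_, hl, ?_, ?_⟩
    · rw [hσ.dist_source _ _ hl, div_mul_cancel₀ _ h.ne']
    · rw [hσ.dist_target _ _ hl, sub_mul, div_mul_cancel₀ _ h.ne', one_mul]

theorem IsDeltaHyperbolic.exists_dist_le_gromovProd (hX : IsDeltaHyperbolic X δ) (hσ : IsGCB σ)
    (o p t : X) : ∃ l ∈ Set.Icc (0 : ℝ) 1, dist o (σ p t l) ≤ gromovProd o p t + 2 * δ := by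
  obtain ⟨l, hl, hpl, hlt⟩ := hσ.exists_dist_eq p t (gromovProd_nonneg p o t)
    (gromovProd_le_right p o t)
  refine ⟨l, hl, ?_⟩
  have h := hX o (σ p t l) p t
  unfold gromovProd at *
  rw [dist_comm p o] at *
  rw [dist_comm p (σ p t l)] at hpl
  rcases max_choice (dist o p + dist (σ p t l) t) (dist o t + dist (σ p t l) p) with h' | h' <;>
  · rw [h'] at h
    linarith

theorem IsDeltaHyperbolic.busemann_sub_le (hX : IsDeltaHyperbolic X δ) {u v s t : X}
    (h : dist u v ≤ gromovProd u s t) :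
    dist v t - dist u t ≤ dist v s - dist u s + 2 * δ := by
  have hmin := hX.min_gromovProd_le u v s t
  have hle := gromovProd_le_left u v s
  rw [min_eq_left (hle.trans h)] at hmin
  unfold gromovProd at hmin
  linarith

end Hyperbolic

section AxisPoint

variable {X : Type*} [MetricSpace X] {δ : ℝ} {σ : X → X → ℝ → X} {h : X ≃ᵢ X} {t : X}

/-- A point moved a large distance by `h`, whose orbit under `h` is almost straight. This orbit
plays the role of an axis of `h`. -/
structure IsAxisPoint (δ : ℝ) (h : X ≃ᵢ X) (t : X) : Prop where
  large : 1000 * δ ≤ dist t (h t)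
  straight : gromovProd t (h t) (h⁻¹ t) ≤ δ

theorem IsGCB.isAxisPoint (hσ : IsGCB σ) (hh : IsSigmaIsometry σ h)
    (hl : 1000 * δ ≤ transLength h) (ht : dist t (h t) ≤ transLength h + δ) :
    IsAxisPoint δ h t := by
  refine ⟨hl.trans (transLength_le h t), ?_⟩
  obtain ⟨m, -, hm⟩ := hσ.midpoint_disp_le hh t
  have hmin := transLength_le h m
  have hmap := gromovProd_map h t (h t) (h⁻¹ t)
  rw [IsometryEquiv.apply_inv_self] at hmap
  rw [← hmap]
  unfold gromovProd
  rw [h.isometry.dist_eq, dist_comm (h t) t, dist_comm (h (h t)) t]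
  linarith

namespace IsAxisPoint

theorem inv (ht : IsAxisPoint δ h t) : IsAxisPoint δ h⁻¹ t :=
  ⟨by rw [dist_inv_apply]; exact ht.large, by rw [inv_inv, gromovProd_comm]; exact ht.straight⟩

theorem map (ht : IsAxisPoint δ h t) (g : X ≃ᵢ X) : IsAxisPoint δ (g * h * g⁻¹) (g t) := by
  refine ⟨by rw [dist_conj_apply]; exact ht.large, ?_⟩
  have : (g * h * g⁻¹)⁻¹ (g t) = g (h⁻¹ t) := by
    simp [IsometryEquiv.mul_apply]
  rw [this, show (g * h * g⁻¹) (g t) = g (h t) by simp [IsometryEquiv.mul_apply], gromovProd_map]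
  exact ht.straight

theorem zpow_apply (ht : IsAxisPoint δ h t) (k : ℤ) : IsAxisPoint δ h ((h ^ k) t) := by
  have := ht.map (h ^ k)
  rwa [← zpow_add_one, ← zpow_neg, ← zpow_add, show k + 1 + -k = 1 by ring, zpow_one] at this

variable (hX : IsDeltaHyperbolic X δ) (hδ : 0 < δ)
include hX hδ

theorem gromovProd_inv_le (ht : IsAxisPoint δ h t) (k : ℕ) :
    gromovProd t ((h ^ (k + 1)) t) (h⁻¹ t) ≤ 2 * δ ∧
      dist t (h t) - 2 * δ ≤ gromovProd t ((h ^ (k + 1)) t) (h t) := by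
  induction k with
  | zero =>
    rw [zero_add, pow_one, gromovProd_self]
    exact ⟨by linarith [ht.straight], by linarith⟩
  | succ k ih =>
    have hmap := gromovProd_map_right h t ((h ^ (k + 1)) t)
    rw [← IsometryEquiv.mul_apply, ← pow_succ'] at hmap
    have hfwd : dist t (h t) - 2 * δ ≤ gromovProd t ((h ^ (k + 1 + 1)) t) (h t) := by
      linarith [ih.1]
    refine ⟨?_, hfwd⟩
    have := hX.gromovProd_le (p := (h ^ (k + 1 + 1)) t) (D := δ) (by linarith [ht.large])
      ht.straight
    linarith

theorem gromovProd_zpow_ge (ht : IsAxisPoint δ h t) {k : ℤ} (hk : 0 < k) :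
    dist t (h t) - 2 * δ ≤ gromovProd t ((h ^ k) t) (h t) := by
  obtain ⟨n, rfl⟩ : ∃ n : ℕ, k = ((n + 1 : ℕ) : ℤ) := ⟨k.toNat - 1, by omega⟩
  rw [zpow_natCast]
  exact (ht.gromovProd_inv_le hX hδ n).2

theorem gromovProd_zpow_neg_le (ht : IsAxisPoint δ h t) {i j : ℤ} (hi : 0 < i) (hj : j < 0) :
    gromovProd t ((h ^ i) t) ((h ^ j) t) ≤ 3 * δ := by
  obtain ⟨n, rfl⟩ : ∃ n : ℕ, i = ((n + 1 : ℕ) : ℤ) := ⟨i.toNat - 1, by omega⟩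
  have hback := (ht.gromovProd_inv_le hX hδ n).1
  have hfwd := ht.inv.gromovProd_zpow_ge hX hδ (k := -j) (by omega)
  rw [inv_zpow, zpow_neg, inv_inv, dist_inv_apply] at hfwd
  rw [zpow_natCast, gromovProd_comm]
  rw [gromovProd_comm] at hback
  have := hX.gromovProd_le (p := (h ^ j) t) (D := 2 * δ) (by linarith [ht.large]) hback
  linarith

theorem gromovProd_zpow_zpow_ge (ht : IsAxisPoint δ h t) {i j : ℤ} (hi : 0 < i) (hij : i ≤ j) :
    dist t ((h ^ i) t) - 3 * δ ≤ gromovProd t ((h ^ j) t) ((h ^ i) t) := by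
  rcases hij.eq_or_lt with rfl | hij
  · rw [gromovProd_self]; linarith
  · have hmap := gromovProd_map_right (h ^ i) t ((h ^ (j - i)) t)
    rw [← IsometryEquiv.mul_apply, ← zpow_add, add_sub_cancel, ← zpow_neg] at hmap
    linarith [ht.gromovProd_zpow_neg_le hX hδ (i := j - i) (j := -i) (by omega) (by omega)]

theorem le_dist_zpow (ht : IsAxisPoint δ h t) (k : ℤ) :
    |(k : ℝ)| * (dist t (h t) - 6 * δ) ≤ dist t ((h ^ k) t) := by
  rw [dist_zpow_natAbs, show |(k : ℝ)| = (k.natAbs : ℝ) by rw [Nat.cast_natAbs, Int.cast_abs]]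
  generalize k.natAbs = n
  induction n with
  | zero => simp
  | succ n ih =>
    rcases Nat.eq_zero_or_pos n with rfl | hn
    · rw [zero_add, pow_one]; push_cast; linarith
    · have hback := ht.gromovProd_zpow_neg_le hX hδ (i := n) (j := -1) (by omega) (by omega)
      have hdist : dist ((h ^ (n : ℤ)) t) ((h ^ (-1 : ℤ)) t) = dist t ((h ^ (n + 1)) t) := by
        rw [zpow_neg, dist_inv_right, zpow_natCast, ← IsometryEquiv.mul_apply, zpow_one,
          ← pow_succ', dist_comm]
      unfold gromovProd at hback
      rw [hdist, zpow_neg, dist_inv_apply, zpow_natCast, zpow_one] at hback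
      push_cast
      linarith

theorem gromovProd_le_of_closest (ht : IsAxisPoint δ h t) {p : X}
    (hp : ∀ k : ℤ, dist p t ≤ dist p ((h ^ k) t) + δ) (k : ℤ) :
    gromovProd t p ((h ^ k) t) ≤ dist t (h t) / 2 + 2 * δ := by
  have hpos : ∀ h : X ≃ᵢ X, IsAxisPoint δ h t → (∀ k : ℤ, dist p t ≤ dist p ((h ^ k) t) + δ) →
      ∀ k : ℤ, 0 < k → gromovProd t p ((h ^ k) t) ≤ dist t (h t) / 2 + 2 * δ := by
    intro h ht hp k hk
    have hfwd := ht.gromovProd_zpow_ge hX hδ hk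
    have hhalf : gromovProd t p (h t) ≤ dist t (h t) / 2 + δ / 2 := by
      have := hp 1
      rw [zpow_one] at this
      unfold gromovProd
      rw [dist_comm t p]
      linarith
    rcases min_le_iff.1 (hX.min_gromovProd_le t p ((h ^ k) t) (h t)) with hmin | hmin
    · linarith
    · linarith [ht.large]
  rcases lt_trichotomy k 0 with hk | rfl | hk
  · have := hpos h⁻¹ ht.inv (fun k => by rw [inv_zpow, ← zpow_neg]; exact hp _) (-k) (by omega)
    rwa [inv_zpow, zpow_neg, inv_inv, dist_inv_apply] at this
  · rw [zpow_zero]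
    have := gromovProd_le_right t p t
    rw [dist_self] at this
    exact this.trans (by positivity)
  · exact hpos h ht hp k hk

theorem dist_le_of_closest (ht : IsAxisPoint δ h t) {p : X}
    (hp : ∀ k : ℤ, dist p t ≤ dist p ((h ^ k) t) + δ) (i j : ℤ) :
    dist p t ≤ gromovProd p ((h ^ i) t) ((h ^ j) t) + dist t (h t) / 2 + 3 * δ := by
  have hshadow := ht.gromovProd_le_of_closest hX hδ hp
  have hlow : ∀ k : ℤ, dist p t - dist t (h t) / 2 - 2 * δ ≤ gromovProd p t ((h ^ k) t) := by
    intro k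
    linarith [hshadow k, gromovProd_add_gromovProd t p ((h ^ k) t)]
  have hi := hlow i
  rw [gromovProd_comm] at hi
  rcases min_le_iff.1 (hX.min_gromovProd_le p ((h ^ i) t) t ((h ^ j) t)) with hmin | hmin
  · linarith
  · linarith [hlow j]

theorem dist_le_disp_of_closest (ht : IsAxisPoint δ h t) {p : X}
    (hp : ∀ k : ℤ, dist p t ≤ dist p ((h ^ k) t) + δ) :
    dist p t ≤ dist p (h p) + 6 * δ := by
  have hshadow := ht.gromovProd_le_of_closest hX hδ hp
  have hfwd := hshadow 2
  have hback := hshadow (-2)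
  rw [← gromovProd_map (h ^ (2 : ℤ)), ← IsometryEquiv.mul_apply _ (h ^ (-2 : ℤ)), ← zpow_add,
    add_neg_cancel, zpow_zero, gromovProd_comm] at hback
  have hsq : 2 * dist t (h t) - 2 * δ ≤ dist t ((h ^ (2 : ℤ)) t) := by
    have := ht.straight
    unfold gromovProd at this
    rw [dist_inv_apply, dist_inv_right, ← IsometryEquiv.mul_apply, dist_comm _ t] at this
    rw [zpow_two]
    linarith
  have hchain := hX.le_dist_of_chain hfwd hback (by linarith [ht.large])
  rw [(h ^ (2 : ℤ)).isometry.dist_eq, dist_comm t p] at hchain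
  have hdisp := dist_zpow_apply_le h p 2
  norm_num at hdisp
  norm_num at hsq hchain
  linarith

end IsAxisPoint

theorem exists_closest_zpow (hδ : 0 < δ) (h : X ≃ᵢ X) (t p : X) :
    ∃ k : ℤ, ∀ m : ℤ, dist p ((h ^ k) t) ≤ dist p ((h ^ m) t) + δ := by
  obtain ⟨k, hk⟩ := exists_lt_of_ciInf_lt (f := fun k : ℤ => dist p ((h ^ k) t))
    (lt_add_of_pos_right _ hδ)
  refine ⟨k, fun m => hk.le.trans ?_⟩
  gcongr
  exact ciInf_le ⟨0, by rintro _ ⟨k, rfl⟩; exact dist_nonneg⟩ m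

end AxisPoint

section TwoAxes

variable {X : Type*} [MetricSpace X] {δ A : ℝ} {a c g : X ≃ᵢ X} {y z : X}

theorem disp_zpow_apply (a : X ≃ᵢ X) (i : ℤ) (y : X) :
    dist ((a ^ i) y) (a ((a ^ i) y)) = dist y (a y) := by
  rw [← IsometryEquiv.mul_apply, ← zpow_one_add, add_comm, zpow_add_one,
    IsometryEquiv.mul_apply, (a ^ i).isometry.dist_eq]

theorem zpow_apply_zpow_apply (a : X ≃ᵢ X) (i j : ℤ) (y : X) :
    (a ^ i) ((a ^ j) y) = (a ^ (i + j)) y := by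
  rw [zpow_add, IsometryEquiv.mul_apply]

theorem conj_zpow_apply (a g : X ≃ᵢ X) (k : ℤ) (y : X) :
    ((g * a * g⁻¹) ^ k) (g y) = g ((a ^ k) y) := by
  rw [conj_zpow]
  simp [IsometryEquiv.mul_apply]

namespace IsAxisPoint

theorem exists_dist_zpow_le (hX : IsDeltaHyperbolic X δ) (hδ : 0 < δ) (hz : IsAxisPoint δ c z)
    (p : X) : ∃ i : ℤ, ∀ k l : ℤ, dist p ((c ^ i) z) ≤
      gromovProd p ((c ^ k) z) ((c ^ l) z) + dist z (c z) / 2 + 3 * δ := by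
  obtain ⟨i, hi⟩ := exists_closest_zpow hδ c z p
  refine ⟨i, fun k l => ?_⟩
  have := (hz.zpow_apply i).dist_le_of_closest hX hδ (p := p)
    (fun m => by rw [zpow_apply_zpow_apply]; exact hi (m + i)) (k - i) (l - i)
  rwa [zpow_apply_zpow_apply, zpow_apply_zpow_apply, sub_add_cancel, sub_add_cancel,
    disp_zpow_apply] at this

theorem twenty_mul_le (hX : IsDeltaHyperbolic X δ) (hδ : 0 < δ) (hy : IsAxisPoint δ a y) {k : ℤ}
    (hk : 20 ≤ |k|) : 20 * (dist y (a y) - 6 * δ) ≤ dist y ((a ^ k) y) := by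
  have hk' : (20 : ℝ) ≤ |(k : ℝ)| := by exact_mod_cast hk
  refine le_trans (mul_le_mul_of_nonneg_right hk' ?_) (hy.le_dist_zpow hX hδ k)
  linarith [hy.large]

section Far

variable (hX : IsDeltaHyperbolic X δ) (hδ : 0 < δ) (hz : IsAxisPoint δ c z)
  (hyz : ∀ k : ℤ, dist y z ≤ dist y ((c ^ k) z) + δ) {k : ℤ} (hk : 20 ≤ |k|)
include hX hδ hz hyz hk

theorem gromovProd_zpow_apply_le_of_closest :
    gromovProd z y ((c ^ k) y) ≤ dist z (c z) / 2 + 3 * δ := by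
  have hmap := gromovProd_map_right (c ^ k) z y
  rw [← zpow_neg] at hmap
  have hk₁ := hz.gromovProd_le_of_closest hX hδ hyz k
  have hk₂ := hz.gromovProd_le_of_closest hX hδ hyz (-k)
  rw [gromovProd_comm] at hk₁ ⊢
  linarith [hX.gromovProd_le (p := (c ^ k) y)
    (by linarith [hz.twenty_mul_le hX hδ hk, hz.large]) hk₁]

theorem ten_mul_lt_dist_zpow_apply_of_closest : 10 * dist z (c z) < dist z ((c ^ k) y) := by
  have hmap := gromovProd_map_right (c ^ k) z y
  have hneg := hz.gromovProd_le_of_closest hX hδ hyz (-k)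
  rw [zpow_neg] at hneg
  linarith [gromovProd_le_left z ((c ^ k) y) ((c ^ k) z), hz.twenty_mul_le hX hδ hk, hz.large]

theorem add_dist_lt_dist_zpow_apply_of_closest :
    8 * dist z (c z) + dist y z < dist y ((c ^ k) y) := by
  have hprod := hz.gromovProd_zpow_apply_le_of_closest hX hδ hyz hk
  unfold gromovProd at hprod
  linarith [hz.ten_mul_lt_dist_zpow_apply_of_closest hX hδ hyz hk, hz.large, dist_comm z y]

end Far

theorem isPingPong_of_far (hX : IsDeltaHyperbolic X δ) (hδ : 0 < δ) (hy : IsAxisPoint δ a y)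
    (hz : IsAxisPoint δ c z) (hA : dist y (a y) = A) (hA' : dist z (c z) = A)
    (hyz : ∀ k : ℤ, dist z y ≤ dist z ((a ^ k) y) + δ)
    (hzy : ∀ k : ℤ, dist y z ≤ dist y ((c ^ k) z) + δ) (hd : 2 * A < dist y z) :
    IsPingPong (a ^ (20 : ℤ)) (c ^ (20 : ℤ) * a ^ (20 : ℤ)) := by
  have hAδ := hA ▸ hy.large
  have habs : ∀ {j : ℤ}, j ≠ 0 → 20 ≤ |20 * j| := fun {j} hj => by
    have := Int.one_le_abs hj
    rw [abs_mul, abs_of_pos (by norm_num)]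
    omega
  rw [← pow_one (a ^ (20 : ℤ))]
  refine hX.isPingPong_pow_mul hδ.le (z := y) (D := A / 2 + 3 * δ) (fun j k _ hk => ?_)
    (fun j hj => ?_) (fun j hj => ?_) one_ne_zero <;> simp only [← zpow_mul]
  · have hz_y := hA' ▸ hz.gromovProd_zpow_apply_le_of_closest hX hδ hzy (habs hk)
    have ha := hA ▸ hy.gromovProd_le_of_closest hX hδ hyz (20 * j)
    have hends := gromovProd_add_gromovProd z y ((c ^ (20 * k)) y)
    rw [gromovProd_comm]
    linarith [hX.gromovProd_le (p := (c ^ (20 * k)) y) (q := z)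
      (by rw [gromovProd_comm]; linarith) ha]
  · linarith [hy.twenty_mul_le hX hδ (habs hj)]
  · linarith [hz.add_dist_lt_dist_zpow_apply_of_closest hX hδ hzy (habs hj)]

section Near

variable (hX : IsDeltaHyperbolic X δ) (hδ : 0 < δ) (hy : IsAxisPoint δ a y)
  (hz : IsAxisPoint δ c z) (hA : dist y (a y) = A) (hA' : dist z (c z) = A)
  (hd : dist y z ≤ 2 * A) (hfar : ∀ m k : ℤ, 0 < m → 2 * A < dist ((a ^ m) y) ((c ^ k) z))
include hX hδ hy hz hA hA' hd hfar

theorem gromovProd_le_three_mul {m : ℤ} (hm : 0 < m) (k : ℤ) :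
    gromovProd y ((a ^ m) y) ((c ^ k) z) ≤ 3 * A := by
  have hAδ := hA ▸ hy.large
  by_contra! hlt
  have hm3 : (3 : ℝ) < |(m : ℝ)| := by
    have := (hlt.trans_le (gromovProd_le_left _ _ _)).trans_le (dist_zpow_apply_le a y m)
    rw [hA] at this
    exact lt_of_mul_lt_mul_right this (by linarith)
  have hm3 : 3 ≤ m := by
    rw [← abs_of_pos hm]
    exact_mod_cast hm3.le
  have h3le := hA ▸ dist_zpow_apply_le a y 3
  have hle3 := hA ▸ hy.le_dist_zpow hX hδ 3
  have haq := hy.gromovProd_zpow_zpow_ge hX hδ (i := 3) (by norm_num) hm3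
  norm_num only [Int.cast_ofNat, abs_of_pos] at h3le hle3
  set q := (a ^ (3 : ℤ)) y
  have hyq : dist y q - 4 * δ ≤ gromovProd y q ((c ^ k) z) := by
    rw [gromovProd_comm] at haq
    rcases min_le_iff.1 (hX.min_gromovProd_le y q ((a ^ m) y) ((c ^ k) z)) with h | h <;> linarith
  have hqy : gromovProd q y ((c ^ k) z) ≤ 4 * δ := by
    linarith [gromovProd_add_gromovProd q y ((c ^ k) z)]
  have hqz : dist y q - dist y z ≤ gromovProd q z y := by
    unfold gromovProd
    linarith [dist_triangle_right q y z, dist_comm y z, dist_comm q y]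
  have hqzk := hX.gromovProd_le (z := q) (p := z) (by linarith) hqy
  obtain ⟨i, hi⟩ := hz.exists_dist_zpow_le hX hδ q
  have hqi := hi 0 k
  rw [zpow_zero, hA'] at hqi
  change dist q _ ≤ gromovProd q z _ + _ + _ at hqi
  linarith [hfar 3 i (by norm_num)]

/-- Hyperbolicity rules out that both ends of the orbit of `c` are seen from `y` in the direction
of `a ^ (-20) y`; this selects the sign of the exponent `k`. -/
theorem isPingPong_of_near : ∃ k : ℤ, |k| ≤ 20 ∧ IsPingPong (a ^ (20 : ℤ)) (c ^ k) := by
  have hAδ := hA ▸ hy.large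
  have hcc : ∀ k : ℤ, dist ((c ^ k) y) ((c ^ k) z) ≤ 2 * A := fun k => by
    rwa [(c ^ k).isometry.dist_eq]
  have hac : ∀ k : ℤ, gromovProd y ((a ^ (20 : ℤ)) y) ((c ^ k) y) ≤ 5 * A := by
    intro k
    have := gromovProd_le_add y ((a ^ (20 : ℤ)) y) ((c ^ k) y) ((a ^ (20 : ℤ)) y) ((c ^ k) z)
    rw [dist_self] at this
    linarith [hcc k, hy.gromovProd_le_three_mul hX hδ hz hA hA' hd hfar (m := 20) (by norm_num) k]
  have hcneg : gromovProd y ((c ^ (20 : ℤ)) y) ((c ^ (-20 : ℤ)) y) ≤ 6 * A + 3 * δ := by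
    have hyz := gromovProd_le_add y ((c ^ (20 : ℤ)) y) ((c ^ (-20 : ℤ)) y) ((c ^ (20 : ℤ)) z)
      ((c ^ (-20 : ℤ)) z)
    have hbase := (abs_le.1 (abs_gromovProd_sub_le_base y z ((c ^ (20 : ℤ)) z)
      ((c ^ (-20 : ℤ)) z))).2
    linarith [hcc 20, hcc (-20), hz.gromovProd_zpow_neg_le hX hδ (i := 20) (j := -20)
      (by norm_num) (by norm_num)]
  have hsign : ∀ k : ℤ, |k| = 20 → gromovProd y ((c ^ k) y) ((c ^ (-k)) y) ≤ 6 * A + 3 * δ →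
      gromovProd y ((c ^ k) y) ((a ^ (-20 : ℤ)) y) ≤ 6 * A + 4 * δ →
      ∃ k : ℤ, |k| ≤ 20 ∧ IsPingPong (a ^ (20 : ℤ)) (c ^ k) := by
    intro k hk hck hcak
    refine ⟨k, hk.le, hX.isPingPong hδ.le (z := y) (D := 7 * A) ?_ ?_ ?_ ?_ ?_ ?_ ?_⟩ <;>
      try rw [← zpow_neg]
    · linarith [hy.gromovProd_zpow_neg_le hX hδ (i := 20) (j := -20) (by norm_num) (by norm_num)]
    · linarith
    · linarith [hac (-k)]
    · linarith
    · linarith [hac k]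
    · linarith [hy.twenty_mul_le hX hδ (k := 20) (by norm_num)]
    · linarith [dist_apply_le_of_dist_le (c ^ k) z y, dist_comm y z, hz.twenty_mul_le hX hδ hk.ge]
  rcases min_le_iff.1 (hX.min_gromovProd_le y ((c ^ (20 : ℤ)) y) ((a ^ (-20 : ℤ)) y)
    ((c ^ (-20 : ℤ)) y)) with h | h
  · exact hsign 20 (by norm_num) hcneg (by linarith)
  · rw [gromovProd_comm] at h
    refine hsign (-20) (by norm_num) ?_ (by linarith)
    rwa [neg_neg, gromovProd_comm]

end Near

end IsAxisPoint

/-- The indices of the orbit points `a ^ i • y` that pass at distance at most `R` from the image by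
`g` of the orbit of `y`. -/
def closeIndices (a g : X ≃ᵢ X) (y : X) (R : ℝ) : Set ℤ :=
  {i | ∃ j : ℤ, dist ((a ^ i) y) (g ((a ^ j) y)) ≤ R}

theorem neg_mem_closeIndices_inv {R : ℝ} {i : ℤ} :
    -i ∈ closeIndices a⁻¹ g y R ↔ i ∈ closeIndices a g y R := by
  simp only [closeIndices, Set.mem_ofPred_eq, inv_zpow', neg_neg]
  exact ⟨fun ⟨j, hj⟩ => ⟨-j, hj⟩, fun ⟨j, hj⟩ => ⟨-j, by rwa [neg_neg]⟩⟩

namespace IsAxisPoint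

variable (hX : IsDeltaHyperbolic X δ) (hδ : 0 < δ) (hy : IsAxisPoint δ a y)
include hX hδ hy

theorem isPingPong_of_closeIndices_eq_empty (h : closeIndices a g y (2 * dist y (a y)) = ∅) :
    IsPingPong (a ^ (20 : ℤ)) (g * a ^ (20 : ℤ) * g⁻¹ * a ^ (20 : ℤ)) := by
  have hfar : ∀ i j : ℤ, 2 * dist y (a y) < dist ((a ^ i) y) (g ((a ^ j) y)) := fun i j =>
    not_le.1 fun hij => h.subset ⟨j, hij⟩
  obtain ⟨⟨i, j⟩, hij⟩ := exists_lt_of_ciInf_lt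
    (f := fun p : ℤ × ℤ => dist ((a ^ p.1) y) (g ((a ^ p.2) y))) (lt_add_of_pos_right _ hδ)
  have hmin : ∀ k l : ℤ, dist ((a ^ i) y) (g ((a ^ j) y)) ≤
      dist ((a ^ k) y) (g ((a ^ l) y)) + δ := fun k l => by
    refine hij.le.trans (add_le_add_left ?_ δ)
    exact ciInf_le (f := fun p : ℤ × ℤ => dist ((a ^ p.1) y) (g ((a ^ p.2) y)))
      ⟨0, by rintro _ ⟨k, rfl⟩; exact dist_nonneg⟩ (k, l)
  rw [← conj_zpow]
  refine (hy.zpow_apply i).isPingPong_of_far hX hδ ((hy.map g).zpow_apply j)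
    (disp_zpow_apply a i y) (by rw [disp_zpow_apply, dist_conj_apply]) (fun k => ?_) (fun k => ?_)
    (by rw [conj_zpow_apply]; exact hfar i j)
  · rw [dist_comm, dist_comm _ ((a ^ k) _), zpow_apply_zpow_apply, conj_zpow_apply]
    exact hmin _ _
  · rw [zpow_apply_zpow_apply, conj_zpow_apply, conj_zpow_apply]
    exact hmin _ _

theorem exists_isPingPong_of_bddAbove (hne : (closeIndices a g y (2 * dist y (a y))).Nonempty)
    (hbdd : BddAbove (closeIndices a g y (2 * dist y (a y)))) :
    ∃ k : ℤ, |k| ≤ 20 ∧ IsPingPong (a ^ (20 : ℤ)) (g * a ^ k * g⁻¹) := by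
  set i := sSup (closeIndices a g y (2 * dist y (a y)))
  obtain ⟨j, hj⟩ := Int.csSup_mem hne hbdd
  have hfar : ∀ m k : ℤ, i < m → 2 * dist y (a y) < dist ((a ^ m) y) (g ((a ^ k) y)) :=
    fun m k hm => not_le.1 fun hmk => hm.not_ge (le_csSup hbdd ⟨k, hmk⟩)
  simp only [← conj_zpow]
  refine (hy.zpow_apply i).isPingPong_of_near hX hδ ((hy.map g).zpow_apply j)
    (disp_zpow_apply a i y) (by rw [disp_zpow_apply, dist_conj_apply]) (by rwa [conj_zpow_apply])
    fun m k hm => ?_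
  rw [zpow_apply_zpow_apply, zpow_apply_zpow_apply, conj_zpow_apply]
  exact hfar _ _ (by omega)

theorem forall_exists_dist_le_of_not_bdd
    (habove : ¬ BddAbove (closeIndices a g y (2 * dist y (a y))))
    (hbelow : ¬ BddBelow (closeIndices a g y (2 * dist y (a y)))) (n : ℤ) :
    ∃ k : ℤ, dist ((a ^ n) y) (g ((a ^ k) y)) ≤ 5 * dist y (a y) := by
  obtain ⟨i, ⟨i', hi⟩, hni⟩ := not_bddAbove_iff.1 habove n
  obtain ⟨j, ⟨j', hj⟩, hnj⟩ := not_bddBelow_iff.1 hbelow n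
  have hbetween := (hy.zpow_apply n).gromovProd_zpow_neg_le hX hδ (i := i - n) (j := j - n)
    (by omega) (by omega)
  rw [zpow_apply_zpow_apply, zpow_apply_zpow_apply, sub_add_cancel, sub_add_cancel] at hbetween
  have himage := gromovProd_le_add ((a ^ n) y) (g ((a ^ i') y)) (g ((a ^ j') y))
    ((a ^ i) y) ((a ^ j) y)
  rw [dist_comm] at hi hj
  obtain ⟨l, hl⟩ := (hy.map g).exists_dist_zpow_le hX hδ ((a ^ n) y)
  have := hl i' j'
  simp only [conj_zpow_apply, dist_conj_apply] at this
  exact ⟨l, by linarith [hy.large]⟩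

/-- If `closeIndices` is unbounded in both directions then the two axes fellow travel; otherwise
they diverge from the last point where they are close, or from the point where they are closest. -/
theorem forall_exists_dist_le_or_isPingPong (g : X ≃ᵢ X) :
    (∀ n : ℤ, ∃ k : ℤ, dist ((a ^ n) y) (g ((a ^ k) y)) ≤ 5 * dist y (a y)) ∨
      ∃ τ s e : ℤ, (τ = 1 ∨ τ = -1) ∧ |s| ≤ 20 ∧ |e| ≤ 20 ∧
        IsPingPong (a ^ (20 * τ)) (g * a ^ s * g⁻¹ * a ^ e) := by
  rcases Set.eq_empty_or_nonempty (closeIndices a g y (2 * dist y (a y))) with hempty | hne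
  · exact .inr ⟨1, 20, 20, .inl rfl, by norm_num, by norm_num,
      by simpa using hy.isPingPong_of_closeIndices_eq_empty hX hδ hempty⟩
  by_cases habove : BddAbove (closeIndices a g y (2 * dist y (a y)))
  · obtain ⟨k, hk, hpp⟩ := hy.exists_isPingPong_of_bddAbove hX hδ hne habove
    exact .inr ⟨1, k, 0, .inl rfl, hk, by norm_num, by simpa using hpp⟩
  by_cases hbelow : BddBelow (closeIndices a g y (2 * dist y (a y)))
  · obtain ⟨i, hi⟩ := hne
    obtain ⟨m, hm⟩ := hbelow
    obtain ⟨k, hk, hpp⟩ := hy.inv.exists_isPingPong_of_bddAbove hX hδ (g := g)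
      ⟨-i, by rwa [dist_inv_apply, neg_mem_closeIndices_inv]⟩
      ⟨-m, fun j hj => le_neg.2 (hm (by
        rwa [dist_inv_apply, ← neg_neg j, neg_mem_closeIndices_inv] at hj))⟩
    rw [inv_zpow', inv_zpow'] at hpp
    exact .inr ⟨-1, -k, 0, .inr rfl, by rwa [abs_neg], by norm_num, by simpa using hpp⟩
  exact .inl (hy.forall_exists_dist_le_of_not_bdd hX hδ habove hbelow)

end IsAxisPoint

end TwoAxes

/-! ### Stabilizers of ends -/

theorem zpow_mem_of_dvd {G : Type*} [Group G] {H : Subgroup G} {a : G} {m k : ℤ} (h : a ^ m ∈ H)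
    (hmk : m ∣ k) : a ^ k ∈ H := by
  obtain ⟨l, rfl⟩ := hmk
  rw [zpow_mul]
  exact zpow_mem h l

section CoarseStabilizer

variable {X : Type*} [MetricSpace X] {δ : ℝ} {σ : X → X → ℝ → X} {a g : X ≃ᵢ X}

/-- The orbit of `x` under `a` lies in a bounded neighbourhood of its image under `g`. -/
def CoarselyCovers (a : X ≃ᵢ X) (x : X) (g : X ≃ᵢ X) : Prop :=
  ∃ K : ℝ, ∀ n : ℤ, ∃ k : ℤ, dist ((a ^ n) x) (g ((a ^ k) x)) ≤ K

theorem CoarselyCovers.mul {x : X} {g h : X ≃ᵢ X} (hg : CoarselyCovers a x g)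
    (hh : CoarselyCovers a x h) : CoarselyCovers a x (g * h) := by
  obtain ⟨K, hK⟩ := hg
  obtain ⟨L, hL⟩ := hh
  refine ⟨K + L, fun n => ?_⟩
  obtain ⟨k, hk⟩ := hK n
  obtain ⟨l, hl⟩ := hL k
  refine ⟨l, (dist_triangle _ (g ((a ^ k) x)) _).trans ?_⟩
  rw [IsometryEquiv.mul_apply, g.isometry.dist_eq]
  linarith

/-- The isometries preserving the orbit of `x` under `a` up to a bounded distance. If the orbit is
a quasigeodesic, this is the stabilizer of its pair of ends. -/
def coarseStabilizer (a : X ≃ᵢ X) (x : X) : Subgroup (X ≃ᵢ X) where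
  carrier := {g | CoarselyCovers a x g ∧ CoarselyCovers a x g⁻¹}
  one_mem' := ⟨⟨0, fun n => ⟨n, by simp⟩⟩, ⟨0, fun n => ⟨n, by simp⟩⟩⟩
  mul_mem' := fun {g h} hg hh => ⟨hg.1.mul hh.1, by rw [mul_inv_rev]; exact hh.2.mul hg.2⟩
  inv_mem' := fun {g} hg => ⟨hg.2, by rw [inv_inv]; exact hg.1⟩

theorem self_mem_coarseStabilizer (a : X ≃ᵢ X) (x : X) : a ∈ coarseStabilizer a x := by
  refine ⟨⟨0, fun n => ⟨n - 1, ?_⟩⟩, ⟨0, fun n => ⟨n + 1, ?_⟩⟩⟩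
  · rw [← IsometryEquiv.mul_apply, ← zpow_one_add, add_sub_cancel, dist_self]
  · rw [dist_inv_right, ← IsometryEquiv.mul_apply, ← zpow_one_add, add_comm, dist_self]

theorem exists_dist_zpow_mul_le (a : X ≃ᵢ X) (x y : X) {n : ℤ} (hn : n ≠ 0) (k : ℤ) :
    ∃ j : ℤ, dist ((a ^ k) x) ((a ^ (n * j)) y) ≤ |(n : ℝ)| * dist x (a x) + dist x y := by
  refine ⟨k / n, ?_⟩
  have hdiv : k = n * (k / n) + k % n := (Int.mul_ediv_add_emod k n).symm
  have hmod : |((k % n : ℤ) : ℝ)| ≤ |(n : ℝ)| := by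
    have hnonneg := Int.emod_nonneg k hn
    have hlt := Int.emod_lt_abs k hn
    exact_mod_cast (abs_of_nonneg hnonneg).trans_le hlt.le
  have hrem : dist ((a ^ k) x) ((a ^ (n * (k / n))) y) = dist ((a ^ (k % n)) x) y := by
    nth_rewrite 1 [hdiv]
    rw [zpow_add, IsometryEquiv.mul_apply, IsometryEquiv.dist_eq]
  rw [hrem]
  refine (dist_triangle_left _ _ x).trans ?_
  have := (dist_zpow_apply_le a x (k % n)).trans
    (mul_le_mul_of_nonneg_right hmod dist_nonneg)
  linarith

theorem CoarselyCovers.of_zpow {x y : X} {n : ℤ} (hn : n ≠ 0) (h : CoarselyCovers (a ^ n) y g) :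
    CoarselyCovers a x g := by
  obtain ⟨K, hK⟩ := h
  refine ⟨|(n : ℝ)| * dist x (a x) + dist x y + (K + dist x y), fun k => ?_⟩
  obtain ⟨j, hj⟩ := exists_dist_zpow_mul_le a x y hn k
  obtain ⟨i, hi⟩ := hK j
  refine ⟨n * i, (dist_triangle _ ((a ^ (n * j)) y) _).trans (add_le_add hj ?_)⟩
  rw [← zpow_mul, ← zpow_mul] at hi
  refine (dist_triangle _ (g ((a ^ (n * i)) y)) _).trans (add_le_add hi ?_)
  rw [g.isometry.dist_eq, IsometryEquiv.dist_eq, dist_comm]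

theorem IsAxisPoint.mem_coarseStabilizer_or (hX : IsDeltaHyperbolic X δ) (hδ : 0 < δ) {n : ℤ}
    (hn : n ≠ 0) {y : X} (hy : IsAxisPoint δ (a ^ n) y) (x : X) (g : X ≃ᵢ X) :
    g ∈ coarseStabilizer a x ∨ ∃ h, (h = g ∨ h = g⁻¹) ∧ ∃ τ s e : ℤ, (τ = 1 ∨ τ = -1) ∧
      |s| ≤ 20 ∧ |e| ≤ 20 ∧
        IsPingPong ((a ^ n) ^ (20 * τ)) (h * (a ^ n) ^ s * h⁻¹ * (a ^ n) ^ e) := by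
  rcases hy.forall_exists_dist_le_or_isPingPong hX hδ g with hg | hg
  · rcases hy.forall_exists_dist_le_or_isPingPong hX hδ g⁻¹ with hg' | hg'
    · exact Or.inl ⟨CoarselyCovers.of_zpow hn ⟨_, hg⟩, CoarselyCovers.of_zpow hn ⟨_, hg'⟩⟩
    · exact Or.inr ⟨_, Or.inr rfl, hg'⟩
  · exact Or.inr ⟨_, Or.inl rfl, hg⟩

theorem IsGCB.exists_isAxisPoint [Nonempty X] (hσ : IsGCB σ) (hδ : 0 < δ)
    (ha : IsSigmaIsometry σ a) {n : ℤ} (hn : 1000 * δ ≤ |(n : ℝ)| * transLength a) :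
    ∃ y, IsAxisPoint δ (a ^ n) y := by
  obtain ⟨y, hy⟩ := exists_disp_lt (a ^ n) hδ
  exact ⟨y, hσ.isAxisPoint ((sigmaIsometries σ).zpow_mem ha n)
    (hn.trans (le_transLength fun z => hσ.abs_mul_transLength_le_disp ha n z)) hy.le⟩

theorem exists_int_le_mul {l : ℝ} (hl : 0 < l) (r : ℝ) :
    ∃ n : ℤ, 0 < n ∧ r ≤ n * l := by
  obtain ⟨n, hn⟩ := exists_nat_gt (r / l)
  refine ⟨n + 1, by omega, ?_⟩
  rw [div_lt_iff₀ hl] at hn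
  push_cast
  linarith

theorem CoarselyCovers.zpow {x : X} (h : CoarselyCovers a x g) {n : ℤ} (hn : n ≠ 0) (y : X) :
    CoarselyCovers (a ^ n) y g := by
  obtain ⟨K, hK⟩ := h
  refine ⟨dist y x + (K + (|(n : ℝ)| * dist x (a x) + dist x y)), fun i => ?_⟩
  obtain ⟨k, hk⟩ := hK (n * i)
  obtain ⟨j, hj⟩ := exists_dist_zpow_mul_le a x y hn k
  refine ⟨j, ?_⟩
  rw [← zpow_mul, ← zpow_mul]
  refine (dist_triangle _ ((a ^ (n * i)) x) _).trans (add_le_add ?_ ?_)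
  · rw [IsometryEquiv.dist_eq]
  · refine (dist_triangle _ (g ((a ^ k) x)) _).trans (add_le_add hk ?_)
    rwa [g.isometry.dist_eq]

/-- Both ends of the translated axis `g ⟨c⟩ y` stay within `K` of the orbit `⟨c⟩ y`, so `g y`
lies between two points of `⟨c⟩ y` far away in opposite directions. -/
theorem IsAxisPoint.exists_dist_le_of_coarselyCovers (hX : IsDeltaHyperbolic X δ) (hδ : 0 < δ)
    {c : X ≃ᵢ X} {y : X} (hy : IsAxisPoint δ c y) (hg : CoarselyCovers c y g⁻¹) :
    ∃ l : ℤ, dist (g y) ((c ^ l) y) ≤ dist y (c y) := by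
  obtain ⟨K, hK⟩ := hg
  simp only [dist_inv_right] at hK
  have hlarge := hy.large
  obtain ⟨N, hN0, hN⟩ :=
    exists_int_le_mul (l := dist y (c y) - 6 * δ) (by linarith) (K + 10 * δ)
  have hfar : ∀ m i : ℤ, |m| = N → dist (g ((c ^ m) y)) ((c ^ i) y) ≤ K →
      10 * δ ≤ gromovProd (g y) ((c ^ i) y) (g ((c ^ m) y)) := by
    intro m i hm hd
    have hdist : K + 10 * δ ≤ dist y ((c ^ m) y) := by
      refine le_trans ?_ (hy.le_dist_zpow hX hδ m)
      rwa [← Int.cast_abs, hm]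
    have hgp := (abs_le.1 (abs_gromovProd_sub_le (g y) (g ((c ^ m) y)) (g ((c ^ m) y))
      ((c ^ i) y))).2
    rw [gromovProd_self, g.isometry.dist_eq, gromovProd_comm] at hgp
    linarith
  obtain ⟨i, hi⟩ := hK N
  obtain ⟨j, hj⟩ := hK (-N)
  have hopp := hy.gromovProd_zpow_neg_le hX hδ (i := N) (j := -N) hN0 (by omega)
  rw [← gromovProd_map g] at hopp
  have hleft := hX.gromovProd_le (z := g y) (p := (c ^ i) y) (q := g ((c ^ N) y))
    (r := g ((c ^ (-N)) y)) (D := 3 * δ)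
    (by linarith [hfar N i (abs_of_pos hN0) hi]) hopp
  rw [gromovProd_comm] at hleft
  have hboth := hX.gromovProd_le (z := g y) (p := (c ^ j) y)
    (q := g ((c ^ (-N)) y)) (r := (c ^ i) y) (D := 4 * δ)
    (by linarith [hfar (-N) j (by rw [abs_neg, abs_of_pos hN0]) hj]) (by linarith)
  obtain ⟨l, hl⟩ := hy.exists_dist_zpow_le hX hδ (g y)
  exact ⟨l, (hl j i).trans (by linarith)⟩

theorem isVirtuallyNilpotent_of_relIndex_zpowers_ne_zero {G : Type*} [Group G] {c : G}
    {H : Subgroup G} (h : (Subgroup.zpowers c).relIndex H ≠ 0) : IsVirtuallyNilpotent ↥H := by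
  refine isVirtuallyNilpotent_subgroup_iff.2 ⟨Subgroup.zpowers c ⊓ H, inf_le_right,
    by rwa [Subgroup.inf_relIndex_right], ?_⟩
  rw [Subgroup.isNilpotent_iff_lowerCentralSeries]
  refine ⟨1, ?_⟩
  rw [Subgroup.lowerCentralSeries_succ, Subgroup.lowerCentralSeries_zero, eq_bot_iff,
    Subgroup.commutator_le]
  rintro _ ⟨⟨i, rfl⟩, -⟩ _ ⟨⟨j, rfl⟩, -⟩
  rw [Subgroup.mem_bot, commutatorElement_eq_one_iff_mul_comm]
  exact (Commute.zpow_zpow_self c i j).eq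

theorem IsGCB.isVirtuallyNilpotent_of_coarseStabilizer [Nonempty X] (hσ : IsGCB σ)
    (hX : IsDeltaHyperbolic X δ) (hδ : 0 < δ) (ha : IsSigmaIsometry σ a)
    (hl : 0 < transLength a) {Γ : Subgroup (X ≃ᵢ X)} (hd : IsDiscreteSubgroup Γ) (haΓ : a ∈ Γ)
    (x : X) (hi : (coarseStabilizer a x).relIndex Γ ≠ 0) : IsVirtuallyNilpotent ↥Γ := by
  obtain ⟨n, hn0, hn⟩ := exists_int_le_mul hl (1000 * δ)
  obtain ⟨y, hy⟩ := hσ.exists_isAxisPoint hδ ha (n := n)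
    (by rwa [abs_of_pos (by exact_mod_cast hn0)])
  have hcyclic : (Subgroup.zpowers a).relIndex (coarseStabilizer a x ⊓ Γ) ≠ 0 := by
    refine relIndex_ne_zero_of_finite (hd y (dist y ((a ^ n) y))) fun g hg => ?_
    obtain ⟨k, hk⟩ := hy.exists_dist_le_of_coarselyCovers hX hδ
      (((coarseStabilizer a x).inv_mem hg.1).2.zpow hn0.ne' y)
    rw [← zpow_mul] at hk
    refine ⟨g * a ^ (n * k), ⟨mul_mem hg.2 (zpow_mem haΓ _), ?_⟩, ?_⟩
    · rwa [IsometryEquiv.mul_apply, ← dist_inv_left]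
    · rw [mul_inv_rev, inv_mul_cancel_right, ← zpow_neg]
      exact zpow_mem (Subgroup.mem_zpowers a) _
  exact (isVirtuallyNilpotent_of_relIndex_zpowers_ne_zero hcyclic).of_relIndex_ne_zero
    inf_le_right (by rwa [Subgroup.inf_relIndex_right])

theorem IsGCB.mem_coarseStabilizer [Nonempty X] (hσ : IsGCB σ)
    (hX : IsDeltaHyperbolic X δ) (hδ : 0 < δ) (ha : IsSigmaIsometry σ a)
    (hl : 0 < transLength a) (x : X) {m l : ℤ} (hm : m ≠ 0) (hl0 : l ≠ 0)
    (hv : IsVirtuallyNilpotent ↥(Subgroup.closure ({a ^ m, g * a ^ l * g⁻¹} : Set (X ≃ᵢ X)))) :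
    g ∈ coarseStabilizer a x := by
  obtain ⟨n, hn0, hn⟩ := exists_int_le_mul hl (1000 * δ)
  set N := n * m * l with hN
  have hN0 : N ≠ 0 := mul_ne_zero (mul_ne_zero hn0.ne' hm) hl0
  have hnN : 1000 * δ ≤ |(N : ℝ)| * transLength a := by
    refine hn.trans (mul_le_mul_of_nonneg_right ?_ hl.le)
    have : n ≤ |N| := by
      rw [hN, mul_assoc, abs_mul, abs_of_pos hn0]
      exact le_mul_of_one_le_right hn0.le (Int.one_le_abs (mul_ne_zero hm hl0))
    exact_mod_cast this
  obtain ⟨y, hy⟩ := hσ.exists_isAxisPoint hδ ha hnN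
  rcases hy.mem_coarseStabilizer_or hX hδ hN0 x g with h | ⟨h, hh, τ, s, e, -, -, -, hpp⟩
  · exact h
  exfalso
  set V := Subgroup.closure ({a ^ m, g * a ^ l * g⁻¹} : Set (X ≃ᵢ X))
  have hpow : ∀ k : ℤ, (a ^ N) ^ k ∈ V := fun k =>
    zpow_mem (zpow_mem_of_dvd (m := m) (Subgroup.subset_closure (by simp))
      ⟨n * l, by rw [hN]; ring⟩) k
  have hconj : ∀ k : ℤ, g * (a ^ N) ^ k * g⁻¹ ∈ V := fun k => by
    rw [← zpow_mul, ← conj_zpow]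
    refine zpow_mem_of_dvd ?_ (show l ∣ N * k from ⟨n * m * k, by rw [hN]; ring⟩)
    rw [conj_zpow]
    exact Subgroup.subset_closure (by simp)
  rcases hh with rfl | rfl
  · exact hpp.not_isVirtuallyNilpotent (hpow _) (mul_mem (hconj s) (hpow e)) hv
  · refine (hpp.conj g).not_isVirtuallyNilpotent (hconj _) ?_ hv
    have := mul_mem (hpow s) (hconj e)
    convert this using 1
    group

end CoarseStabilizer

section Escape

variable {X : Type*} [MetricSpace X] {a : X ≃ᵢ X}

theorem IsNonElliptic.zpow_injective (ha : IsNonElliptic a) [Nonempty X] :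
    Function.Injective fun i : ℤ => a ^ i := by
  refine injective_zpow_iff_not_isOfFinOrder.2 fun h => ?_
  obtain ⟨x⟩ := ‹Nonempty X›
  refine ha x (Set.Finite.isBounded ?_)
  have hfin : (Set.range fun n : ℤ => a ^ n).Finite := h.finite_zpowers
  rw [show (fun n : ℤ => (a ^ n) x) = (fun g : X ≃ᵢ X => g x) ∘ fun n : ℤ => a ^ n from rfl,
    Set.range_comp]
  exact hfin.image _

/-- The orbit of `x` under the powers of `a` goes to infinity, in the form needed for parabolic
isometries: every ball contains only finitely many of the points `a ^ i • x`. -/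
def Escapes (a : X ≃ᵢ X) (x : X) : Prop :=
  ∀ R : ℝ, ∃ M : ℕ, ∀ i : ℤ, (M : ℤ) ≤ |i| → R ≤ dist x ((a ^ i) x)

theorem IsNonElliptic.escapes (ha : IsNonElliptic a) {Γ : Subgroup (X ≃ᵢ X)}
    (hd : IsDiscreteSubgroup Γ) (haΓ : a ∈ Γ) (x : X) : Escapes a x := by
  have : Nonempty X := ⟨x⟩
  intro R
  have hfin : {i : ℤ | dist x ((a ^ i) x) ≤ R}.Finite :=
    ((hd x R).preimage (ha.zpow_injective.injOn)).subset
      fun i hi => ⟨Γ.zpow_mem haΓ i, hi⟩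
  obtain ⟨M, hM⟩ := (hfin.image Int.natAbs).bddAbove
  refine ⟨M + 1, fun i hi => ?_⟩
  by_contra! h
  have := hM (Set.mem_image_of_mem Int.natAbs (show i ∈ {i : ℤ | _} from h.le))
  rw [Int.abs_eq_natAbs] at hi
  omega

end Escape

section Parabolic

variable {X : Type*} [MetricSpace X] {δ : ℝ} {a g : X ≃ᵢ X} {x : X} {t : ℕ → X}

/-- The stabilizer of the end towards which the sequence `t` goes, expressed by Gromov products so
that no boundary at infinity has to be constructed. -/
def endStabilizer (hX : IsDeltaHyperbolic X δ) (x : X) (t : ℕ → X)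
    (ht : Tendsto (fun n => dist x (t n)) atTop atTop) : Subgroup (X ≃ᵢ X) where
  carrier := {g | Tendsto (fun n => gromovProd x (g (t n)) (t n)) atTop atTop}
  one_mem' := by
    simpa [gromovProd_self] using ht
  mul_mem' := by
    intro g h hg hh
    simp only [Set.mem_ofPred_eq, Filter.tendsto_atTop] at hg hh ⊢
    intro T
    filter_upwards [hg (T + δ), hh (T + δ + dist (g⁻¹ x) x)] with n hgn hhn
    have hmin := hX.min_gromovProd_le x ((g * h) (t n)) (g (t n)) (t n)
    have hghn : T + δ ≤ gromovProd x ((g * h) (t n)) (g (t n)) := by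
      rw [IsometryEquiv.mul_apply, ← gromovProd_map g⁻¹, IsometryEquiv.inv_apply_self,
        IsometryEquiv.inv_apply_self]
      linarith [(abs_le.1 (abs_gromovProd_sub_le_base (g⁻¹ x) x (h (t n)) (t n))).1]
    linarith [le_min hghn hgn]
  inv_mem' := by
    intro g hg
    simp only [Set.mem_ofPred_eq, Filter.tendsto_atTop] at hg ⊢
    intro T
    filter_upwards [hg (T + dist (g x) x)] with n hgn
    rw [← gromovProd_map g, IsometryEquiv.apply_inv_self, gromovProd_comm]
    linarith [(abs_le.1 (abs_gromovProd_sub_le_base (g x) x (g (t n)) (t n))).1]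

theorem mem_endStabilizer {hX : IsDeltaHyperbolic X δ}
    {ht : Tendsto (fun n => dist x (t n)) atTop atTop} :
    g ∈ endStabilizer hX x t ht ↔ ∀ T, ∀ᶠ n in atTop, T ≤ gromovProd x (g (t n)) (t n) :=
  Filter.tendsto_atTop

theorem sub_le_gromovProd_of_disp_le {s : X} (h : dist s (g s) ≤ δ) (x : X) :
    (dist x (g x) - δ) / 2 ≤ gromovProd x (g x) s := by
  unfold gromovProd
  have := dist_triangle (g x) (g s) s
  rw [g.isometry.dist_eq, dist_comm (g s) s] at this
  linarith

/-- As `x` is moved far by `v` while `s` is hardly moved, `v x` lies in the direction of `s` seen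
from `x`; and `g s` is in another direction. -/
theorem IsDeltaHyperbolic.gromovProd_conj_le (hX : IsDeltaHyperbolic X δ) {u v : X ≃ᵢ X} {s : X}
    {T : ℝ} (hδ : 0 < δ) (hg : gromovProd x (g s) s ≤ T)
    (hus : dist s (u s) ≤ δ) (hvs : dist s (v s) ≤ δ)
    (hu : 2 * T + 11 * δ + 4 * dist x (g x) ≤ dist x (u x))
    (hv : 2 * T + 11 * δ + 4 * dist x (g x) ≤ dist x (v x)) :
    gromovProd x (u x) ((g * v * g⁻¹) x) ≤ T + 2 * δ + dist x (g x) := by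
  have hx := dist_nonneg (x := x) (y := g x)
  have hugs : gromovProd x (u x) (g s) ≤ T + δ :=
    hX.gromovProd_le (q := s) (by linarith [sub_le_gromovProd_of_disp_le hus x])
      (by rwa [gromovProd_comm])
  have hgvs : T + 2 * δ < gromovProd x (g (v x)) (g s) := by
    rw [← gromovProd_map g⁻¹, IsometryEquiv.inv_apply_self, IsometryEquiv.inv_apply_self]
    have hbase := (abs_le.1 (abs_gromovProd_sub_le_base (g⁻¹ x) x (v x) s)).1
    rw [dist_comm, dist_inv_apply] at hbase
    linarith [sub_le_gromovProd_of_disp_le hvs x]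
  have hugv : gromovProd x (u x) (g (v x)) ≤ T + 2 * δ := by
    rw [gromovProd_comm] at hugs ⊢
    linarith [hX.gromovProd_le (D := T + δ) (by linarith) hugs]
  have hmove := gromovProd_le_add x (u x) ((g * v * g⁻¹) x) (u x) (g (v x))
  rw [dist_self, IsometryEquiv.mul_apply, IsometryEquiv.mul_apply, g.isometry.dist_eq,
    v.isometry.dist_eq, dist_comm, dist_inv_apply] at hmove
  rw [IsometryEquiv.mul_apply, IsometryEquiv.mul_apply]
  linarith

theorem Escapes.exists_forall_le_dist_zpow_mul (hx : Escapes a x) (R : ℝ) :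
    ∃ M : ℤ, ∀ k : ℤ, k ≠ 0 → R ≤ dist x ((a ^ (M * k)) x) := by
  obtain ⟨M, hM⟩ := hx R
  refine ⟨M + 1, fun k hk => hM _ ?_⟩
  rw [abs_mul, abs_of_nonneg (by omega)]
  exact (Int.le_add_one le_rfl).trans (le_mul_of_one_le_right (by omega) (Int.one_le_abs hk))

variable (hat : ∀ i : ℤ, ∀ᶠ n in atTop, dist (t n) ((a ^ i) (t n)) ≤ δ)
include hat

theorem Escapes.tendsto_dist (hx : Escapes a x) :
    Tendsto (fun n => dist x (t n)) atTop atTop := by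
  refine Filter.tendsto_atTop.2 fun T => ?_
  obtain ⟨M, hM⟩ := hx (2 * T + δ)
  filter_upwards [hat M] with n h
  linarith [sub_le_gromovProd_of_disp_le h x, hM M (by simp),
    gromovProd_le_right x ((a ^ (M : ℤ)) x) (t n)]

theorem Escapes.eventually_le_gromovProd (hX : IsDeltaHyperbolic X δ) (hx : Escapes a x) (T : ℝ) :
    ∃ k, ∀ n ≥ k, ∀ m ≥ k, T ≤ gromovProd x (t n) (t m) := by
  obtain ⟨M, hM⟩ := hx (2 * T + 3 * δ)
  obtain ⟨k, hk⟩ := eventually_atTop.1 (hat M)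
  refine ⟨k, fun n hn m hm => ?_⟩
  have hn_t := sub_le_gromovProd_of_disp_le (hk n hn) x
  have hm_t := sub_le_gromovProd_of_disp_le (hk m hm) x
  have hmin := hX.min_gromovProd_le x (t n) ((a ^ (M : ℤ)) x) (t m)
  rw [gromovProd_comm] at hn_t
  have hfar := hM M (by simp)
  linarith [le_min (show T + δ ≤ gromovProd x (t n) ((a ^ (M : ℤ)) x) by linarith)
    (show T + δ ≤ gromovProd x ((a ^ (M : ℤ)) x) (t m) by linarith)]

theorem Escapes.mem_endStabilizer_of_isVirtuallyNilpotent (hX : IsDeltaHyperbolic X δ)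
    (hδ : 0 < δ) (hx : Escapes a x)
    {m l : ℤ} (hm : m ≠ 0) (hl : l ≠ 0)
    (hv : IsVirtuallyNilpotent ↥(Subgroup.closure ({a ^ m, g * a ^ l * g⁻¹} : Set (X ≃ᵢ X)))) :
    g ∈ endStabilizer hX x t (hx.tendsto_dist hat) := by
  by_contra hg
  rw [_root_.mem_endStabilizer] at hg
  push Not at hg
  obtain ⟨T, hT⟩ := hg
  have := le_max_right T 0
  have hgx := dist_nonneg (x := x) (y := g x)
  obtain ⟨M, hM⟩ :=
    hx.exists_forall_le_dist_zpow_mul (2 * max T 0 + 11 * δ + 4 * dist x (g x))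
  set u := a ^ (m * l * M) with hu
  have hfar : ∀ j : ℤ, j ≠ 0 →
      2 * max T 0 + 11 * δ + 4 * dist x (g x) ≤ dist x ((u ^ j) x) := fun j hj => by
    rw [hu, ← zpow_mul, show m * l * M * j = M * (m * l * j) by ring]
    exact hM _ (mul_ne_zero (mul_ne_zero hm hl) hj)
  have hdir : ∀ j k : ℤ, j ≠ 0 → k ≠ 0 → gromovProd x ((u ^ j) x) (((g * u * g⁻¹) ^ k) x) ≤
      max T 0 + 2 * δ + dist x (g x) := by
    intro j k hj hk
    have hfix := (hat (m * l * M * j)).and (hat (m * l * M * k))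
    simp only [zpow_mul _ (m * l * M), ← hu] at hfix
    obtain ⟨n, hn, huj, huk⟩ := (hT.and_eventually hfix).exists
    rw [conj_zpow]
    exact hX.gromovProd_conj_le hδ (hn.le.trans (le_max_left _ _)) huj huk
      (hfar j hj) (hfar k hk)
  have hconj : ∀ j : ℤ, j ≠ 0 → 2 * (max T 0 + 2 * δ + dist x (g x)) + 6 * δ <
      dist x (((g * u * g⁻¹) ^ j) x) := fun j hj => by
    rw [conj_zpow, dist_conj_apply']
    linarith [hfar j hj, dist_apply_le_of_dist_le (u ^ j) x (g⁻¹ x), dist_inv_apply g x]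
  have hpp := hX.isPingPong_pow_mul hδ.le hdir (fun j hj => by linarith [hfar j hj]) hconj
    one_ne_zero
  have huV : u ∈ Subgroup.closure {a ^ m, g * a ^ l * g⁻¹} :=
    zpow_mem_of_dvd (m := m) (Subgroup.subset_closure (by simp)) ⟨l * M, by ring⟩
  have hlV : (g * a * g⁻¹) ^ l ∈ Subgroup.closure {a ^ m, g * a ^ l * g⁻¹} := by
    rw [conj_zpow]
    exact Subgroup.subset_closure (by simp)
  have hgugV := zpow_mem_of_dvd hlV (show l ∣ m * l * M from ⟨m * M, by ring⟩)
  rw [conj_zpow, ← hu] at hgugV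
  exact hpp.not_isVirtuallyNilpotent (pow_mem huV 1) (mul_mem hgugV huV) hv

omit hat

theorem IsDeltaHyperbolic.disp_le_max (hX : IsDeltaHyperbolic X δ) {p y : X}
    (hp : dist x p + dist p y = dist x y) (hgp : dist x (g x) ≤ dist x p)
    (h : dist x p + dist x (g x) ≤ gromovProd x (g y) y) :
    dist p (g p) ≤ max (dist (g x) y - dist x y) (dist (g⁻¹ x) y - dist x y) + 4 * δ := by
  have hfour' := hX p (g p) x y
  have hgpy : dist (g p) y ≤ dist p y + (dist (g x) y - dist x y) + 2 * δ := by
    have hfour := hX (g p) y (g x) (g y)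
    simp only [g.isometry.dist_eq] at hfour
    unfold gromovProd at h
    have hxgx := dist_triangle x (g x) y
    have hxgy := dist_triangle x (g x) (g y)
    have hgxy := dist_triangle (g x) x y
    rw [g.isometry.dist_eq] at hxgy
    rw [dist_comm (g x) x] at hgxy
    rw [dist_comm y (g y), dist_comm y (g x), dist_comm p x] at hfour
    rcases max_cases (dist x p + dist (g y) y) (dist p y + dist (g x) y) with
      hcase | hcase <;> linarith
  have hbus := hX.busemann_sub_le (u := x) (v := g⁻¹ x) (s := y) (t := p)
    (by rw [dist_inv_apply]; unfold gromovProd; rw [dist_comm y p]; linarith)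
  rw [dist_inv_left g x p] at hbus
  rw [dist_comm p x] at hfour'
  rcases max_cases (dist (g x) y - dist x y) (dist (g⁻¹ x) y - dist x y) with hcase | hcase <;>
  rcases max_cases (dist x p + dist (g p) y) (dist p y + dist (g p) x) with hcase' | hcase' <;>
  linarith [dist_comm (g p) x]

theorem IsDeltaHyperbolic.gromovProd_pow_le (hX : IsDeltaHyperbolic X δ) {p y : X}
    (hgp : gromovProd p (g p) y ≤ 4 * δ) (hinv : dist p (g p) - 5 * δ ≤ gromovProd p (g⁻¹ p) y)
    (hlarge : 16 * δ ≤ dist p (g p)) (hδ : 0 < δ) (k : ℕ) :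
    gromovProd p ((g ^ (k + 1)) p) y ≤ 5 * δ ∧ 2 * (k + 1) * δ ≤ dist p ((g ^ (k + 1)) p) := by
  induction k with
  | zero =>
    rw [zero_add, pow_one]
    exact ⟨by linarith, by push_cast; linarith⟩
  | succ k ih =>
    have hback := hX.gromovProd_le (z := p) (p := g⁻¹ p) (q := y) (r := (g ^ (k + 1)) p)
      (D := 5 * δ) (by linarith) (by rw [gromovProd_comm]; exact ih.1)
    rw [gromovProd_comm] at hback
    have hmap := gromovProd_map_right g p ((g ^ (k + 1)) p)
    rw [← IsometryEquiv.mul_apply, ← pow_succ'] at hmap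
    refine ⟨?_, ?_⟩
    · by_contra! hlt
      have hnext := hX.gromovProd_le (z := p) (p := (g ^ (k + 1 + 1)) p) (q := g p) (r := y)
        (D := 4 * δ) (by linarith) hgp
      linarith
    · have hlt : dist p ((g ^ (k + 1 + 1)) p) = dist ((g ^ (k + 1)) p) (g⁻¹ p) := by
        rw [pow_succ' g (k + 1), IsometryEquiv.mul_apply, dist_comm _ (g⁻¹ p), dist_inv_left]
      unfold gromovProd at hback
      rw [hlt, dist_inv_apply] at *
      push_cast
      linarith [ih.2]

end Parabolic

section Parabolic

variable {X : Type*} [MetricSpace X] {δ : ℝ} {σ : X → X → ℝ → X} {a g : X ≃ᵢ X} {x : X}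
  {t : ℕ → X}

theorem Escapes.zpow_injective (hx : Escapes a x) : Function.Injective fun i : ℤ => a ^ i := by
  refine injective_zpow_iff_not_isOfFinOrder.2 fun h => ?_
  obtain ⟨n, hn, han⟩ := isOfFinOrder_iff_pow_eq_one.1 h
  obtain ⟨M, hM⟩ := hx.exists_forall_le_dist_zpow_mul 1
  have hfix : a ^ (M * (n : ℤ)) = 1 := by rw [mul_comm, zpow_mul, zpow_natCast, han, one_zpow]
  have := hM n (by exact_mod_cast hn.ne')
  rw [hfix, IsometryEquiv.coe_one, id_eq, dist_self] at this
  linarith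

theorem IsDiscreteSubgroup.exists_nat_forall_exists_lt_dist_conj {Γ : Subgroup (X ≃ᵢ X)}
    (hd : IsDiscreteSubgroup Γ) (haΓ : a ∈ Γ) (ha : Function.Injective fun i : ℤ => a ^ i)
    (p : X) (R : ℝ) :
    ∃ I : ℕ, ∀ h ∈ Γ, ∃ i < I, R < dist p ((h * a ^ (i : ℤ) * h⁻¹) p) := by
  refine ⟨(hd p R).toFinset.card + 1, fun h hh => ?_⟩
  by_contra! hle
  have hcard := Finset.card_le_card_of_injOn (fun i : ℕ => h * a ^ (i : ℤ) * h⁻¹)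
    (s := Finset.range ((hd p R).toFinset.card + 1)) (t := (hd p R).toFinset)
    (fun i hi => (hd p R).mem_toFinset.2
      ⟨mul_mem (mul_mem hh (Γ.zpow_mem haΓ _)) (inv_mem hh), hle i (Finset.mem_range.1 hi)⟩)
    fun i _ j _ hij => by exact_mod_cast ha (mul_left_cancel (mul_right_cancel hij))
  rw [Finset.card_range] at hcard
  omega

namespace IsDeltaHyperbolic

theorem dist_inv_sub_le (hX : IsDeltaHyperbolic X δ) {y : X}
    (h : 2 * dist x (g x) ≤ gromovProd x (g y) y) :
    dist (g⁻¹ x) y - dist x y ≤ -(dist (g x) y - dist x y) + 2 * δ := by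
  have hsub := hX.busemann_sub_le (u := g x) (v := x) (s := y) (t := g y) (by
    rw [dist_comm]
    linarith [(abs_le.1 (abs_gromovProd_sub_le_base (g x) x y (g y))).1,
      gromovProd_comm x y (g y), dist_comm (g x) x])
  rw [g.isometry.dist_eq] at hsub
  rw [dist_inv_left]
  linarith

/-- `p` lies at distance `dist x (g x)` from `x` on the way to `y`; all points `z` close enough to
`y` at infinity see `g` push `p` away from them by the Busemann amount. -/
theorem gromovProd_bounds_of_push (hX : IsDeltaHyperbolic X δ) {p y z : X}
    (hp : dist x p = dist x (g x)) (hpy : dist x p + dist p y = dist x y)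
    (hyz : 2 * dist x (g x) ≤ gromovProd x y z)
    (hpush : dist p (g p) ≤ dist (g x) y - dist x y + 4 * δ)
    (hgz : dist p (g p) + dist x (g p) ≤ gromovProd x (g z) z) :
    gromovProd p (g p) z ≤ 4 * δ ∧ dist p (g p) - 5 * δ ≤ gromovProd p (g⁻¹ p) z ∧
      dist (g x) y - dist x y - 4 * δ ≤ dist p (g p) := by
  have hgx := dist_nonneg (x := x) (y := g x)
  have hx := hX.busemann_sub_le (u := x) (v := g x) (s := z) (t := y)
    (by rw [gromovProd_comm]; linarith)
  have hpz : dist x (g x) - δ ≤ gromovProd x p z := by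
    have hmin := hX.min_gromovProd_le x p y z
    have hpy' : gromovProd x p y = dist x (g x) := by unfold gromovProd; linarith
    linarith [le_min hpy'.ge (show dist x (g x) ≤ gromovProd x y z by linarith)]
  have htri := dist_triangle (g x) (g p) z
  rw [g.isometry.dist_eq] at htri
  have hgp := hX.busemann_sub_le (u := g p) (v := p) (s := z) (t := g z) (by
    rw [gromovProd_comm, dist_comm]
    linarith [(abs_le.1 (abs_gromovProd_sub_le_base (g p) x (g z) z)).1, dist_comm (g p) x])
  rw [g.isometry.dist_eq] at hgp
  have htri' := dist_triangle (g p) p z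
  rw [dist_comm (g p) p] at htri'
  unfold gromovProd at *
  rw [dist_inv_apply, dist_inv_left]
  refine ⟨?_, ?_, ?_⟩ <;> linarith

theorem dist_conj_le (hX : IsDeltaHyperbolic X δ) (hδ : 0 ≤ δ) {p y : X} {b h : X ≃ᵢ X} {R : ℝ}
    (hp : dist p (b p) ≤ R) (hy : dist y (b y) ≤ δ) (hhp : gromovProd p (h p) y ≤ 5 * δ)
    (hhy : 8 * δ + dist p x < gromovProd x (h y) y) (hR : R + 15 * δ ≤ 2 * dist p (h p)) :
    dist p ((h * b * h⁻¹) p) ≤ 19 * δ := by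
  rw [dist_conj_apply']
  have hinv : gromovProd (h⁻¹ p) p y ≤ 7 * δ := by
    rw [← gromovProd_map h, IsometryEquiv.apply_inv_self, gromovProd_comm]
    have hbase := (abs_le.1 (abs_gromovProd_sub_le_base p x (h y) y)).1
    rw [gromovProd_comm] at hhp
    have := hX.gromovProd_le (D := 6 * δ) (by linarith) (hhp.trans (by linarith))
    linarith
  have := hX.disp_le hδ b hp hy hinv (by rw [dist_inv_apply]; linarith)
  linarith

end IsDeltaHyperbolic

theorem Escapes.exists_eventually_pushed (hσ : IsGCB σ) (hX : IsDeltaHyperbolic X δ)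
    (hδ : 0 < δ) (hat : ∀ i : ℤ, ∀ᶠ n in atTop, dist (t n) ((a ^ i) (t n)) ≤ δ)
    (hx : Escapes a x) (hg : g ∈ endStabilizer hX x t (hx.tendsto_dist hat))
    (hpush : ∃ᶠ n in atTop, 22 * δ < dist (g x) (t n) - dist x (t n)) :
    ∃ p, 16 * δ ≤ dist p (g p) ∧ ∀ᶠ m in atTop, gromovProd p (g p) (t m) ≤ 4 * δ ∧
      dist p (g p) - 5 * δ ≤ gromovProd p (g⁻¹ p) (t m) := by
  rw [mem_endStabilizer] at hg
  obtain ⟨k₀, hk₀⟩ := hx.eventually_le_gromovProd hat hX (2 * dist x (g x))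
  obtain ⟨n, hs, hgn, hn⟩ := (hpush.and_eventually
    ((hg (2 * dist x (g x))).and (eventually_ge_atTop k₀))).exists
  have hgx := dist_nonneg (x := x) (y := g x)
  obtain ⟨l, -, hxp, hpt⟩ := hσ.exists_dist_eq x (t n) hgx
    (by linarith [gromovProd_le_right x (g (t n)) (t n)])
  set p := σ x (t n) l
  have hgp : dist p (g p) ≤ dist (g x) (t n) - dist x (t n) + 4 * δ := by
    refine (hX.disp_le_max (by linarith) (by linarith) (by linarith)).trans ?_
    rw [max_eq_left (by linarith [hX.dist_inv_sub_le hgn])]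
  have hev : ∀ᶠ m in atTop, gromovProd p (g p) (t m) ≤ 4 * δ ∧
      dist p (g p) - 5 * δ ≤ gromovProd p (g⁻¹ p) (t m) ∧
      dist (g x) (t n) - dist x (t n) - 4 * δ ≤ dist p (g p) := by
    filter_upwards [eventually_ge_atTop k₀, hg (dist p (g p) + dist x (g p))] with m hm hgm
    exact hX.gromovProd_bounds_of_push hxp (by linarith) (hk₀ n hn m hm) hgp hgm
  obtain ⟨m, -, -, hm⟩ := hev.exists
  exact ⟨p, by linarith, hev.mono fun m hm => ⟨hm.1, hm.2.1⟩⟩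

/-- If `g` pushed points away from the end, a high power `h` of `g` would conjugate many powers of
`a` to isometries moving the pushed point a bounded distance. -/
theorem Escapes.eventually_dist_sub_dist_le (hσ : IsGCB σ) (hX : IsDeltaHyperbolic X δ)
    (hδ : 0 < δ) (hat : ∀ i : ℤ, ∀ᶠ n in atTop, dist (t n) ((a ^ i) (t n)) ≤ δ)
    (hx : Escapes a x) {Γ : Subgroup (X ≃ᵢ X)} (hd : IsDiscreteSubgroup Γ) (haΓ : a ∈ Γ)
    (hgΓ : g ∈ Γ) (hg : g ∈ endStabilizer hX x t (hx.tendsto_dist hat)) :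
    ∀ᶠ n in atTop, dist (g x) (t n) - dist x (t n) ≤ 22 * δ := by
  by_contra hpush
  simp only [Filter.not_eventually, not_le] at hpush
  obtain ⟨p, hp, hev⟩ := hx.exists_eventually_pushed hσ hX hδ hat hg hpush
  obtain ⟨I, hI⟩ := hd.exists_nat_forall_exists_lt_dist_conj haΓ hx.zpow_injective p (19 * δ)
  obtain ⟨R, hR⟩ := ((Finset.range I).image fun i : ℕ => dist p ((a ^ (i : ℤ)) p)).bddAbove
  obtain ⟨k, hk⟩ := exists_nat_gt ((R + 15 * δ) / (4 * δ))
  rw [div_lt_iff₀ (by linarith)] at hk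
  have hfar := mem_endStabilizer.1 (pow_mem hg (k + 1)) (8 * δ + dist p x + 1)
  have hfix : ∀ᶠ m in atTop, ∀ i ∈ Finset.range I, dist (t m) ((a ^ (i : ℤ)) (t m)) ≤ δ :=
    (Filter.eventually_all_finset _).2 fun i _ => hat i
  obtain ⟨m, ⟨hgp, hgp'⟩, hm, hmfix⟩ := (hev.and (hfar.and hfix)).exists
  obtain ⟨hdir, hdist⟩ := hX.gromovProd_pow_le hgp hgp' hp hδ k
  obtain ⟨i, hi, hlt⟩ := hI _ (pow_mem hgΓ (k + 1))
  refine hlt.not_ge (hX.dist_conj_le hδ.le (hR (Finset.mem_coe.2 (Finset.mem_image_of_mem _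
    (Finset.mem_range.2 hi)))) (hmfix i (Finset.mem_range.2 hi)) hdir (by linarith) (by linarith))

theorem fg_inf_of_relIndex_ne_zero {G : Type*} [Group G] {Γ E : Subgroup G} (hΓ : Γ.FG)
    (hE : E.relIndex Γ ≠ 0) : (E ⊓ Γ).FG := by
  have : Group.FG Γ := (Group.fg_iff_subgroup_fg Γ).2 hΓ
  have : (E.subgroupOf Γ).FiniteIndex := ⟨hE⟩
  have hfg : (E.subgroupOf Γ).FG := (Group.fg_iff_subgroup_fg _).1 inferInstance
  rw [Subgroup.fg_iff_submonoid_fg, ← Subgroup.subgroupOf_map_subtype]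
  exact ((Subgroup.fg_iff_submonoid_fg _).1 hfg).map Γ.subtype

theorem Escapes.exists_forall_mem_disp_le (hσ : IsGCB σ) (hX : IsDeltaHyperbolic X δ)
    (hδ : 0 < δ) (hat : ∀ i : ℤ, ∀ᶠ n in atTop, dist (t n) ((a ^ i) (t n)) ≤ δ)
    (hx : Escapes a x) {Γ : Subgroup (X ≃ᵢ X)} (hd : IsDiscreteSubgroup Γ) (haΓ : a ∈ Γ)
    {B : Set (X ≃ᵢ X)} (hB : B.Finite) (hBinv : ∀ g ∈ B, g⁻¹ ∈ B)
    (hBE : ∀ g ∈ B, g ∈ endStabilizer hX x t (hx.tendsto_dist hat) ⊓ Γ) :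
    ∃ p, ∀ g ∈ B, dist p (g p) ≤ 26 * δ := by
  obtain ⟨R, hR⟩ := (hB.image fun g => dist x (g x)).bddAbove
  replace hR : ∀ g ∈ B, dist x (g x) ≤ max R 0 := fun g hg =>
    (hR (Set.mem_image_of_mem _ hg)).trans (le_max_left _ _)
  have hev : ∀ᶠ m in atTop, ∀ g ∈ B,
      dist (g x) (t m) - dist x (t m) ≤ 22 * δ ∧ 2 * max R 0 ≤ gromovProd x (g (t m)) (t m) :=
    (Filter.eventually_all_finite hB).2 fun g hg =>
      (hx.eventually_dist_sub_dist_le hσ hX hδ hat hd haΓ (hBE g hg).2 (hBE g hg).1).and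
        (mem_endStabilizer.1 (hBE g hg).1 _)
  obtain ⟨m, hm, hfar⟩ :=
    (hev.and ((hx.tendsto_dist hat).eventually_ge_atTop (max R 0))).exists
  obtain ⟨l, -, hxp, hpt⟩ := hσ.exists_dist_eq x (t m) (le_max_right R 0) hfar
  refine ⟨σ x (t m) l, fun g hg => ?_⟩
  refine (hX.disp_le_max (by linarith) (by rw [hxp]; exact hR g hg) ?_).trans ?_
  · linarith [hR g hg, (hm g hg).2]
  · linarith [max_le (hm g hg).1 (hm g⁻¹ (hBinv g hg)).1]

theorem IsGCB.isVirtuallyNilpotent_of_endStabilizer {P r₀ : ℝ} (hσ : IsGCB σ)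
    (hX : IsDeltaHyperbolic X δ) (hP : IsPacked X P r₀) (hr₀ : 0 < r₀) (hδ : 0 < δ)
    (hat : ∀ i : ℤ, ∀ᶠ n in atTop, dist (t n) ((a ^ i) (t n)) ≤ δ)
    (hx : Escapes a x) {Γ : Subgroup (X ≃ᵢ X)} (hd : IsDiscreteSubgroup Γ) (haΓ : a ∈ Γ)
    (hΓσ : Γ ≤ sigmaIsometries σ) (hfg : Γ.FG)
    (hi : (endStabilizer hX x t (hx.tendsto_dist hat)).relIndex Γ ≠ 0) :
    IsVirtuallyNilpotent ↥Γ := by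
  obtain ⟨S, hS⟩ := fg_inf_of_relIndex_ne_zero hfg hi
  refine IsVirtuallyNilpotent.of_relIndex_ne_zero
    (Λ := endStabilizer hX x t (hx.tendsto_dist hat) ⊓ Γ) inf_le_right
    (by rwa [Subgroup.inf_relIndex_right]) ?_
  obtain ⟨n, hn⟩ := exists_isVirtuallyNilpotent_of_wordBall P r₀ hr₀ (26 * δ)
  obtain ⟨p, hp⟩ := hx.exists_forall_mem_disp_le hσ hX hδ hat hd haΓ
    (finite_wordBall S.finite_toSet n) (fun _ => inv_mem_wordBall)
    fun g hg => hS.le (wordBall_subset_closure n hg)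
  rw [← hS]
  refine hn X σ hσ hP S (fun g hg => hΓσ ?_) ?_ p hp
  · exact (hS ▸ Subgroup.subset_closure hg : g ∈ _ ⊓ Γ).2
  · rw [hS]
    exact fun y r => (hd y r).subset fun g hg => ⟨hg.1.2, hg.2⟩

end Parabolic

/-! ### Thin sets -/

section GromovConvex

variable {X : Type*} [MetricSpace X] {δ lam : ℝ}

/-- A coarse form of convexity: the Gromov product of two points of `Y`, which measures the
distance to a geodesic between them, is at least the distance to `Y`, up to `lam`. -/
def IsGromovConvex (lam : ℝ) (Y : Set X) : Prop :=
  ∀ o : X, ∀ m : ℝ, (∀ s ∈ Y, m ≤ dist o s) → ∀ p ∈ Y, ∀ q ∈ Y, m - lam ≤ gromovProd o p q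

theorem IsGromovConvex.image {Y : Set X} (hY : IsGromovConvex lam Y) (g : X ≃ᵢ X) :
    IsGromovConvex lam (g '' Y) := by
  rintro o m hm _ ⟨p, hp, rfl⟩ _ ⟨q, hq, rfl⟩
  rw [← IsometryEquiv.apply_inv_self g o, gromovProd_map]
  refine hY _ m (fun s hs => ?_) p hp q hq
  rw [dist_inv_left]
  exact hm _ (Set.mem_image_of_mem _ hs)

theorem exists_dist_le_infDist_add {Y : Set X} (hY : Y.Nonempty) (hδ : 0 < δ) (o : X) :
    ∃ y ∈ Y, dist o y ≤ infDist o Y + δ := by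
  obtain ⟨y, hy, h⟩ := (infDist_lt_iff hY).1 (lt_add_of_pos_right (infDist o Y) hδ)
  exact ⟨y, hy, h.le⟩

theorem IsGromovConvex.infDist_le (hX : IsDeltaHyperbolic X δ) (hδ : 0 < δ) (hlam : 0 ≤ lam)
    {Y Z : Set X} (hY : IsGromovConvex lam Y) (hZ : IsGromovConvex lam Z) {o p u v : X} {R : ℝ}
    (hp : p ∈ Y) (hop : dist o p ≤ infDist o Y + δ) (hYZ : infDist o Z ≤ infDist o Y)
    (hu : u ∈ Y) (hv : v ∈ Z) (huv : dist u v ≤ R) : infDist p Z ≤ R + 2 * lam + 5 * δ := by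
  obtain ⟨y, hy, hoy⟩ := exists_dist_le_infDist_add ⟨v, hv⟩ hδ o
  set D := infDist p Z
  have hD : ∀ s ∈ Z, D ≤ dist p s := fun s hs => infDist_le_dist_of_mem hs
  have hou := hY o _ (fun s hs => infDist_le_dist_of_mem hs) p hp u hu
  have hsum := gromovProd_add_gromovProd p o u
  have hyv := hZ p D hD y hy v hv
  have hvu : D - R ≤ gromovProd p v u := by
    have := (abs_le.1 (abs_gromovProd_sub_le p v u v)).1
    rw [gromovProd_self] at this
    linarith [hD v hv]
  have hoy' : (D - δ) / 2 ≤ gromovProd p o y := by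
    unfold gromovProd
    rw [dist_comm p o]
    linarith [hD y hy, infDist_le_dist_of_mem (x := o) hp]
  have hR : 0 ≤ R := dist_nonneg.trans huv
  rcases min_le_iff.1 (hX.min_gromovProd_le p o y u) with h | h
  · linarith
  · rcases min_le_iff.1 (hX.min_gromovProd_le p y v u) with h' | h' <;> linarith

/-- A coarse Helly property: among the points of the sets closest to a fixed basepoint, the one
furthest from the basepoint is close to all the sets. -/
theorem IsDeltaHyperbolic.exists_dist_le_of_pairwise (hX : IsDeltaHyperbolic X δ) (hδ : 0 < δ)
    (hlam : 0 ≤ lam) {ι : Type*} {F : Finset ι} (hF : F.Nonempty) {Y : ι → Set X} {R : ℝ}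
    (hY : ∀ i ∈ F, IsGromovConvex lam (Y i))
    (hR : ∀ i ∈ F, ∀ j ∈ F, ∃ u ∈ Y i, ∃ v ∈ Y j, dist u v ≤ R) :
    ∃ p, ∀ i ∈ F, ∃ y ∈ Y i, dist p y ≤ R + 2 * lam + 6 * δ := by
  have hne : ∀ i ∈ F, (Y i).Nonempty := fun i hi =>
    let ⟨u, hu, _⟩ := hR i hi i hi
    ⟨u, hu⟩
  obtain ⟨k, hk⟩ := id hF
  obtain ⟨o, -⟩ := hne k hk
  obtain ⟨i₀, hi₀, hmax⟩ := F.exists_max_image (fun i => infDist o (Y i)) hF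
  obtain ⟨p, hp, hop⟩ := exists_dist_le_infDist_add (hne i₀ hi₀) hδ o
  refine ⟨p, fun i hi => ?_⟩
  obtain ⟨w, hw, hpw⟩ := exists_dist_le_infDist_add (hne i hi) hδ p
  obtain ⟨u, hu, v, hv, huv⟩ := hR i₀ hi₀ i hi
  exact ⟨w, hw, by
    linarith [(hY i₀ hi₀).infDist_le hX hδ hlam (hY i hi) hp hop (hmax i hi) hu hv huv]⟩

end GromovConvex

section ThinSet

variable {X : Type*} [MetricSpace X] {δ H : ℝ} {σ : X → X → ℝ → X} {a : X ≃ᵢ X}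

/-- The points moved at most `H` by some nontrivial power of `a`. Only powers of translation length
at most `H / 2` count, so that the set is coarsely convex. -/
def thinSet (a : X ≃ᵢ X) (H : ℝ) : Set X :=
  {p | ∃ i : ℤ, i ≠ 0 ∧ |(i : ℝ)| * transLength a ≤ H / 2 ∧ dist p ((a ^ i) p) ≤ H}

theorem IsGCB.lt_disp_of_notMem_thinSet (hσ : IsGCB σ) (ha : IsSigmaIsometry σ a) {p : X}
    (hH : 0 < H) (hp : p ∉ thinSet a H) {j : ℤ} (hj : j ≠ 0) : H / 2 < dist p ((a ^ j) p) := by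
  by_contra! h
  exact hp ⟨j, hj, (hσ.abs_mul_transLength_le_disp ha j p).trans h, by linarith⟩

theorem zpow_apply_mem_thinSet {p : X} (hp : p ∈ thinSet a H) (j : ℤ) :
    (a ^ j) p ∈ thinSet a H := by
  obtain ⟨i, hi, hlen, hdisp⟩ := hp
  exact ⟨i, hi, hlen, by rwa [← IsometryEquiv.mul_apply, ← zpow_add, add_comm, zpow_add,
    IsometryEquiv.mul_apply, IsometryEquiv.dist_eq]⟩

theorem thinSet_nonempty [Nonempty X] (hH : 0 < H) (ha : transLength a < H / 2) :
    (thinSet a H).Nonempty := by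
  obtain ⟨y, hy⟩ := exists_disp_lt a (show 0 < H / 2 by linarith)
  exact ⟨y, 1, one_ne_zero, by simpa using ha.le, by rw [zpow_one]; linarith⟩

theorem exists_dist_zpow_le_and_dist_zpow_le [Nonempty X] (hH : 0 < H) {i j : ℤ} (hi : i ≠ 0)
    (hia : |(i : ℝ)| * transLength a ≤ H / 2) (hja : |(j : ℝ)| * transLength a ≤ H / 2) :
    ∃ t, dist t ((a ^ i) t) ≤ H ∧ dist t ((a ^ j) t) ≤ H := by
  have hi₀ : 0 < |(i : ℝ)| := abs_pos.2 (Int.cast_ne_zero.2 hi)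
  obtain ⟨t, ht⟩ := exists_disp_lt a (η := H / 2 / (|(i : ℝ)| + |(j : ℝ)|)) (by positivity)
  have hsmall : ∀ k : ℤ, |(k : ℝ)| ≤ |(i : ℝ)| + |(j : ℝ)| →
      |(k : ℝ)| * transLength a ≤ H / 2 → dist t ((a ^ k) t) ≤ H := by
    intro k hk hka
    refine (dist_zpow_apply_le a t k).trans
      ((mul_le_mul_of_nonneg_left ht.le (abs_nonneg _)).trans ?_)
    have : |(k : ℝ)| * (H / 2 / (|(i : ℝ)| + |(j : ℝ)|)) ≤ H / 2 := by
      rw [mul_div_assoc', div_le_iff₀ (by positivity), mul_comm]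
      gcongr
    linarith
  exact ⟨t, hsmall i (by linarith [abs_nonneg (j : ℝ)]) hia, hsmall j (by linarith) hja⟩

/-- Any two thin points are joined through a common point `t` moved little by both powers of `a`
involved, and displacement is convex along the two segments. -/
theorem IsGCB.isGromovConvex_thinSet (hσ : IsGCB σ) (hX : IsDeltaHyperbolic X δ)
    (ha : IsSigmaIsometry σ a) (hH : 0 < H) : IsGromovConvex (3 * δ) (thinSet a H) := by
  rintro o m hm p ⟨i, hi, hia, hpi⟩ q ⟨j, hj, hja, hqj⟩
  have : Nonempty X := ⟨o⟩
  obtain ⟨t, hti, htj⟩ := exists_dist_zpow_le_and_dist_zpow_le hH hi hia hja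
  have hseg : ∀ (k : ℤ) (p : X), k ≠ 0 → |(k : ℝ)| * transLength a ≤ H / 2 →
      dist p ((a ^ k) p) ≤ H → dist t ((a ^ k) t) ≤ H → m - 2 * δ ≤ gromovProd o p t := by
    intro k p hk hka hpk htk
    obtain ⟨l, hl, h⟩ := hX.exists_dist_le_gromovProd hσ o p t
    have hdisp := hσ.disp_sigma_le ((sigmaIsometries σ).zpow_mem ha k) p t hl
    linarith [hm (σ p t l) ⟨k, hk, hka, hdisp.trans (by nlinarith [hl.1, hl.2])⟩]
  have hpt := hseg i p hi hia hpi hti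
  have htq := gromovProd_comm o q t ▸ hseg j q hj hja hqj htj
  linarith [le_min hpt htq, hX.min_gromovProd_le o p t q]

theorem IsGCB.lt_disp_and_le_gromovProd_of_thinSet (hσ : IsGCB σ) (hX : IsDeltaHyperbolic X δ)
    (hδ : 0 < δ) (ha : IsSigmaIsometry σ a) {z y : X} {D : ℝ} (hD : 50 * δ < D)
    (hy : y ∈ thinSet a (100 * δ)) (hzy : dist z y = D / 2)
    (hz : ∀ s ∈ thinSet a (100 * δ), D / 2 - δ ≤ dist z s) {j : ℤ} (hj : j ≠ 0) :
    10 * δ < dist z ((a ^ j) z) ∧ 10 * δ ≤ gromovProd z ((a ^ j) z) y := by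
  have hz₀ : z ∉ thinSet a (100 * δ) := fun h => by
    have := hz z h
    rw [dist_self] at this
    linarith
  have hdisp := hσ.lt_disp_of_notMem_thinSet ha (by linarith) hz₀ hj
  have hyj := zpow_apply_mem_thinSet hy j
  have hconv := hσ.isGromovConvex_thinSet hX ha (by linarith) z _ hz _ hyj y hy
  have hzj : 20 * δ ≤ gromovProd z ((a ^ j) z) ((a ^ j) y) := by
    unfold gromovProd
    rw [IsometryEquiv.dist_eq, hzy]
    linarith [hz _ hyj]
  exact ⟨by linarith, by
    linarith [le_min hzj (show 20 * δ ≤ gromovProd z ((a ^ j) y) y by linarith),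
      hX.min_gromovProd_le z ((a ^ j) z) ((a ^ j) y) y]⟩

theorem exists_dist_map_le_dist_map_add {Y : Set X} (hY : Y.Nonempty) (g : X ≃ᵢ X)
    (hδ : 0 < δ) :
    ∃ y ∈ Y, ∃ y' ∈ Y, ∀ u ∈ Y, ∀ v ∈ Y, dist y (g y') ≤ dist u (g v) + δ := by
  set S : Set ℝ := (fun q : X × X => dist q.1 (g q.2)) '' (Y ×ˢ Y)
  have hSb : BddBelow S := ⟨0, Set.forall_mem_image.2 fun _ _ => dist_nonneg⟩
  obtain ⟨_, ⟨⟨y, y'⟩, ⟨hy, hy'⟩, rfl⟩, hlt⟩ :=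
    exists_lt_of_csInf_lt ((hY.prod hY).image _) (lt_add_of_pos_right (sInf S) hδ)
  exact ⟨y, hy, y', hy', fun u hu v hv => hlt.le.trans (add_le_add_left
    (csInf_le hSb (Set.mem_image_of_mem _ (Set.mk_mem_prod hu hv))) δ)⟩

/-- Seen from the midpoint of a shortest segment between the thin set of `a` and its image under
`g`, the powers of `a` point towards the thin set and those of `g * a * g⁻¹` towards its image. -/
theorem IsGCB.isPingPong_of_thinSet (hσ : IsGCB σ) (hX : IsDeltaHyperbolic X δ) (hδ : 0 < δ)
    (ha : IsSigmaIsometry σ a) (hne : (thinSet a (100 * δ)).Nonempty) (g : X ≃ᵢ X)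
    (hfar : ∀ u ∈ thinSet a (100 * δ), ∀ v ∈ thinSet a (100 * δ), 50 * δ < dist u (g v))
    {n : ℕ} (hn : n ≠ 0) : IsPingPong (a ^ n) (g * a * g⁻¹ * a) := by
  obtain ⟨y, hy, y', hy', hmin⟩ := exists_dist_map_le_dist_map_add hne g hδ
  have hD := hfar y hy y' hy'
  set D := dist y (g y')
  obtain ⟨l, -, hyz, hzy'⟩ := hσ.exists_dist_eq y (g y') (s := D / 2) (by linarith) (by linarith)
  set z := σ y (g y') l
  have hu : ∀ j : ℤ, j ≠ 0 → _ := fun j =>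
    hσ.lt_disp_and_le_gromovProd_of_thinSet hX hδ ha hD hy ((dist_comm z y).trans hyz) (j := j)
      fun s hs => by linarith [hmin s hs y' hy', dist_triangle s z (g y'), dist_comm s z]
  have hv : ∀ j : ℤ, j ≠ 0 → _ := fun j =>
    hσ.lt_disp_and_le_gromovProd_of_thinSet hX hδ ha hD hy' (z := g⁻¹ z) (j := j)
      (by rw [dist_inv_left]; linarith) fun s hs => by
        rw [dist_inv_left]
        linarith [hmin y hy s hs, dist_triangle y z (g s)]
  refine hX.isPingPong_pow_mul hδ.le (D := 2 * δ) (z := z) (fun j k hj hk => ?_)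
    (fun j hj => by linarith [(hu j hj).1]) (fun j hj => ?_) hn
  · have hzy := (hu j hj).2
    have hzgy := (hv k hk).2
    rw [← gromovProd_map g, IsometryEquiv.apply_inv_self] at hzgy
    rw [conj_zpow, gromovProd_comm]
    have hopp := hX.gromovProd_le (z := z) (p := (a ^ j) z) (q := y) (r := g y') (D := 0)
      (by linarith) (by unfold gromovProd; linarith [dist_comm z y])
    exact (hX.gromovProd_le (z := z) (q := g y') (D := δ)
      (by rw [IsometryEquiv.mul_apply, IsometryEquiv.mul_apply]; linarith)
      (by rw [gromovProd_comm]; linarith)).trans (by linarith)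
  · rw [conj_zpow, dist_conj_apply']
    linarith [(hv j hj).1]

end ThinSet

section ElementaryHull

variable {X : Type*} [MetricSpace X] {δ : ℝ} {σ : X → X → ℝ → X} {a : X ≃ᵢ X}

theorem eventually_dist_zpow_le {t : ℕ → X} {δ : ℝ}
    (ht : ∀ n : ℕ, dist (t n) (a (t n)) ≤ δ / (n + 1)) (i : ℤ) :
    ∀ᶠ n in atTop, dist (t n) ((a ^ i) (t n)) ≤ δ := by
  filter_upwards [eventually_ge_atTop i.natAbs] with n hn
  have hi : |(i : ℝ)| ≤ n + 1 := by
    rw [← Int.cast_abs, Int.abs_eq_natAbs, Int.cast_natCast]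
    exact_mod_cast hn.trans n.le_succ
  calc dist (t n) ((a ^ i) (t n)) ≤ |(i : ℝ)| * dist (t n) (a (t n)) :=
        dist_zpow_apply_le a (t n) i
    _ ≤ (n + 1) * (δ / (n + 1)) := by gcongr; exact ht n
    _ = δ := by field_simp

/-- `E` is the stabilizer of the ends of `a`: the coarse stabilizer of its axis if `a` has positive
translation length, and the stabilizer of its fixed end otherwise. -/
theorem IsGCB.exists_elementary_hull [Nonempty X] {P r₀ : ℝ} (hσ : IsGCB σ)
    (hX : IsDeltaHyperbolic X δ) (hP : IsPacked X P r₀) (hr₀ : 0 < r₀) (hδ : 0 < δ)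
    (ha : IsSigmaIsometry σ a) (hae : IsNonElliptic a) {Γ : Subgroup (X ≃ᵢ X)}
    (hd : IsDiscreteSubgroup Γ) (haΓ : a ∈ Γ) (hΓσ : Γ ≤ sigmaIsometries σ) (hfg : Γ.FG) :
    ∃ E : Subgroup (X ≃ᵢ X), (E.relIndex Γ ≠ 0 → IsVirtuallyNilpotent ↥Γ) ∧
      ∀ (g : X ≃ᵢ X) (m l : ℤ), m ≠ 0 → l ≠ 0 →
        IsVirtuallyNilpotent ↥(Subgroup.closure ({a ^ m, g * a ^ l * g⁻¹} : Set (X ≃ᵢ X))) →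
          g ∈ E := by
  obtain ⟨x⟩ := id ‹Nonempty X›
  rcases (transLength_nonneg a).eq_or_lt' with hl | hl
  · choose t ht using fun n : ℕ => exists_disp_lt a (show 0 < δ / (n + 1) by positivity)
    have hat := eventually_dist_zpow_le fun n => (ht n).le.trans (by rw [hl, zero_add])
    have hx := hae.escapes hd haΓ x
    exact ⟨endStabilizer hX x t (hx.tendsto_dist hat),
      hσ.isVirtuallyNilpotent_of_endStabilizer hX hP hr₀ hδ hat hx hd haΓ hΓσ hfg,
      fun g m l hm hl hv => hx.mem_endStabilizer_of_isVirtuallyNilpotent hat hX hδ hm hl hv⟩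
  · exact ⟨coarseStabilizer a x, hσ.isVirtuallyNilpotent_of_coarseStabilizer hX hδ ha hl hd haΓ x,
      fun g m l hm hl0 hv => hσ.mem_coarseStabilizer hX hδ ha hl x hm hl0 hv⟩

end ElementaryHull

section ThinToThinner

universe u

theorem exists_uniform_dist_zpow_le (P r₀ R η : ℝ) (hr₀ : 0 < r₀) (hη : 0 < η) :
    ∃ n : ℕ, ∀ (X : Type u) [MetricSpace X] (σ : X → X → ℝ → X), IsGCB σ → IsPacked X P r₀ →
      ∀ (b : X ≃ᵢ X) (q : X), (∀ k ≤ n, dist q ((b ^ k) q) ≤ R) →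
        ∃ m : ℤ, m ≠ 0 ∧ dist q ((b ^ m) q) ≤ η := by
  obtain ⟨n, hn⟩ := exists_uniform_pigeonhole.{u} P r₀ hr₀ R η hη
  refine ⟨n, fun X _ σ hσ hP b q hq => ?_⟩
  obtain ⟨k, l, hkl, hclose⟩ := hn X σ hσ hP q (fun k => (b ^ (k : ℕ)) q) fun k => by
    rw [dist_comm]
    exact hq k (Nat.lt_succ_iff.1 k.2)
  refine ⟨-(k : ℕ) + (l : ℕ), fun h => hkl (Fin.ext (by omega)), ?_⟩
  rwa [zpow_add, IsometryEquiv.mul_apply, zpow_neg, dist_inv_right, zpow_natCast, zpow_natCast]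

variable {X : Type*} [MetricSpace X] {δ H ε : ℝ} {σ : X → X → ℝ → X} {a : X ≃ᵢ X} {p : X}

theorem IsDeltaHyperbolic.dist_pow_le_of_gromovProd_le (hX : IsDeltaHyperbolic X δ)
    (hδ : 0 ≤ δ) {b : X ≃ᵢ X} {q t : X} {n k : ℕ} (hk : k ≤ n) (hp : dist p (b p) ≤ H)
    (ht : n * dist t (b t) ≤ δ) (hq : gromovProd q p t ≤ 0) (hpq : n * H + δ ≤ 2 * dist p q) :
    dist q ((b ^ k) q) ≤ 5 * δ := by
  have hpk : dist p ((b ^ k) p) ≤ n * H := (dist_pow_apply_le b p k).trans (by gcongr)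
  have htk : dist t ((b ^ k) t) ≤ δ :=
    (dist_pow_apply_le b t k).trans (le_trans (by gcongr) ht)
  linarith [hX.disp_le hδ (b ^ k) hpk htk hq (by linarith)]

theorem exists_disp_le_and_mul_disp_le [Nonempty X] (ha : transLength a < ε) {c r : ℝ}
    (hc : 0 ≤ c) (hr : c * transLength a < r) :
    ∃ t, dist t (a t) ≤ ε ∧ c * dist t (a t) ≤ r := by
  rcases hc.eq_or_lt with rfl | hc
  · obtain ⟨t, ht⟩ := exists_disp_lt a (sub_pos.2 ha)
    exact ⟨t, by linarith, by linarith⟩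
  · obtain ⟨t, ht⟩ := exists_disp_lt a (sub_pos.2 (lt_min ha ((lt_div_iff₀' hc).2 hr)))
    rw [add_sub_cancel, lt_min_iff, lt_div_iff₀' hc] at ht
    exact ⟨t, ht.1.le, ht.2.le⟩

/-- If `a ^ i` has very small translation length, moving from `p` towards a point almost realizing
it makes the first `n` powers of `a ^ i` displace little. -/
theorem IsGCB.exists_forall_dist_zpow_pow_le (hσ : IsGCB σ) (hX : IsDeltaHyperbolic X δ)
    (hδ : 0 < δ) (ha : transLength a < ε) {i : ℤ} {n : ℕ} (hp : dist p ((a ^ i) p) ≤ H)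
    (hi : n * (|(i : ℝ)| * transLength a) < δ) :
    ∃ q, dist p q ≤ (n * H + δ) / 2 ∧
      (dist q (a q) ≤ ε ∨ ∀ k ≤ n, dist q (((a ^ i) ^ k) q) ≤ 5 * δ) := by
  have : Nonempty X := ⟨p⟩
  have hH : 0 ≤ H := dist_nonneg.trans hp
  obtain ⟨t, hta, hti⟩ := exists_disp_le_and_mul_disp_le ha (by positivity)
    ((mul_assoc _ _ _).trans_lt hi)
  by_cases hpt : dist p t ≤ (n * H + δ) / 2
  · exact ⟨t, hpt, Or.inl hta⟩
  obtain ⟨l, -, hpq, hqt⟩ := hσ.exists_dist_eq p t (s := (n * H + δ) / 2) (by positivity)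
    (not_le.1 hpt).le
  refine ⟨σ p t l, hpq.le, Or.inr fun k hk => ?_⟩
  refine hX.dist_pow_le_of_gromovProd_le (t := t) hδ.le hk hp ?_ ?_ (by linarith)
  · exact le_trans (by rw [mul_assoc]; gcongr; exact dist_zpow_apply_le a t i) hti
  · unfold gromovProd
    linarith [dist_comm p (σ p t l)]

theorem IsGCB.exists_disp_le_and_dist_le (hσ : IsGCB σ) (hX : IsDeltaHyperbolic X δ)
    (hδ : 0 < δ) (ha : IsSigmaIsometry σ a) (hε : transLength a < ε) {j : ℤ}
    (hj : 1000 * δ ≤ |(j : ℝ)| * transLength a) (p : X) :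
    ∃ q, dist q (a q) ≤ ε ∧ dist p q ≤ dist p ((a ^ j) p) + 6 * δ := by
  have : Nonempty X := ⟨p⟩
  have hlen : |(j : ℝ)| * transLength a ≤ transLength (a ^ j) :=
    le_transLength fun z => hσ.abs_mul_transLength_le_disp ha j z
  obtain ⟨t, hta, htj⟩ := exists_disp_le_and_mul_disp_le hε (abs_nonneg (j : ℝ))
    (lt_add_of_pos_right _ hδ)
  have hax := hσ.isAxisPoint ((sigmaIsometries σ).zpow_mem ha j) (hj.trans hlen)
    ((dist_zpow_apply_le a t j).trans (htj.trans (by gcongr)))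
  obtain ⟨k, hk⟩ := exists_closest_zpow hδ (a ^ j) t p
  refine ⟨((a ^ j) ^ k) t, ?_, (hax.zpow_apply k).dist_le_disp_of_closest hX hδ fun m => ?_⟩
  · rwa [← zpow_mul, disp_zpow_apply]
  · rw [zpow_apply_zpow_apply]
    exact hk _

theorem exists_uniform_dist_le_of_mem_thinSet (P r₀ δ H ε : ℝ) (hr₀ : 0 < r₀) (hδ : 0 < δ)
    (hε : 0 < ε) :
    ∃ K : ℝ, ∀ (X : Type u) [MetricSpace X] (σ : X → X → ℝ → X), IsGCB σ →
      IsDeltaHyperbolic X δ → IsPacked X P r₀ → ∀ a : X ≃ᵢ X, IsSigmaIsometry σ a →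
        transLength a < ε → ∀ p ∈ thinSet a H,
          ∃ q, ∃ m : ℤ, m ≠ 0 ∧ dist q ((a ^ m) q) ≤ ε ∧ dist p q ≤ K := by
  obtain ⟨n, hn⟩ := exists_uniform_dist_zpow_le.{u} P r₀ (5 * δ) ε hr₀ hε
  refine ⟨1000 * n * H + 6 * δ, fun X _ σ hσ hX hP a ha hlt p ⟨i, hi, _, hp⟩ => ?_⟩
  have hnH : 0 ≤ n * H := mul_nonneg n.cast_nonneg (dist_nonneg.trans hp)
  rcases lt_or_ge (n * (|(i : ℝ)| * transLength a)) δ with hcase | hcase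
  · obtain ⟨q, hpq, hq | hq⟩ := hσ.exists_forall_dist_zpow_pow_le hX hδ hlt hp hcase
    · exact ⟨q, 1, one_ne_zero, by rwa [zpow_one], by linarith⟩
    · obtain ⟨m, hm, hqm⟩ := hn X σ hσ hP (a ^ i) q hq
      exact ⟨q, i * m, mul_ne_zero hi hm, by rwa [zpow_mul], by linarith⟩
  · obtain ⟨q, hq, hpq⟩ := hσ.exists_disp_le_and_dist_le hX hδ ha hlt
      (j := i * (1000 * n : ℕ)) (by
        rw [Int.cast_mul, abs_mul, Int.cast_natCast, Nat.abs_cast]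
        push_cast
        linarith) p
    refine ⟨q, 1, one_ne_zero, by rwa [zpow_one], hpq.trans ?_⟩
    rw [zpow_mul, zpow_natCast]
    have := (dist_pow_apply_le (a ^ i) p (1000 * n)).trans
      (mul_le_mul_of_nonneg_left hp (Nat.cast_nonneg _))
    push_cast at this
    linarith

end ThinToThinner

/-! ### Free semigroups -/

section FreeSemigroup

universe u

theorem exists_margulis_constant_conj (P r₀ : ℝ) (hr₀ : 0 < r₀) :
    ∃ ε : ℝ, 0 < ε ∧ ∀ (X : Type u) [MetricSpace X] (σ : X → X → ℝ → X), IsGCB σ →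
      IsPacked X P r₀ → ∀ Γ : Subgroup (X ≃ᵢ X), IsDiscreteSubgroup Γ → Γ ≤ sigmaIsometries σ →
        ∀ c ∈ Γ, ∀ c' ∈ Γ, ∀ g ∈ Γ, ∀ q q' : X, dist q (c q) ≤ ε → dist q' (c' q') ≤ ε →
          dist q (g q') ≤ ε →
            IsVirtuallyNilpotent ↥(Subgroup.closure ({c, g * c' * g⁻¹} : Set (X ≃ᵢ X))) := by
  obtain ⟨μ, hμ, hM⟩ := exists_margulis_constant.{u} P r₀ hr₀
  refine ⟨μ / 3, by positivity,
    fun X _ σ hσ hP Γ hd hΓσ c hc c' hc' g hg q q' hq hq' hqq' => ?_⟩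
  have hconj : g * c' * g⁻¹ ∈ Γ := mul_mem (mul_mem hg hc') (inv_mem hg)
  have hle : Subgroup.closure {c, g * c' * g⁻¹} ≤ Γ :=
    (Subgroup.closure_le _).2 (Set.pair_subset hc hconj)
  refine hM X σ hσ hP _ _ (hΓσ hc) (hΓσ hconj)
    (fun x R => (hd x R).subset fun k hk => ⟨hle hk.1, hk.2⟩) q (by linarith) ?_
  have := dist_apply_le_of_dist_le (g * c' * g⁻¹) q (g q')
  rw [dist_conj_apply] at this
  linarith

/-- The translates of the thin set have a point close to all of them, hence close to points moved
little by the corresponding conjugates of powers of `a`; two of these points are close. -/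
theorem exists_uniform_isVirtuallyNilpotent_of_thinSet_close (P r₀ δ H R η : ℝ) (hr₀ : 0 < r₀)
    (hδ : 0 < δ) (hH : 0 < H) (hη : 0 < η) :
    ∃ ε : ℝ, 0 < ε ∧ ε ≤ η ∧ ∃ n : ℕ, ∀ (X : Type u) [MetricSpace X] (σ : X → X → ℝ → X),
      IsGCB σ → IsDeltaHyperbolic X δ → IsPacked X P r₀ → ∀ Γ : Subgroup (X ≃ᵢ X),
        IsDiscreteSubgroup Γ → Γ ≤ sigmaIsometries σ → ∀ a ∈ Γ, transLength a < ε →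
          ∀ F : Finset (X ≃ᵢ X), F.card = n + 1 → (∀ u ∈ F, u ∈ Γ) →
            (∀ u ∈ F, ∀ v ∈ F, ∃ s ∈ u '' thinSet a H, ∃ s' ∈ v '' thinSet a H, dist s s' ≤ R) →
              ∃ u ∈ F, ∃ v ∈ F, u ≠ v ∧ ∃ m l : ℤ, m ≠ 0 ∧ l ≠ 0 ∧ IsVirtuallyNilpotent
                ↥(Subgroup.closure ({a ^ m, u⁻¹ * v * a ^ l * (u⁻¹ * v)⁻¹} : Set (X ≃ᵢ X))) := by
  obtain ⟨μ, hμ, hM⟩ := exists_margulis_constant_conj.{u} P r₀ hr₀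
  have hε : 0 < min μ η := lt_min hμ hη
  obtain ⟨K, hK⟩ := exists_uniform_dist_le_of_mem_thinSet.{u} P r₀ δ H (min μ η) hr₀ hδ hε
  obtain ⟨n, hn⟩ := exists_uniform_pigeonhole.{u} P r₀ hr₀ (R + 2 * (3 * δ) + 6 * δ + K)
    (min μ η) hε
  refine ⟨min μ η, hε, min_le_right _ _, n,
    fun X _ σ hσ hX hP Γ hd hΓσ a ha hlt F hF hFΓ hclose => ?_⟩
  obtain ⟨p, hp⟩ := hX.exists_dist_le_of_pairwise hδ (by positivity)
    (Finset.card_pos.1 (by omega)) (Y := fun u : X ≃ᵢ X => u '' thinSet a H)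
    (fun u _ => (hσ.isGromovConvex_thinSet hX (hΓσ ha) hH).image u) hclose
  have hthinner : ∀ u : F, ∃ q, ∃ m : ℤ, m ≠ 0 ∧ dist q ((a ^ m) q) ≤ min μ η ∧
      dist ((u : X ≃ᵢ X) q) p ≤ R + 2 * (3 * δ) + 6 * δ + K := by
    rintro ⟨u, hu⟩
    obtain ⟨_, ⟨y, hy, rfl⟩, hpy⟩ := hp u hu
    obtain ⟨q, m, hm, hqm, hyq⟩ := hK X σ hσ hX hP a (hΓσ ha) hlt y hy
    refine ⟨q, m, hm, hqm, ?_⟩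
    rw [dist_comm]
    linarith [dist_triangle p (u y) (u q), u.isometry.dist_eq y q]
  choose q m hm hqm hqp using hthinner
  obtain ⟨i, j, hij, hqq⟩ := hn X σ hσ hP p
    (fun i => ((F.equivFinOfCardEq hF).symm i : X ≃ᵢ X) (q ((F.equivFinOfCardEq hF).symm i)))
    fun i => hqp _
  have huv := Subtype.coe_injective.ne ((F.equivFinOfCardEq hF).symm.injective.ne hij)
  generalize (F.equivFinOfCardEq hF).symm i = u, (F.equivFinOfCardEq hF).symm j = v at huv hqq
  refine ⟨u, u.2, v, v.2, huv, m u, m v, hm u, hm v, hM X σ hσ hP Γ hd hΓσ _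
    (Γ.zpow_mem ha _) _ (Γ.zpow_mem ha _) _ (mul_mem (inv_mem (hFΓ u u.2)) (hFΓ v v.2))
    (q u) (q v) ((hqm u).trans (min_le_left _ _)) ((hqm v).trans (min_le_left _ _)) ?_⟩
  rw [IsometryEquiv.mul_apply, dist_inv_right]
  exact hqq.trans (min_le_left _ _)

variable {X : Type u} [MetricSpace X] {δ : ℝ} {σ : X → X → ℝ → X} {a b : X ≃ᵢ X}

theorem IsNonElementary.not_isVirtuallyNilpotent {Γ : Subgroup (X ≃ᵢ X)} (h : IsNonElementary Γ) :
    ¬ IsVirtuallyNilpotent ↥Γ := by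
  obtain ⟨g, h, hg, hh, hn⟩ := h
  exact fun hΓ => hn (hΓ.mono ((Subgroup.closure_le _).2 (Set.pair_subset hg hh)))

theorem IsNonElementary.nonempty {Γ : Subgroup (X ≃ᵢ X)} (h : IsNonElementary Γ) : Nonempty X := by
  by_contra hX
  rw [not_nonempty_iff] at hX
  refine h.not_isVirtuallyNilpotent ⟨⊤, inferInstance, ?_⟩
  have : Subsingleton (X ≃ᵢ X) := ⟨fun g h => IsometryEquiv.ext fun x => hX.elim x⟩
  infer_instance

theorem closure_pair_le_sigmaIsometries (ha : IsSigmaIsometry σ a) (hb : IsSigmaIsometry σ b) :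
    Subgroup.closure {a, b} ≤ sigmaIsometries σ :=
  (Subgroup.closure_le _).2 (Set.pair_subset ha hb)

theorem IsGCB.exists_isPingPong_of_le_transLength (hσ : IsGCB σ) (hX : IsDeltaHyperbolic X δ)
    (hδ : 0 < δ) (ha : IsSigmaIsometry σ a) (hl : 0 < transLength a)
    (hd : IsDiscreteSubgroup (Subgroup.closure ({a, b} : Set (X ≃ᵢ X))))
    (hne : IsNonElementary (Subgroup.closure ({a, b} : Set (X ≃ᵢ X)))) {n : ℕ} (hn₀ : 0 < n)
    (hn : 1000 * δ ≤ n * transLength a) :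
    ∃ w ∈ wordBall {a, b} (40 * n + 2), ∃ τ : ℤ, (τ = 1 ∨ τ = -1) ∧
      IsPingPong (a ^ (τ * (20 * n : ℕ))) w := by
  have := hne.nonempty
  obtain ⟨x⟩ := id this
  obtain ⟨y, hy⟩ := hσ.exists_isAxisPoint hδ ha (n := n) (by simpa using hn)
  rcases hy.mem_coarseStabilizer_or hX hδ (by exact_mod_cast hn₀.ne') x b with hb |
    ⟨h, hh, τ, s, e, hτ, hs, he, hpp⟩
  · refine absurd (hσ.isVirtuallyNilpotent_of_coarseStabilizer hX hδ ha hl hd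
      (Subgroup.subset_closure (by simp)) x ?_) hne.not_isVirtuallyNilpotent
    rw [Subgroup.relIndex_eq_one.2 ((Subgroup.closure_le _).2
      (Set.pair_subset (self_mem_coarseStabilizer a x) hb))]
    exact one_ne_zero
  · have hpow : ∀ k : ℤ, |k| ≤ 20 → (a ^ (n : ℤ)) ^ k ∈ wordBall {a, b} (20 * n) := fun k hk => by
      rw [← zpow_mul]
      refine zpow_mem_wordBall (mem_wordBall_one (by simp)) ?_
      rw [abs_mul, Nat.abs_cast, mul_comm]
      push_cast
      gcongr
    have hh₁ : h ∈ wordBall {a, b} 1 := mem_wordBall_one (by rcases hh with rfl | rfl <;> simp)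
    refine ⟨_, wordBall_mono (by omega) (mul_mem_wordBall (mul_mem_wordBall (mul_mem_wordBall hh₁
      (hpow s hs)) (inv_mem_wordBall hh₁)) (hpow e he)), τ, hτ, ?_⟩
    rwa [← zpow_mul, show (n : ℤ) * (20 * τ) = τ * (20 * n : ℕ) by push_cast; ring] at hpp

theorem exists_uniform_isPingPong_of_transLength_lt (P r₀ δ : ℝ) (hr₀ : 0 < r₀) (hδ : 0 < δ) :
    ∃ ε : ℝ, 0 < ε ∧ ∃ K : ℕ, ∀ (X : Type u) [MetricSpace X] (σ : X → X → ℝ → X), IsGCB σ →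
      IsDeltaHyperbolic X δ → IsPacked X P r₀ → ∀ a b : X ≃ᵢ X, IsSigmaIsometry σ a →
        IsSigmaIsometry σ b → IsNonElliptic a →
          IsDiscreteSubgroup (Subgroup.closure ({a, b} : Set (X ≃ᵢ X))) →
          IsNonElementary (Subgroup.closure ({a, b} : Set (X ≃ᵢ X))) → transLength a < ε →
            ∃ w ∈ wordBall {a, b} K, ∀ n : ℕ, n ≠ 0 → IsPingPong (a ^ n) w := by
  obtain ⟨ε, hε, hε50, n, hn⟩ := exists_uniform_isVirtuallyNilpotent_of_thinSet_close.{u}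
    P r₀ δ (100 * δ) (50 * δ) (50 * δ) hr₀ hδ (by positivity) (by positivity)
  refine ⟨ε, hε, n + n + 1 + (n + n) + 1,
    fun X _ σ hσ hX hP a b ha hb hae hd hne hlt => ?_⟩
  have := hne.nonempty
  have haΓ : a ∈ Subgroup.closure {a, b} := Subgroup.subset_closure (by simp)
  have hΓσ := closure_pair_le_sigmaIsometries ha hb
  obtain ⟨E, hE, hEm⟩ := hσ.exists_elementary_hull hX hP hr₀ hδ ha hae hd haΓ hΓσ
    ((Subgroup.fg_iff _).2 ⟨_, rfl, by simp⟩)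
  obtain ⟨F, hFc, -, hFw, hFE⟩ := exists_coset_separated_subset_wordBall
    (not_not.1 fun h => hne.not_isVirtuallyNilpotent (hE h)) n
  obtain ⟨u, hu, v, hv, hfar⟩ : ∃ u ∈ F, ∃ v ∈ F, ∀ s ∈ u '' thinSet a (100 * δ),
      ∀ s' ∈ v '' thinSet a (100 * δ), 50 * δ < dist s s' := by
    by_contra! hclose
    obtain ⟨u, hu, v, hv, huv, m, l, hm, hl, hvn⟩ := hn X σ hσ hX hP _ hd hΓσ a haΓ hlt F hFc
      (fun u hu => wordBall_subset_closure n (hFw u hu)) hclose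
    exact huv (hFE u hu v hv (hEm _ m l hm hl hvn))
  have haw : a ∈ wordBall {a, b} 1 := mem_wordBall_one (by simp)
  have huv := mul_mem_wordBall (inv_mem_wordBall (hFw u hu)) (hFw v hv)
  refine ⟨_, mul_mem_wordBall (mul_mem_wordBall (mul_mem_wordBall huv haw)
    (inv_mem_wordBall huv)) haw, fun k hk => hσ.isPingPong_of_thinSet hX hδ ha
      (thinSet_nonempty (by positivity) (by linarith)) (u⁻¹ * v) (fun s hs s' hs' => ?_) hk⟩
  rw [IsometryEquiv.mul_apply, dist_inv_right]
  exact hfar _ (Set.mem_image_of_mem u hs) _ (Set.mem_image_of_mem v hs')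

theorem exists_list_eq_prod_of_mem_wordBall {G : Type*} [Group G] {a b w : G} {n : ℕ}
    (hw : w ∈ wordBall {a, b} n) :
    ∃ L : List G, L.length ≤ n ∧ (∀ u ∈ L, u ∈ ({a, a⁻¹, b, b⁻¹} : Set G)) ∧ w = L.prod := by
  obtain ⟨L, hL, hLw, rfl⟩ := hw
  refine ⟨L, hL, fun u hu => ?_, rfl⟩
  rcases hLw u hu with (rfl | rfl) | (h | h)
  · simp
  · simp
  · simp [← h]
  · simp [← Set.mem_singleton_iff.1 h]

theorem exists_uniform_mem_wordBall_isPingPong (P r₀ δ : ℝ) (hr₀ : 0 < r₀) (hδ : 0 < δ) :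
    ∃ N : ℕ, 0 < N ∧ ∀ (X : Type u) [MetricSpace X] (σ : X → X → ℝ → X), IsGCB σ →
      IsDeltaHyperbolic X δ → IsPacked X P r₀ → ∀ a b : X ≃ᵢ X, IsSigmaIsometry σ a →
        IsSigmaIsometry σ b → IsNonElliptic a →
          IsDiscreteSubgroup (Subgroup.closure ({a, b} : Set (X ≃ᵢ X))) →
          IsNonElementary (Subgroup.closure ({a, b} : Set (X ≃ᵢ X))) →
            ∃ w ∈ wordBall {a, b} N, ∃ τ : ℤ, (τ = 1 ∨ τ = -1) ∧
              IsPingPong (a ^ (τ * (N : ℤ))) w := by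
  obtain ⟨ε, hε, K, hK⟩ := exists_uniform_isPingPong_of_transLength_lt.{u} P r₀ δ hr₀ hδ
  obtain ⟨n, hn⟩ := exists_nat_gt (1000 * δ / ε)
  have hn₀ : 0 < n := by exact_mod_cast (show 0 < 1000 * δ / ε by positivity).trans hn
  rw [div_lt_iff₀ hε] at hn
  have hN : 0 < 20 * n * (K + 3) := by positivity
  refine ⟨20 * n * (K + 3), hN, fun X _ σ hσ hX hP a b ha hb hae hd hne => ?_⟩
  rcases lt_or_ge (transLength a) ε with hlt | hge
  · obtain ⟨w, hw, hpp⟩ := hK X σ hσ hX hP a b ha hb hae hd hne hlt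
    refine ⟨w, wordBall_mono (by nlinarith) hw, 1, Or.inl rfl, ?_⟩
    rw [one_mul, zpow_natCast]
    exact hpp _ hN.ne'
  · obtain ⟨w, hw, τ, hτ, hpp⟩ := hσ.exists_isPingPong_of_le_transLength hX hδ ha
      (hε.trans_le hge) hd hne hn₀ (hn.le.trans (by gcongr))
    refine ⟨w, wordBall_mono (by nlinarith) hw, τ, hτ, ?_⟩
    rw [Nat.cast_mul, ← mul_assoc, zpow_mul, zpow_natCast]
    exact hpp.pow_left (by omega)

end FreeSemigroup

theorem free_subsemigroup_with_specification_general
    (P₀ r₀ δ : ℝ) (hr₀ : 0 < r₀) (hδ : 0 < δ) :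
    ∃ N : ℕ, 0 < N ∧
      ∀ (X : Type*) [MetricSpace X] (σ : X → X → ℝ → X),
        IsGCB σ → IsDeltaHyperbolic X δ → IsPacked X P₀ r₀ →
        ∀ a b : X ≃ᵢ X, IsSigmaIsometry σ a → IsSigmaIsometry σ b →
          IsNonElliptic a →
          IsDiscreteSubgroup (Subgroup.closure ({a, b} : Set (X ≃ᵢ X))) →
          IsNonElementary (Subgroup.closure ({a, b} : Set (X ≃ᵢ X))) →
          ∃ w : X ≃ᵢ X,
            (∃ L : List (X ≃ᵢ X), L.length ≤ N ∧
              (∀ u ∈ L, u ∈ ({a, a⁻¹, b, b⁻¹} : Set (X ≃ᵢ X))) ∧ w = L.prod) ∧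
            ∃ τ : ℤ, (τ = 1 ∨ τ = -1) ∧
              Function.Injective
                ⇑(FreeMonoid.lift fun i : Bool => if i then a ^ (τ * (N : ℤ)) else w) := by
  obtain ⟨N, hN, h⟩ := exists_uniform_mem_wordBall_isPingPong P₀ r₀ δ hr₀ hδ
  refine ⟨N, hN, fun X _ σ hσ hX hP a b ha hb hae hd hne => ?_⟩
  obtain ⟨w, hw, τ, hτ, hpp⟩ := h X σ hσ hX hP a b ha hb hae hd hne
  exact ⟨w, exists_list_eq_prod_of_mem_wordBall hw, τ, hτ, hpp.injective⟩

/-- **Theorem 1.1(i)** (quantitative free sub-semigroup theorem with specification). -/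
theorem free_subsemigroup_with_specification
    (P₀ r₀ δ : ℝ) (hP₀ : 0 < P₀) (hr₀ : 0 < r₀) (hδ : 0 < δ) :
    ∃ N : ℕ, 0 < N ∧
      ∀ (X : Type*) [MetricSpace X] [CompleteSpace X] (σ : X → X → ℝ → X),
        IsGCB σ → IsDeltaHyperbolic X δ → IsPacked X P₀ r₀ →
        ∀ a b : X ≃ᵢ X, IsSigmaIsometry σ a → IsSigmaIsometry σ b →
          IsNonElliptic a →
          IsDiscreteSubgroup (Subgroup.closure ({a, b} : Set (X ≃ᵢ X))) →
          IsNonElementary (Subgroup.closure ({a, b} : Set (X ≃ᵢ X))) →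
          ∃ w : X ≃ᵢ X,
            (∃ L : List (X ≃ᵢ X), L.length ≤ N ∧
              (∀ u ∈ L, u ∈ ({a, a⁻¹, b, b⁻¹} : Set (X ≃ᵢ X))) ∧ w = L.prod) ∧
            ∃ τ : ℤ, (τ = 1 ∨ τ = -1) ∧
              Function.Injective
                ⇑(FreeMonoid.lift fun i : Bool => if i then a ^ (τ * (N : ℤ)) else w) := by
  obtain ⟨N, hN, h⟩ := free_subsemigroup_with_specification_general P₀ r₀ δ hr₀ hδ
  exact ⟨N, hN, fun X _ _ σ => h X σ⟩
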